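/- Let B = K[X] with X an order-t skew-symmetric matrix of indeterminates with zero upper-left 3×3 block, and let I be the grade-3 almost complete intersection Pfaffian ideal: for even t = 2r ≥ 6, I = ⟨Pf(X), Pf_{12̄}(X), Pf_{13̄}(X), Pf_{23̄}(X)⟩. Then for every m ≥ 2, reg(B/I^m) = (t/2)(m + 2) − 7. -/

import Mathlib

open Ideal

/-- A sequence `f 0, …, f (n-1)` is a *d-sequence* in `A` if
`(⟨f_0,…,f_{i-1}⟩ : f_i) ∩ ⟨f_0,…,f_{n-1}⟩ = ⟨f_0,…,f_{i-1}⟩` for every `i`. -/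
def IsDSequence {A : Type*} [CommRing A] {n : ℕ} (f : Fin n → A) : Prop :=
  ∀ i : Fin n,
    (Ideal.span (f '' {j | j < i})).colon (Ideal.span {f i}) ⊓ Ideal.span (Set.range f)
      = Ideal.span (f '' {j | j < i})

/-- A (proper) regular sequence: each `f i` is a nonzerodivisor modulo the previous ones,
and the sequence generates a proper ideal. -/
def IsRegSeq {A : Type*} [CommRing A] {n : ℕ} (f : Fin n → A) : Prop :=
  (∀ i : Fin n, ∀ a : A, a * f i ∈ Ideal.span (f '' {j | j < i}) →
      a ∈ Ideal.span (f '' {j | j < i}))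
  ∧ Ideal.span (Set.range f) ≠ ⊤

/-- Extension of an `ℕ`-graded family of submodules to `ℤ` (zero in negative degrees). -/
def zg {K A : Type*} [Semiring K] [AddCommMonoid A] [Module K A]
    (𝒜 : ℕ → Submodule K A) : ℤ → Submodule K A :=
  fun z => if 0 ≤ z then 𝒜 z.toNat else ⊥

/-- The irrelevant (graded maximal) ideal of a graded algebra. -/
def irrel {K A : Type*} [CommRing K] [CommRing A] [Algebra K A]
    (𝒜 : ℕ → Submodule K A) : Ideal A :=
  Ideal.span (⋃ n : ℕ, ((𝒜 (n + 1) : Submodule K A) : Set A))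

/-- `𝒜` is a standard grading: `𝒜 0 = K·1`, the grading is generated in degree one,
and the degree-one part is finitely generated. -/
def IsStdGraded {K A : Type*} [CommSemiring K] [Semiring A] [Algebra K A]
    (𝒜 : ℕ → Submodule K A) : Prop :=
  𝒜 0 = 1 ∧ (∀ n : ℕ, 𝒜 (n + 1) = 𝒜 1 * 𝒜 n) ∧ (𝒜 1).FG

/-- A minimal graded free resolution of the graded module `M` (graded pieces `ℳ`) over the
`γ`-graded ring `A` (graded pieces `𝒜`, graded maximal ideal `𝔪`):
free modules `ι i →₀ A` with generator degrees `σ i`, differentials `d`, augmentation `ε`,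
which is exact, with graded differentials and augmentation, and minimal
(all differentials land in `𝔪 • F`). -/
structure MinGradedFreeRes (K : Type) [Field K] (A : Type) [CommRing A] [Algebra K A]
    {γ : Type} [AddCommGroup γ] (𝒜 : γ → Submodule K A) (𝔪 : Ideal A)
    (M : Type) [AddCommGroup M] [Module A M] [Module K M]
    (ℳ : γ → Submodule K M) where
  ι : ℕ → Type
  fin : ∀ i, Finite (ι i)
  σ : ∀ i, ι i → γ
  d : ∀ i, (ι (i + 1) →₀ A) →ₗ[A] (ι i →₀ A)
  ε : (ι 0 →₀ A) →ₗ[A] M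
  exact_d : ∀ i, Function.Exact (d (i + 1)) (d i)
  exact_ε : Function.Exact (d 0) ε
  surj : Function.Surjective ε
  graded_d : ∀ (i : ℕ) (j : γ) (f : ι (i + 1) →₀ A),
      (∀ k, f k ∈ 𝒜 (j - σ (i + 1) k)) → ∀ k, (d i f) k ∈ 𝒜 (j - σ i k)
  graded_ε : ∀ (j : γ) (f : ι 0 →₀ A),
      (∀ k, f k ∈ 𝒜 (j - σ 0 k)) → ε f ∈ ℳ j
  minimal : ∀ (i : ℕ) (f : ι (i + 1) →₀ A), d i f ∈ 𝔪 • (⊤ : Submodule A (ι i →₀ A))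

/-- Castelnuovo–Mumford regularity read off from a minimal graded free resolution:
`sup { (degree of a generator of F_i) - i }`. -/
noncomputable def MinGradedFreeRes.reg {K : Type} [Field K] {A : Type} [CommRing A]
    [Algebra K A] {𝒜 : ℤ → Submodule K A} {𝔪 : Ideal A} {M : Type} [AddCommGroup M]
    [Module A M] [Module K M] {ℳ : ℤ → Submodule K M}
    (R : MinGradedFreeRes K A 𝒜 𝔪 M ℳ) : ℤ :=
  sSup {x : ℤ | ∃ (i : ℕ) (k : R.ι i), x = R.σ i k - (i : ℤ)}

/-- The graded pieces of a quotient module `A ⧸ J`. -/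
def quotPieces {K A : Type*} [Field K] [CommRing A] [Algebra K A]
    (𝒜 : ℕ → Submodule K A) (J : Ideal A) : ℤ → Submodule K (A ⧸ J) :=
  fun j => (zg 𝒜 j).map ((J.mkQ).restrictScalars K)

/-- The Pfaffian of an `n × n` matrix, defined by the recursive expansion along the
first row: `pf(M) = ∑_j (-1)^j M 0 (j+1) · pf(M with rows/columns 0 and j+1 deleted)`,
with `pf = 1` in size `0` and `pf = 0` in odd sizes. -/
def pfaffian {R : Type*} [CommRing R] : (n : ℕ) → Matrix (Fin n) (Fin n) R → R
  | 0, _ => 1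
  | 1, _ => 0
  | (n + 2), M =>
      ∑ j : Fin (n + 1), (-1 : R) ^ (j : ℕ) * M 0 j.succ *
        pfaffian n (M.submatrix (fun k => (j.succAbove k).succ)
          (fun k => (j.succAbove k).succ))

/-- The variables of the skew-symmetric matrix `X`: pairs `(i,j)` with `i < j` and
`j ≥ 3` (the upper-left `3 × 3` block being zero). -/
def PairVar (t : ℕ) : Type := {p : Fin t × Fin t // (p.1 : ℕ) < (p.2 : ℕ) ∧ 3 ≤ (p.2 : ℕ)}

/-- The generic order-`t` skew-symmetric matrix with zero upper-left `3 × 3` block. -/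
noncomputable def Xmat (K : Type) [Field K] (t : ℕ) :
    Matrix (Fin t) (Fin t) (MvPolynomial (PairVar t) K) := fun i j =>
  if h : (i : ℕ) < (j : ℕ) ∧ 3 ≤ (j : ℕ) then MvPolynomial.X ⟨(i, j), h⟩
  else if h' : (j : ℕ) < (i : ℕ) ∧ 3 ≤ (i : ℕ) then - MvPolynomial.X ⟨(j, i), h'⟩
  else 0

/-- The order embedding `Fin n → Fin (n+1)` skipping the index `a`. -/
def emb1 (a : ℕ) {n : ℕ} (k : Fin n) : Fin (n + 1) :=
  ⟨if (k : ℕ) < a then (k : ℕ) else (k : ℕ) + 1, by have := k.2; split_ifs <;> omega⟩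

/-- The order embedding `Fin n → Fin (n+2)` skipping the indices `a < b`. -/
def emb2 (a b : ℕ) {n : ℕ} (k : Fin n) : Fin (n + 2) :=
  ⟨if (k : ℕ) < a then (k : ℕ) else if (k : ℕ) + 1 < b then (k : ℕ) + 1 else (k : ℕ) + 2,
   by have := k.2; split_ifs <;> omega⟩

/-- The order embedding `Fin n → Fin (n+3)` skipping the indices `0, 1, 2`. -/
def emb3 {n : ℕ} (k : Fin n) : Fin (n + 3) := ⟨(k : ℕ) + 3, by have := k.2; omega⟩

/-!
Write `Z` for the block formed by the last `2q + 3` rows and columns of `X`, `p` for the vector of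
its submaximal Pfaffians, `P` for the ideal they generate, and `y₀`, `y₁`, `y₂` for the first three
rows of `X`. The Pfaffians `Pf_{īj̄}(X)` are, up to sign, the dot products `a_c = y_c ⬝ p`, of
degree `q + 2`; let `J` be the ideal they generate and let `w = Pf(X)`, of degree `q + 3`, up to
sign.

Degenerating `Z` to a cycle shows that the Buchsbaum–Eisenbud complex of `Z` is exact and that `w`
is a nonzerodivisor modulo `P`. The `a_c` are linear forms in disjoint sets of variables with
coefficient vector `p`, so by this exactness they form a regular sequence. Pfaffian identities give
`w P ⊆ J ⊆ P`.

Hence `J ^ n (J + (w)) ^ (k + 1)` modulo `J ^ (n + 1) (J + (w)) ^ k` is free over `B ⧸ P`, with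
basis the products of `w ^ (k + 1)` with the monomials of degree `n` in the `a_c`. Iterated mapping
cones of the Koszul and Buchsbaum–Eisenbud resolutions thus resolve `B ⧸ (J + (w)) ^ m`. No
generator of this resolution exceeds `r = (q + 3) (m + 2) - 7` in (degree - homological degree), and
for `m ≥ 2` the value `r` occurs in the last homological degree `4`. A cancellation against it would
need a generator of the same internal degree `r + 4` in homological degree `3` or `5`, and there is
none; so `r` is the regularity.
-/

namespace PfaffianPowers

/-! ### Pfaffians indexed by finite sets -/

section Sign

variable {ι : Type*} [LinearOrder ι] (R : Type*) [CommRing R]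

/-- The sign of the pair `(i, j)`: `1` if it is increasing and `-1` otherwise. -/
def ordSign (i j : ι) : R := if i < j then 1 else -1

/-- The sign of the permutation that moves `i` to the front of the ordered set `S ∪ {i}`. -/
def frontSign (i : ι) (S : Finset ι) : R := ∏ x ∈ S.erase i, ordSign R i x

variable {R}

lemma ordSign_of_lt {i j : ι} (h : i < j) : ordSign R i j = 1 := if_pos h

lemma ordSign_of_gt {i j : ι} (h : j < i) : ordSign R i j = -1 := if_neg h.not_gt

lemma ordSign_swap {i j : ι} (h : i ≠ j) : ordSign R j i = -ordSign R i j := by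
  rcases lt_or_gt_of_ne h with h | h <;> simp [ordSign_of_lt h, ordSign_of_gt h]

lemma frontSign_eq_mul {i j : ι} {S : Finset ι} (hj : j ∈ S) (hij : j ≠ i) :
    frontSign R i S = ordSign R i j * frontSign R i (S.erase j) := by
  rw [frontSign, frontSign, Finset.erase_right_comm,
    Finset.mul_prod_erase _ _ (Finset.mem_erase.2 ⟨hij, hj⟩)]

lemma frontSign_mul_swap {i j : ι} {S : Finset ι} (hi : i ∈ S) (hj : j ∈ S) (hij : i ≠ j) :
    frontSign R i S * frontSign R j (S.erase i) =
      -(frontSign R j S * frontSign R i (S.erase j)) := by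
  rw [frontSign_eq_mul hj hij.symm, frontSign_eq_mul hi hij, ordSign_swap hij]
  ring

lemma frontSign_insert_self {a : ι} {S : Finset ι} (h : ∀ x ∈ S, a < x) :
    frontSign R a (insert a S) = 1 := by
  rw [frontSign, Finset.erase_insert fun ha ↦ lt_irrefl a (h a ha)]
  exact Finset.prod_eq_one fun x hx ↦ ordSign_of_lt (h x hx)

lemma frontSign_insert_of_lt {a i : ι} {S : Finset ι} (ha : a ∉ S) (h : a < i) :
    frontSign R i (insert a S) = -frontSign R i S := by
  rw [frontSign_eq_mul (Finset.mem_insert_self a S) h.ne, Finset.erase_insert ha, ordSign_of_gt h,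
    neg_one_mul]

lemma frontSign_map {κ : Type*} [LinearOrder κ] (f : κ ↪o ι) (i : κ) (S : Finset κ) :
    frontSign R (f i) (S.map f.toEmbedding) = frontSign R i S := by
  have h : (S.map f.toEmbedding).erase (f i) = (S.erase i).map f.toEmbedding :=
    (Finset.map_erase f.toEmbedding S i).symm
  rw [frontSign, h, Finset.prod_map]
  simp [frontSign, ordSign]

lemma map_frontSign {R' : Type*} [CommRing R'] (φ : R →+* R') (i : ι) (S : Finset ι) :
    φ (frontSign R i S) = frontSign R' i S := by
  simp [frontSign, ordSign, apply_ite φ]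

lemma isUnit_frontSign (i : ι) (S : Finset ι) : IsUnit (frontSign R i S) := by
  rw [frontSign, IsUnit.prod_iff]
  intro x _
  rw [ordSign]
  split_ifs <;> simp

lemma frontSign_univ {n : ℕ} (j : Fin n) : frontSign R j Finset.univ = (-1) ^ (j : ℕ) := by
  have h : (Finset.univ.erase j).filter (fun x ↦ ¬j < x) = Finset.Iio j := by
    ext x
    simp only [Finset.mem_filter, Finset.mem_erase, Finset.mem_univ, and_true, not_lt,
      Finset.mem_Iio]
    exact ⟨fun h ↦ lt_of_le_of_ne h.2 h.1, fun h ↦ ⟨h.ne, h.le⟩⟩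
  simp only [frontSign, ordSign, Finset.prod_ite, Finset.prod_const_one, one_mul, h,
    Finset.prod_const, Fin.card_Iio]

end Sign

section Pfaffian

variable {ι : Type*} [LinearOrder ι] {R : Type*} [CommRing R]

/-- Alternating square matrices: skew-symmetric with zero diagonal. -/
structure IsAlternating {ι R : Type*} [CommRing R] (z : Matrix ι ι R) : Prop where
  skew : ∀ i j, z j i = -z i j
  diag : ∀ i, z i i = 0

lemma IsAlternating.submatrix {ι κ R : Type*} [CommRing R] {z : Matrix ι ι R}
    (hz : IsAlternating z) (f : κ → ι) : IsAlternating (z.submatrix f f) :=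
  ⟨fun _ _ ↦ hz.skew _ _, fun _ ↦ hz.diag _⟩

/-- The Pfaffian of the principal submatrix of `z` with rows and columns in `S`, expanded along its
first row. Indexing by finite sets keeps iterated deletion of rows free of reindexing. -/
def pf (z : Matrix ι ι R) (S : Finset ι) : R :=
  if h : S.Nonempty then
    ∑ b ∈ (S.erase (S.min' h)).attach, frontSign R b.1 (S.erase (S.min' h)) * z (S.min' h) b.1
      * pf z ((S.erase (S.min' h)).erase b.1)
  else 1
termination_by S.card
decreasing_by
  exact (Finset.card_le_card (Finset.erase_subset _ _)).trans_lt
    (Finset.card_erase_lt_of_mem (Finset.min'_mem _ h))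

@[simp]
lemma pf_empty (z : Matrix ι ι R) : pf z ∅ = 1 := by
  rw [pf, dif_neg Finset.not_nonempty_empty]

lemma pf_insert (z : Matrix ι ι R) {a : ι} {S : Finset ι} (h : ∀ x ∈ S, a < x) :
    pf z (insert a S) = ∑ b ∈ S, frontSign R b S * z a b * pf z (S.erase b) := by
  have hmin : (insert a S).min' (Finset.insert_nonempty a S) = a :=
    le_antisymm (Finset.min'_le _ _ (Finset.mem_insert_self a S))
      (Finset.le_min' _ _ _ fun x hx ↦
        (Finset.mem_insert.1 hx).elim (fun hxa ↦ hxa.ge) fun hxS ↦ (h x hxS).le)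
  rw [pf, dif_pos (Finset.insert_nonempty a S), hmin, Finset.erase_insert fun ha ↦ (h a ha).false]
  exact Finset.sum_attach S fun b ↦ frontSign R b S * z a b * pf z (S.erase b)

lemma pf_induction {C : Finset ι → Prop} (empty : C ∅)
    (insert : ∀ a S, (∀ x ∈ S, a < x) → (∀ b ∈ S, C (S.erase b)) → C (insert a S))
    (S : Finset ι) : C S := by
  induction S using Finset.strongInduction with
  | H S ih =>
    rcases S.eq_empty_or_nonempty with rfl | hS
    · exact empty
    have hmem := S.min'_mem hS
    rw [← Finset.insert_erase hmem]
    refine insert _ _ (fun x hx ↦ S.min'_lt_of_mem_erase_min' hS hx) fun b _ ↦ ih _ ?_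
    exact (Finset.erase_subset _ _).trans_ssubset (Finset.erase_ssubset hmem)

lemma pf_congr {z z' : Matrix ι ι R} {S : Finset ι} (h : ∀ i ∈ S, ∀ j ∈ S, z i j = z' i j) :
    pf z S = pf z' S := by
  induction S using pf_induction with
  | empty => simp
  | insert a S ha ih =>
    rw [pf_insert z ha, pf_insert z' ha]
    refine Finset.sum_congr rfl fun b hb ↦ ?_
    rw [h a (Finset.mem_insert_self a S) b (Finset.mem_insert_of_mem hb),
      ih b hb fun i hi j hj ↦ h i (Finset.mem_insert_of_mem (Finset.mem_of_mem_erase hi)) j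
        (Finset.mem_insert_of_mem (Finset.mem_of_mem_erase hj))]

lemma map_pf {R' : Type*} [CommRing R'] (φ : R →+* R') (z : Matrix ι ι R) (S : Finset ι) :
    φ (pf z S) = pf (z.map φ) S := by
  induction S using pf_induction with
  | empty => simp
  | insert a S ha ih =>
    rw [pf_insert z ha, pf_insert _ ha, map_sum]
    exact Finset.sum_congr rfl fun b hb ↦ by simp [map_frontSign, ← ih b hb]

lemma pf_map {κ : Type*} [LinearOrder κ] (f : κ ↪o ι) (z : Matrix ι ι R) (S : Finset κ) :
    pf z (S.map f.toEmbedding) = pf (z.submatrix f f) S := by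
  induction S using pf_induction with
  | empty => simp
  | insert a S ha ih =>
    rw [Finset.map_insert, pf_insert _ ha, pf_insert z (by simpa using ha), Finset.sum_map]
    refine Finset.sum_congr rfl fun b hb ↦ ?_
    rw [← Finset.map_erase, ih b hb]
    simp [frontSign_map]

lemma sum_sum_frontSign_comm (u v : ι → R) (F : Finset ι → R) {S : Finset ι} {i : ι} (hi : i ∈ S) :
    ∑ b ∈ S.erase i, ∑ c ∈ (S.erase i).erase b, frontSign R b S * u b *
      (frontSign R i (S.erase b) * frontSign R c ((S.erase b).erase i) * v c *
        F (((S.erase b).erase i).erase c)) =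
    ∑ c ∈ S.erase i, ∑ b ∈ (S.erase i).erase c, frontSign R i S * frontSign R c (S.erase i) * v c *
      (frontSign R b ((S.erase i).erase c) * u b * F (((S.erase i).erase c).erase b)) := by
  rw [Finset.sum_comm' (t' := S.erase i) (s' := fun c ↦ (S.erase i).erase c)
    (by simp only [Finset.mem_erase]; tauto)]
  refine Finset.sum_congr rfl fun c hc ↦ Finset.sum_congr rfl fun b hb ↦ ?_
  simp only [Finset.mem_erase] at hc hb
  have hbi := frontSign_mul_swap (R := R) hb.2.2 hi hb.2.1
  have hbc := frontSign_mul_swap (R := R) (Finset.mem_erase.2 hb.2) (Finset.mem_erase.2 hc) hb.1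
  rw [Finset.erase_right_comm (s := S) (a := b), Finset.erase_right_comm (s := S.erase i) (a := b)]
  linear_combination (u b * v c * F (((S.erase i).erase c).erase b)) *
    (frontSign R c ((S.erase i).erase b) * hbi - frontSign R i S * hbc)

theorem pf_expand {z : Matrix ι ι R} (hz : IsAlternating z) {S : Finset ι} {i : ι} (hi : i ∈ S) :
    pf z S = ∑ j ∈ S.erase i,
      frontSign R i S * frontSign R j (S.erase i) * z i j * pf z ((S.erase i).erase j) := by
  induction S using pf_induction generalizing i with
  | empty => simp at hi
  | insert a S ha ih =>
    have haS : a ∉ S := fun h ↦ (ha a h).false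
    obtain rfl | hiS := Finset.mem_insert.1 hi
    · simp [Finset.erase_insert haS, frontSign_insert_self ha, pf_insert z ha]
    have hai : a ≠ i := (ha i hiS).ne
    have ha' : ∀ T ⊆ S, ∀ x ∈ T, a < x := fun T hT x hx ↦ ha x (hT hx)
    have haT : a ∉ S.erase i := fun h ↦ haS (Finset.mem_of_mem_erase h)
    rw [pf_insert z ha, Finset.erase_insert_of_ne hai, Finset.sum_insert haT,
      ← Finset.add_sum_erase _ _ hiS, frontSign_insert_of_lt haS (ha i hiS),
      frontSign_insert_self (ha' _ (Finset.erase_subset i S)), Finset.erase_insert haT, hz.skew a i]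
    congr 1
    · ring
    have hexpand : ∀ b ∈ S.erase i, frontSign R b S * z a b * pf z (S.erase b) =
        ∑ c ∈ (S.erase i).erase b, frontSign R b S * z a b * (frontSign R i (S.erase b) *
          frontSign R c ((S.erase b).erase i) * z i c * pf z (((S.erase b).erase i).erase c)) := by
      intro b hb
      rw [ih b (Finset.mem_of_mem_erase hb)
        (Finset.mem_erase.2 ⟨(Finset.ne_of_mem_erase hb).symm, hiS⟩), Finset.mul_sum,
        Finset.erase_right_comm]
    have hexpand' : ∀ c ∈ S.erase i, -frontSign R i S * frontSign R c (insert a (S.erase i)) *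
          z i c * pf z ((insert a (S.erase i)).erase c) =
        ∑ b ∈ (S.erase i).erase c, frontSign R i S * frontSign R c (S.erase i) * z i c *
          (frontSign R b ((S.erase i).erase c) * z a b * pf z (((S.erase i).erase c).erase b)) := by
      intro c hc
      have hac : a < c := ha c (Finset.mem_of_mem_erase hc)
      rw [frontSign_insert_of_lt haT hac, Finset.erase_insert_of_ne hac.ne,
        pf_insert z (ha' _ ((Finset.erase_subset _ _).trans (Finset.erase_subset _ _))),
        ← Finset.mul_sum]
      ring
    rw [Finset.sum_congr rfl hexpand, Finset.sum_congr rfl hexpand']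
    exact sum_sum_frontSign_comm (z a) (z i) (pf z) hiS

lemma pf_eq_of_unique_neighbor {z : Matrix ι ι R} (hz : IsAlternating z) {S : Finset ι} {v u : ι}
    (hv : v ∈ S) (hu : u ∈ S) (huv : u ≠ v) (h : ∀ x ∈ S, x ≠ u → z v x = 0) :
    pf z S = frontSign R v S * frontSign R u (S.erase v) * z v u * pf z ((S.erase v).erase u) := by
  rw [pf_expand hz hv]
  refine Finset.sum_eq_single_of_mem u (Finset.mem_erase.2 ⟨huv, hu⟩) fun b hb hbu ↦ ?_
  rw [h b (Finset.mem_of_mem_erase hb) hbu, mul_zero, zero_mul]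

lemma sum_sum_erase_eq_zero_of_antisymm {ι M : Type*} [DecidableEq ι] [AddCommGroup M]
    {S : Finset ι} {T : ι → ι → M} (h : ∀ k ∈ S, ∀ j ∈ S, k ≠ j → T k j + T j k = 0) :
    ∑ k ∈ S, ∑ j ∈ S.erase k, T k j = 0 := by
  rw [Finset.sum_sigma']
  refine Finset.sum_involution (fun x _ ↦ ⟨x.2, x.1⟩) ?_ ?_ ?_ ?_ <;>
    simp +contextual only [Finset.mem_sigma, Finset.mem_erase, ne_eq, Sigma.forall, Sigma.mk.injEq,
      heq_eq_eq, and_imp, not_and, implies_true, and_true, true_and]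
  · exact fun k j hk hjk hj ↦ h k hk j hj (Ne.symm hjk)
  · tauto
  · exact fun k j _ hjk _ ↦ Ne.symm hjk

/-- This is the expansion of the Pfaffian of the matrix obtained by repeating row `l`. -/
lemma sum_frontSign_mul_pf_erase_eq_zero {z : Matrix ι ι R} (hz : IsAlternating z) {S : Finset ι}
    {l : ι} (hl : l ∈ S) : ∑ k ∈ S, frontSign R k S * z l k * pf z (S.erase k) = 0 := by
  rw [← Finset.add_sum_erase _ _ hl, hz.diag l, mul_zero, zero_mul, zero_add]
  have hexpand : ∀ k ∈ S.erase l, frontSign R k S * z l k * pf z (S.erase k) =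
      ∑ j ∈ (S.erase l).erase k, frontSign R k S * z l k * (frontSign R l (S.erase k) *
        frontSign R j ((S.erase l).erase k) * z l j * pf z (((S.erase l).erase k).erase j)) := by
    intro k hk
    rw [pf_expand hz (Finset.mem_erase.2 ⟨(Finset.ne_of_mem_erase hk).symm, hl⟩), Finset.mul_sum,
      Finset.erase_right_comm]
  rw [Finset.sum_congr rfl hexpand]
  refine sum_sum_erase_eq_zero_of_antisymm fun k hk j hj hkj ↦ ?_
  have hkl := frontSign_mul_swap (R := R) (Finset.mem_of_mem_erase hk) hl
    (Finset.ne_of_mem_erase hk)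
  have hjl := frontSign_mul_swap (R := R) (Finset.mem_of_mem_erase hj) hl
    (Finset.ne_of_mem_erase hj)
  have hjk := frontSign_mul_swap (R := R) hk hj hkj
  rw [Finset.erase_right_comm (s := S.erase l)]
  linear_combination (z l k * z l j * pf z (((S.erase l).erase j).erase k)) *
    (frontSign R j ((S.erase l).erase k) * hkl + frontSign R k ((S.erase l).erase j) * hjl
      - frontSign R l S * hjk)

/-- A perfect matching of `{a, b, c} ∪ S` pairs each of `a`, `b`, `c` with an element of `S`. -/
lemma pf_insert_insert_insert {z : Matrix ι ι R} {a b c : ι} {S : Finset ι} (hab : a < b)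
    (hbc : b < c) (hc : ∀ x ∈ S, c < x) (hzab : z a b = 0) (hzac : z a c = 0) (hzbc : z b c = 0) :
    pf z (insert a (insert b (insert c S))) = -∑ i ∈ S, ∑ j ∈ S.erase i, ∑ k ∈ (S.erase i).erase j,
      frontSign R i S * frontSign R j (S.erase i) * frontSign R k ((S.erase i).erase j) *
        z a i * z b j * z c k * pf z (((S.erase i).erase j).erase k) := by
  have hcS {T : Finset ι} (hT : T ⊆ S) : c ∉ T := fun h ↦ (hc c (hT h)).false
  have hbS {T : Finset ι} (hT : T ⊆ S) : b ∉ insert c T := fun h ↦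
    (Finset.mem_insert.1 h).elim hbc.ne fun h ↦ (hbc.trans (hc b (hT h))).false
  rw [pf_insert z (by simpa [hab, hab.trans hbc] using
      fun x hx ↦ (hab.trans hbc).trans (hc x hx)), Finset.sum_insert (hbS subset_rfl),
    Finset.sum_insert (hcS subset_rfl), hzab, hzac, ← Finset.sum_neg_distrib]
  simp only [mul_zero, zero_mul, zero_add]
  refine Finset.sum_congr rfl fun i hi ↦ ?_
  have hSi : S.erase i ⊆ S := Finset.erase_subset i S
  have hci := hc i hi
  rw [frontSign_insert_of_lt (hbS subset_rfl) (hbc.trans hci),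
    frontSign_insert_of_lt (hcS subset_rfl) hci, neg_neg,
    Finset.erase_insert_of_ne (hbc.trans hci).ne, Finset.erase_insert_of_ne hci.ne,
    pf_insert z (by simpa [hbc] using fun x _ hx ↦ hbc.trans (hc x hx)),
    Finset.sum_insert (hcS hSi), hzbc, mul_zero, zero_mul, zero_add, Finset.mul_sum,
    ← Finset.sum_neg_distrib]
  refine Finset.sum_congr rfl fun j hj ↦ ?_
  have hcj := hc j (hSi hj)
  rw [frontSign_insert_of_lt (hcS hSi) hcj, Finset.erase_insert_of_ne hcj.ne,
    pf_insert z (fun x hx ↦ hc x (hSi (Finset.mem_of_mem_erase hx))), Finset.mul_sum,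
    Finset.mul_sum, ← Finset.sum_neg_distrib]
  exact Finset.sum_congr rfl fun k _ ↦ by ring

lemma isHomogeneous_frontSign {σ K : Type*} [CommRing K] (i : ι) (S : Finset ι) :
    (frontSign (MvPolynomial σ K) i S).IsHomogeneous 0 := by
  rw [← map_frontSign (MvPolynomial.C : K →+* MvPolynomial σ K)]
  exact MvPolynomial.isHomogeneous_C _ _

lemma isHomogeneous_pf {σ K : Type*} [CommRing K] {z : Matrix ι ι (MvPolynomial σ K)}
    (hz : ∀ i j, (z i j).IsHomogeneous 1) {S : Finset ι} {s : ℕ} (hS : S.card = 2 * s) :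
    (pf z S).IsHomogeneous s := by
  induction S using pf_induction generalizing s with
  | empty =>
    obtain rfl : s = 0 := by simpa using hS.symm
    simpa using MvPolynomial.isHomogeneous_one σ K
  | insert a S ha ih =>
    rw [Finset.card_insert_of_notMem fun h ↦ (ha a h).false] at hS
    obtain ⟨s, rfl⟩ : ∃ s', s = s' + 1 := ⟨s - 1, by omega⟩
    rw [pf_insert z ha]
    refine MvPolynomial.IsHomogeneous.sum _ _ _ fun b hb ↦ ?_
    have hcard : (S.erase b).card = 2 * s := by rw [Finset.card_erase_of_mem hb]; omega
    have := ((isHomogeneous_frontSign (K := K) b S).mul (hz a b)).mul (ih b hb hcard)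
    rwa [zero_add, add_comm] at this

end Pfaffian

end PfaffianPowers

namespace PfaffianPowers

open Matrix in
lemma IsAlternating.vecMul_eq_neg_mulVec {ι R : Type*} [Fintype ι] [CommRing R]
    {z : Matrix ι ι R} (hz : IsAlternating z) (u : ι → R) :
    u ᵥ* z = -(z *ᵥ u) := by
  ext l
  simp only [vecMul, mulVec, dotProduct, Pi.neg_apply, ← Finset.sum_neg_distrib]
  exact Finset.sum_congr rfl fun k _ ↦ by rw [hz.skew l k]; ring

section Cofactor

open Matrix

variable {ι : Type*} [LinearOrder ι] [Fintype ι] {R : Type*} [CommRing R]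

/-- The signed Pfaffian of `z` with row `i` deleted. For odd size these are the generators of the
ideal of submaximal Pfaffians, and they span the kernel of `z`. -/
def pfCofactor (z : Matrix ι ι R) (i : ι) : R :=
  frontSign R i Finset.univ * pf z (Finset.univ.erase i)

/-- The signed Pfaffian of `z` with rows `i`, `j`, `k` deleted, an alternating function of the
triple; it vanishes if two of the indices agree. -/
def pfCofactor₃ (z : Matrix ι ι R) (i j k : ι) : R :=
  if i ≠ j ∧ i ≠ k ∧ j ≠ k then
    frontSign R i Finset.univ * frontSign R j (Finset.univ.erase i)
      * frontSign R k ((Finset.univ.erase i).erase j)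
      * pf z (((Finset.univ.erase i).erase j).erase k)
  else 0

lemma map_pfCofactor {R' : Type*} [CommRing R'] (φ : R →+* R') (z : Matrix ι ι R) (i : ι) :
    φ (pfCofactor z i) = pfCofactor (z.map φ) i := by
  rw [pfCofactor, map_mul, map_frontSign, map_pf, pfCofactor]

lemma map_pfCofactor₃ {R' : Type*} [CommRing R'] (φ : R →+* R') (z : Matrix ι ι R) (i j k : ι) :
    φ (pfCofactor₃ z i j k) = pfCofactor₃ (z.map φ) i j k := by
  simp only [pfCofactor₃, apply_ite φ, map_mul, map_frontSign, map_pf, map_zero]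

lemma pfCofactor₃_self₁₂ (z : Matrix ι ι R) (i k : ι) : pfCofactor₃ z i i k = 0 := by
  simp [pfCofactor₃]

lemma pfCofactor₃_self₁₃ (z : Matrix ι ι R) (i j : ι) : pfCofactor₃ z i j i = 0 := by
  simp [pfCofactor₃]

lemma pfCofactor₃_self₂₃ (z : Matrix ι ι R) (i j : ι) : pfCofactor₃ z i j j = 0 := by
  simp [pfCofactor₃]

lemma pfCofactor₃_eq_zero_of_notMem {z : Matrix ι ι R} {i j k : ι}
    (hk : k ∉ (Finset.univ.erase i).erase j) : pfCofactor₃ z i j k = 0 := by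
  rw [pfCofactor₃, if_neg]
  simp only [Finset.mem_erase, Finset.mem_univ, and_true] at hk
  tauto

lemma pfCofactor₃_of_mem {z : Matrix ι ι R} {i j k : ι} (hij : i ≠ j)
    (hk : k ∈ (Finset.univ.erase i).erase j) : pfCofactor₃ z i j k =
      frontSign R i Finset.univ * frontSign R j (Finset.univ.erase i)
        * frontSign R k ((Finset.univ.erase i).erase j)
        * pf z (((Finset.univ.erase i).erase j).erase k) := by
  simp only [Finset.mem_erase, Finset.mem_univ, and_true] at hk
  exact if_pos ⟨hij, Ne.symm hk.2, Ne.symm hk.1⟩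

lemma pfCofactor₃_swap₁₂ (z : Matrix ι ι R) (i j k : ι) :
    pfCofactor₃ z j i k = -pfCofactor₃ z i j k := by
  rcases eq_or_ne i j with rfl | hij
  · rw [pfCofactor₃_self₁₂, neg_zero]
  have hcomm : (Finset.univ.erase j).erase i = (Finset.univ.erase i).erase j :=
    Finset.erase_right_comm
  by_cases hk : k ∈ (Finset.univ.erase i).erase j
  · have hswap := frontSign_mul_swap (R := R) (Finset.mem_univ i) (Finset.mem_univ j) hij
    rw [pfCofactor₃_of_mem hij hk, pfCofactor₃_of_mem hij.symm (hcomm ▸ hk), hcomm, hswap]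
    ring
  · rw [pfCofactor₃_eq_zero_of_notMem hk, pfCofactor₃_eq_zero_of_notMem (hcomm ▸ hk), neg_zero]

lemma mulVec_pfCofactor₃_apply (z : Matrix ι ι R) {i j : ι} (hij : i ≠ j) (l : ι) :
    (z *ᵥ pfCofactor₃ z i j) l = frontSign R i Finset.univ * frontSign R j (Finset.univ.erase i) *
      ∑ k ∈ (Finset.univ.erase i).erase j, frontSign R k ((Finset.univ.erase i).erase j) * z l k *
        pf z (((Finset.univ.erase i).erase j).erase k) := by
  rw [mulVec, dotProduct, ← Finset.sum_subset (Finset.subset_univ ((Finset.univ.erase i).erase j))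
    fun k _ hk ↦ by rw [pfCofactor₃_eq_zero_of_notMem hk, mul_zero], Finset.mul_sum]
  refine Finset.sum_congr rfl fun k hk ↦ ?_
  rw [pfCofactor₃_of_mem hij hk]
  ring

variable {z : Matrix ι ι R}

theorem mulVec_pfCofactor₃ (hz : IsAlternating z) (i j : ι) :
    z *ᵥ pfCofactor₃ z i j = Pi.single j (pfCofactor z i) - Pi.single i (pfCofactor z j) := by
  have hself : ∀ i j, i ≠ j → (z *ᵥ pfCofactor₃ z i j) j = pfCofactor z i := by
    intro i j hij
    rw [mulVec_pfCofactor₃_apply z hij, pfCofactor,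
      pf_expand hz (Finset.mem_erase.2 ⟨hij.symm, Finset.mem_univ j⟩), Finset.mul_sum,
      Finset.mul_sum]
    exact Finset.sum_congr rfl fun k _ ↦ by ring
  rcases eq_or_ne i j with rfl | hij
  · ext l
    simp [mulVec, dotProduct, pfCofactor₃_self₁₂]
  ext l
  by_cases hlj : l = j
  · subst hlj
    simp [hself i l hij, hij.symm]
  by_cases hli : l = i
  · subst hli
    have hswap : pfCofactor₃ z l j = -pfCofactor₃ z j l :=
      funext fun k ↦ pfCofactor₃_swap₁₂ z j l k
    simp [hswap, mulVec_neg, hself j l hij.symm, hij]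
  · rw [mulVec_pfCofactor₃_apply z hij, sum_frontSign_mul_pf_erase_eq_zero hz (by simp [hli, hlj])]
    simp [hli, hlj]

lemma mulVec_pfCofactor (hz : IsAlternating z) : z *ᵥ pfCofactor z = 0 := by
  ext l
  rw [Pi.zero_apply, ← sum_frontSign_mul_pf_erase_eq_zero hz (Finset.mem_univ l)]
  exact Finset.sum_congr rfl fun k _ ↦ by rw [pfCofactor]; ring

lemma pfCofactor_dotProduct_mulVec (hz : IsAlternating z) (u : ι → R) :
    pfCofactor z ⬝ᵥ z *ᵥ u = 0 := by
  rw [dotProduct_mulVec, hz.vecMul_eq_neg_mulVec, mulVec_pfCofactor hz, neg_zero, zero_dotProduct]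

lemma pfCofactor_mul_eq_of_mulVec_eq_zero (hz : IsAlternating z) {u : ι → R} (hu : z *ᵥ u = 0)
    (i j : ι) : pfCofactor z i * u j = pfCofactor z j * u i := by
  have h : u ⬝ᵥ z *ᵥ pfCofactor₃ z i j = 0 := by
    rw [dotProduct_mulVec, hz.vecMul_eq_neg_mulVec, hu, neg_zero, zero_dotProduct]
  rw [mulVec_pfCofactor₃ hz, dotProduct_sub, dotProduct_single, dotProduct_single] at h
  linear_combination h

lemma pfCofactor_smul_eq_mulVec (hz : IsAlternating z) {v : ι → R} (hv : pfCofactor z ⬝ᵥ v = 0)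
    (i : ι) : pfCofactor z i • v = z *ᵥ ∑ j, v j • pfCofactor₃ z i j := by
  simp only [mulVec_sum, mulVec_smul, mulVec_pfCofactor₃ hz, smul_sub, Finset.sum_sub_distrib,
    ← Pi.single_smul, smul_eq_mul]
  have hsingle : ∑ j, Pi.single i (v j * pfCofactor z j) = (0 : ι → R) := by
    rw [dotProduct_comm] at hv
    exact (map_sum (AddMonoidHom.single (fun _ ↦ R) i) _ _).symm.trans
      ((congrArg (Pi.single i) hv).trans (Pi.single_zero i))
  ext l
  simp [hsingle, mul_comm]

/-- Both sides become multiples of `pfCofactor z` after applying `z`. -/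
lemma pfCofactor_mul_pfCofactor₃ (hz : IsAlternating z) {m : ι}
    (hm : pfCofactor z m ∈ nonZeroDivisors R) (i j k : ι) :
    pfCofactor z m * pfCofactor₃ z i j k = pfCofactor z i * pfCofactor₃ z m j k
      + pfCofactor z j * pfCofactor₃ z i m k + pfCofactor z k * pfCofactor₃ z i j m := by
  set u : ι → R := pfCofactor z m • pfCofactor₃ z i j - pfCofactor z i • pfCofactor₃ z m j
    - pfCofactor z j • pfCofactor₃ z i m - pfCofactor₃ z i j m • pfCofactor z with hu
  have hzu : z *ᵥ u = 0 := by
    simp only [hu, mulVec_sub, mulVec_smul, mulVec_pfCofactor₃ hz, mulVec_pfCofactor hz, smul_sub,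
      ← Pi.single_smul, smul_eq_mul, smul_zero]
    rw [mul_comm (pfCofactor z i) (pfCofactor z m), mul_comm (pfCofactor z j) (pfCofactor z m),
      mul_comm (pfCofactor z j) (pfCofactor z i)]
    abel
  have hum : u m = 0 := by
    simp [hu, pfCofactor₃_self₁₃, pfCofactor₃_self₂₃, mul_comm]
  have huk := pfCofactor_mul_eq_of_mulVec_eq_zero hz hzu m k
  rw [hum, mul_zero, mul_comm] at huk
  have huk : u k = 0 := (mem_nonZeroDivisors_iff_right.1 hm) _ huk
  simp only [hu, Pi.sub_apply, Pi.smul_apply, smul_eq_mul] at huk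
  linear_combination huk

end Cofactor

section Recursion

variable {R : Type*} [CommRing R]

lemma univ_erase_eq_map_succAbove {n : ℕ} (j : Fin (n + 1)) :
    Finset.univ.erase j = Finset.univ.map (Fin.succAboveOrderEmb j).toEmbedding := by
  ext x
  simp only [Finset.mem_erase, Finset.mem_univ, and_true, ← Fin.exists_succAbove_eq_iff,
    Finset.mem_map, true_and]
  rfl

lemma pf_univ_succ {n : ℕ} (M : Matrix (Fin (n + 1)) (Fin (n + 1)) R) :
    pf M Finset.univ = ∑ j : Fin n, (-1) ^ (j : ℕ) * M 0 j.succ *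
      pf (M.submatrix Fin.succ Fin.succ) (Finset.univ.erase j) := by
  have huniv : (Finset.univ : Finset (Fin (n + 1))) =
      insert 0 (Finset.univ.map (Fin.succOrderEmb n).toEmbedding) := by
    ext x
    simpa [eq_comm] using Fin.eq_zero_or_eq_succ x
  rw [huniv, pf_insert M (by simp [Fin.pos_iff_ne_zero]), Finset.sum_map]
  refine Finset.sum_congr rfl fun j _ ↦ ?_
  rw [← Finset.map_erase, pf_map, ← frontSign_univ j,
    ← frontSign_map (Fin.succOrderEmb n) j Finset.univ]
  rfl

theorem pfaffian_eq_pf : ∀ (n : ℕ) (M : Matrix (Fin n) (Fin n) R), pfaffian n M = pf M Finset.univ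
  | 0, M => by simp [pfaffian]
  | 1, M => by rw [pf_univ_succ]; simp [pfaffian]
  | n + 2, M => by
    rw [pf_univ_succ, pfaffian]
    refine Finset.sum_congr rfl fun j _ ↦ ?_
    rw [univ_erase_eq_map_succAbove, pf_map, pfaffian_eq_pf n]
    rfl

end Recursion

end PfaffianPowers

namespace PfaffianPowers

open Matrix

section CofactorForm

variable {ι R : Type*} [LinearOrder ι] [Fintype ι] [CommRing R]

/-- The trilinear form whose coefficients are the Pfaffians of `z` with three rows deleted. It is,
up to sign, the Pfaffian of the matrix obtained from `z` by adding three mutually orthogonal rows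
`u`, `v`, `w` in front. -/
def cofactorForm (z : Matrix ι ι R) (u v w : ι → R) : R :=
  ∑ i, ∑ j, ∑ k, u i * v j * w k * pfCofactor₃ z i j k

lemma map_cofactorForm {R' : Type*} [CommRing R'] (φ : R →+* R') (z : Matrix ι ι R)
    (u v w : ι → R) :
    φ (cofactorForm z u v w) = cofactorForm (z.map φ) (φ ∘ u) (φ ∘ v) (φ ∘ w) := by
  simp only [cofactorForm, map_sum, map_mul, map_pfCofactor₃, Function.comp_apply]

lemma cofactorForm_eq_sum_erase (z : Matrix ι ι R) (u v w : ι → R) :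
    cofactorForm z u v w = ∑ i, ∑ j ∈ Finset.univ.erase i,
      ∑ k ∈ (Finset.univ.erase i).erase j, frontSign R i Finset.univ *
        frontSign R j (Finset.univ.erase i) * frontSign R k ((Finset.univ.erase i).erase j) *
        u i * v j * w k * pf z (((Finset.univ.erase i).erase j).erase k) := by
  refine Finset.sum_congr rfl fun i _ ↦ ?_
  rw [← Finset.sum_erase (a := i) Finset.univ (by simp [pfCofactor₃_self₁₂])]
  refine Finset.sum_congr rfl fun j hj ↦ ?_
  rw [← Finset.sum_subset (Finset.subset_univ ((Finset.univ.erase i).erase j)) fun k _ hk ↦ by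
    rw [pfCofactor₃_eq_zero_of_notMem hk, mul_zero]]
  refine Finset.sum_congr rfl fun k hk ↦ ?_
  rw [pfCofactor₃_of_mem (Finset.ne_of_mem_erase hj).symm hk]
  ring

theorem cofactorForm_mul_pfCofactor {z : Matrix ι ι R} (hz : IsAlternating z) {m : ι}
    (hm : pfCofactor z m ∈ nonZeroDivisors R) (u v w : ι → R) :
    cofactorForm z u v w * pfCofactor z m =
      u ⬝ᵥ pfCofactor z * ∑ j, ∑ k, v j * w k * pfCofactor₃ z m j k +
      v ⬝ᵥ pfCofactor z * ∑ i, ∑ k, u i * w k * pfCofactor₃ z i m k +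
      w ⬝ᵥ pfCofactor z * ∑ i, ∑ j, u i * v j * pfCofactor₃ z i j m := by
  have hterm : cofactorForm z u v w * pfCofactor z m = ∑ i, ∑ j, ∑ k, u i * v j * w k *
      (pfCofactor z i * pfCofactor₃ z m j k + pfCofactor z j * pfCofactor₃ z i m k
        + pfCofactor z k * pfCofactor₃ z i j m) := by
    simp only [cofactorForm, Finset.sum_mul, ← pfCofactor_mul_pfCofactor₃ hz hm, mul_assoc,
      mul_comm (pfCofactor z m)]
  have hu : ∑ i, ∑ j, ∑ k, u i * v j * w k * (pfCofactor z i * pfCofactor₃ z m j k) =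
      u ⬝ᵥ pfCofactor z * ∑ j, ∑ k, v j * w k * pfCofactor₃ z m j k := by
    rw [dotProduct, Finset.sum_mul]
    simp only [Finset.mul_sum]
    exact Finset.sum_congr rfl fun i _ ↦ Finset.sum_congr rfl fun j _ ↦
      Finset.sum_congr rfl fun k _ ↦ by ring
  have hv : ∑ i, ∑ j, ∑ k, u i * v j * w k * (pfCofactor z j * pfCofactor₃ z i m k) =
      v ⬝ᵥ pfCofactor z * ∑ i, ∑ k, u i * w k * pfCofactor₃ z i m k := by
    rw [Finset.sum_comm, dotProduct, Finset.sum_mul]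
    simp only [Finset.mul_sum]
    exact Finset.sum_congr rfl fun j _ ↦ Finset.sum_congr rfl fun i _ ↦
      Finset.sum_congr rfl fun k _ ↦ by ring
  have hw : ∑ i, ∑ j, ∑ k, u i * v j * w k * (pfCofactor z k * pfCofactor₃ z i j m) =
      w ⬝ᵥ pfCofactor z * ∑ i, ∑ j, u i * v j * pfCofactor₃ z i j m := by
    rw [Finset.sum_congr rfl fun i _ ↦ Finset.sum_comm, Finset.sum_comm, dotProduct,
      Finset.sum_mul]
    simp only [Finset.mul_sum]
    exact Finset.sum_congr rfl fun k _ ↦ Finset.sum_congr rfl fun i _ ↦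
      Finset.sum_congr rfl fun j _ ↦ by ring
  simp only [hterm, mul_add, Finset.sum_add_distrib, hu, hv, hw]

lemma cofactorForm_mul_mem_span {z : Matrix ι ι R} (hz : IsAlternating z) {m : ι}
    (hm : pfCofactor z m ∈ nonZeroDivisors R) (y : Fin 3 → ι → R) :
    cofactorForm z (y 0) (y 1) (y 2) * pfCofactor z m ∈
      Ideal.span (Set.range fun c ↦ y c ⬝ᵥ pfCofactor z) := by
  have hmem (c : Fin 3) (r : R) : y c ⬝ᵥ pfCofactor z * r ∈
      Ideal.span (Set.range fun c ↦ y c ⬝ᵥ pfCofactor z) :=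
    Ideal.mul_mem_right _ _ (Ideal.subset_span ⟨c, rfl⟩)
  rw [cofactorForm_mul_pfCofactor hz hm]
  exact add_mem (add_mem (hmem 0 _) (hmem 1 _)) (hmem 2 _)

end CofactorForm

lemma pf_univ_eq_dotProduct {R : Type*} [CommRing R] {n : ℕ}
    (M : Matrix (Fin (n + 1)) (Fin (n + 1)) R) :
    pf M Finset.univ =
      (fun j ↦ M 0 (Fin.succ j)) ⬝ᵥ pfCofactor (M.submatrix Fin.succ Fin.succ) := by
  rw [pf_univ_succ]
  exact Finset.sum_congr rfl fun j _ ↦ by rw [pfCofactor, frontSign_univ]; ring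

lemma univ_eq_insert_map_addNat {n : ℕ} : (Finset.univ : Finset (Fin (n + 3))) =
    insert 0 (insert 1 (insert 2 (Finset.univ.map (Fin.addNatOrderEmb 3).toEmbedding))) := by
  ext x
  refine ⟨fun _ ↦ ?_, fun _ ↦ Finset.mem_univ x⟩
  refine Fin.cases (by simp) (fun x ↦ ?_) x
  refine Fin.cases (by simp) (fun x ↦ ?_) x
  refine Fin.cases (by simp) (fun x ↦ ?_) x
  simp only [Finset.mem_insert, Finset.mem_map, Finset.mem_univ, true_and]
  exact Or.inr (Or.inr (Or.inr ⟨x, rfl⟩))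

theorem pf_univ_eq_neg_cofactorForm {R : Type*} [CommRing R] {n : ℕ}
    {M : Matrix (Fin (n + 3)) (Fin (n + 3)) R} (h01 : M 0 1 = 0) (h02 : M 0 2 = 0)
    (h12 : M 1 2 = 0) : pf M Finset.univ = -cofactorForm (M.submatrix emb3 emb3)
      (fun j ↦ M 0 (emb3 j)) (fun j ↦ M 1 (emb3 j)) (fun j ↦ M 2 (emb3 j)) := by
  rw [univ_eq_insert_map_addNat]
  set e : Fin n ↪o Fin (n + 3) := Fin.addNatOrderEmb 3
  have h12lt : (1 : Fin (n + 3)) < 2 := by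
    rw [Fin.lt_def, Fin.val_two, Fin.val_one]
    exact one_lt_two
  have hlt : ∀ x ∈ Finset.univ.map e.toEmbedding, 2 < x := fun x hx ↦ by
    obtain ⟨i, -, rfl⟩ := Finset.mem_map.1 hx
    change (2 : Fin (n + 3)) < i.addNat 3
    rw [Fin.lt_def, Fin.val_two, Fin.val_addNat]
    omega
  have herase (S : Finset (Fin n)) (i : Fin n) :
      (S.map e.toEmbedding).erase (e i) = (S.erase i).map e.toEmbedding :=
    (Finset.map_erase e.toEmbedding S i).symm
  rw [pf_insert_insert_insert Fin.zero_lt_one h12lt hlt h01 h02 h12,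
    cofactorForm_eq_sum_erase]
  simp only [Finset.sum_map, RelEmbedding.coe_toEmbedding, herase, frontSign_map, pf_map]
  rfl

section GenericMatrix

variable (K : Type) [Field K]

lemma isAlternating_Xmat (t : ℕ) : IsAlternating (Xmat K t) where
  skew i j := by
    unfold Xmat
    split_ifs <;> first | omega | simp
  diag i := by
    unfold Xmat
    split_ifs <;> first | omega | simp

lemma isHomogeneous_Xmat (t : ℕ) (i j : Fin t) : (Xmat K t i j).IsHomogeneous 1 := by
  unfold Xmat
  split_ifs
  · exact MvPolynomial.isHomogeneous_X _ _
  · exact (MvPolynomial.isHomogeneous_X _ _).neg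
  · exact MvPolynomial.isHomogeneous_zero _ _ _

lemma Xmat_eq_zero {t : ℕ} {i j : Fin t} (hi : (i : ℕ) < 3) (hj : (j : ℕ) < 3) :
    Xmat K t i j = 0 := by
  unfold Xmat
  split_ifs <;> first | omega | rfl

variable (q : ℕ)

/-- The polynomial ring `K[X]` for a matrix `X` of order `t = 2q + 6`. -/
abbrev CoordRing := MvPolynomial (PairVar (2 * q + 6)) K

/-- The block `Z` of `X` formed by its last `2q + 3` rows and columns. -/
noncomputable def genericBlock : Matrix (Fin (2 * q + 3)) (Fin (2 * q + 3)) (CoordRing K q) :=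
  (Xmat K (2 * q + 6)).submatrix emb3 emb3

/-- The part of row `c` of `X` outside the zero block, for the first three rows. -/
noncomputable def genericRow (c : Fin 3) (j : Fin (2 * q + 3)) : CoordRing K q :=
  Xmat K (2 * q + 6) (Fin.castLE (by omega) c) (emb3 j)

/-- The three submaximal Pfaffians of `X` among the generators of `I`. -/
noncomputable def rowPfaffian (c : Fin 3) : CoordRing K q :=
  genericRow K q c ⬝ᵥ pfCofactor (genericBlock K q)

/-- The Pfaffian of `X`, up to sign. -/
noncomputable def maxPfaffian : CoordRing K q :=
  cofactorForm (genericBlock K q) (genericRow K q 0) (genericRow K q 1) (genericRow K q 2)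

lemma isAlternating_genericBlock : IsAlternating (genericBlock K q) :=
  (isAlternating_Xmat K _).submatrix _

lemma isHomogeneous_genericRow (c : Fin 3) (j : Fin (2 * q + 3)) :
    (genericRow K q c j).IsHomogeneous 1 :=
  isHomogeneous_Xmat K _ _ _

lemma pfaffian_Xmat : pfaffian (2 * q + 6) (Xmat K (2 * q + 6)) = -maxPfaffian K q := by
  rw [pfaffian_eq_pf]
  have h2 : ((2 : Fin (2 * q + 3 + 3)) : ℕ) < 3 := Nat.lt_succ_of_le (Nat.mod_le 2 _)
  exact pf_univ_eq_neg_cofactorForm (n := 2 * q + 3) (Xmat_eq_zero K (by simp) (by simp))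
    (Xmat_eq_zero K (by simp) h2) (Xmat_eq_zero K (by simp) h2)

lemma pfaffian_Xmat_submatrix {a b : ℕ} {c : Fin 3}
    (h0 : emb2 a b (0 : Fin (2 * q + 4)) = Fin.castLE (by omega) c)
    (hs : ∀ j : Fin (2 * q + 3), emb2 a b (j.succ : Fin (2 * q + 4)) = emb3 j) :
    pfaffian (2 * q + 4) ((Xmat K (2 * q + 6)).submatrix (emb2 a b) (emb2 a b)) =
      rowPfaffian K q c := by
  rw [pfaffian_eq_pf, pf_univ_eq_dotProduct]
  have hblock : ((Xmat K (2 * q + 6)).submatrix (emb2 a b) (emb2 a b)).submatrix Fin.succ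
      Fin.succ = genericBlock K q := by
    ext1 i j
    simp only [submatrix_apply, hs, genericBlock]
  have hrow : (fun j ↦ (Xmat K (2 * q + 6)).submatrix (emb2 a b) (emb2 a b) 0 (Fin.succ j)) =
      genericRow K q c := by
    ext1 j
    simp only [submatrix_apply, hs, h0, genericRow]
  rw [hblock, hrow, rowPfaffian]

lemma isHomogeneous_pfCofactor_genericBlock (i : Fin (2 * q + 3)) :
    (pfCofactor (genericBlock K q) i).IsHomogeneous (q + 1) := by
  have hpf : (pf (genericBlock K q) (Finset.univ.erase i)).IsHomogeneous (q + 1) :=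
    isHomogeneous_pf (fun _ _ ↦ isHomogeneous_Xmat K _ _ _) (by
      rw [Finset.card_erase_of_mem (Finset.mem_univ i), Finset.card_univ, Fintype.card_fin]
      omega)
  have := (isHomogeneous_frontSign (K := K) i Finset.univ).mul hpf
  rwa [zero_add] at this

lemma isHomogeneous_rowPfaffian (c : Fin 3) : (rowPfaffian K q c).IsHomogeneous (q + 2) := by
  refine MvPolynomial.IsHomogeneous.sum _ _ _ fun j _ ↦ ?_
  have := (isHomogeneous_genericRow K q c j).mul (isHomogeneous_pfCofactor_genericBlock K q j)
  rwa [show 1 + (q + 1) = q + 2 by omega] at this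

lemma isHomogeneous_maxPfaffian : (maxPfaffian K q).IsHomogeneous (q + 3) := by
  rw [← neg_neg (maxPfaffian K q), ← pfaffian_Xmat, pfaffian_eq_pf]
  exact (isHomogeneous_pf (isHomogeneous_Xmat K _) (by
    rw [Finset.card_univ, Fintype.card_fin]; omega)).neg

/-- The ideal `J` generated by the three submaximal Pfaffians `rowPfaffian`. -/
noncomputable def rowIdeal : Ideal (CoordRing K q) := Ideal.span (Set.range (rowPfaffian K q))

/-- The ideal `P` of submaximal Pfaffians of the generic block, a Gorenstein ideal of grade 3. -/
noncomputable def blockIdeal : Ideal (CoordRing K q) :=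
  Ideal.span (Set.range (pfCofactor (genericBlock K q)))

lemma span_pfaffians_eq : Ideal.span
      { pfaffian (2 * q + 6) (Xmat K (2 * q + 6)),
        pfaffian (2 * q + 4) ((Xmat K (2 * q + 6)).submatrix (emb2 0 1) (emb2 0 1)),
        pfaffian (2 * q + 4) ((Xmat K (2 * q + 6)).submatrix (emb2 0 2) (emb2 0 2)),
        pfaffian (2 * q + 4) ((Xmat K (2 * q + 6)).submatrix (emb2 1 2) (emb2 1 2)) } =
    rowIdeal K q ⊔ Ideal.span {maxPfaffian K q} := by
  rw [pfaffian_Xmat, pfaffian_Xmat_submatrix K q (a := 0) (b := 1) (c := 2) (by ext; simp [emb2])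
      (fun j ↦ by ext; simp [emb2, emb3]),
    pfaffian_Xmat_submatrix K q (a := 0) (b := 2) (c := 1) (by ext; simp [emb2])
      (fun j ↦ by ext; simp [emb2, emb3]),
    pfaffian_Xmat_submatrix K q (a := 1) (b := 2) (c := 0) (by ext; simp [emb2])
      (fun j ↦ by ext; simp [emb2, emb3]),
    Ideal.span_insert, Ideal.span_singleton_neg, sup_comm, rowIdeal]
  congr 2
  ext x
  simp only [Set.mem_insert_iff, Set.mem_singleton_iff, Set.mem_range]
  constructor
  · rintro (rfl | rfl | rfl)
    exacts [⟨2, rfl⟩, ⟨1, rfl⟩, ⟨0, rfl⟩]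
  · rintro ⟨c, rfl⟩
    fin_cases c
    exacts [Or.inr (Or.inr rfl), Or.inr (Or.inl rfl), Or.inl rfl]

lemma rowIdeal_le_blockIdeal : rowIdeal K q ≤ blockIdeal K q := by
  rw [rowIdeal, Ideal.span_le]
  rintro _ ⟨c, rfl⟩
  change ∑ j, genericRow K q c j * pfCofactor (genericBlock K q) j ∈ blockIdeal K q
  refine (blockIdeal K q).sum_mem fun j _ ↦ Ideal.mul_mem_left _ _ ?_
  exact Ideal.subset_span (Set.mem_range_self j)

end GenericMatrix

end PfaffianPowers

/-! ### Leading forms -/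

namespace PfaffianPowers

open MvPolynomial

section LeadingForm

variable {σ R : Type*} [CommRing R] (w : σ → ℕ)

/-- The polynomials all of whose monomials have `w`-weight less than `n`. -/
noncomputable def weightLT (n : ℕ) : Submodule R (MvPolynomial σ R) :=
  restrictSupport R {d | Finsupp.weight w d < n}

variable {w}

lemma mem_weightLT {n : ℕ} {f : MvPolynomial σ R} :
    f ∈ weightLT w n ↔ ∀ d, coeff d f ≠ 0 → Finsupp.weight w d < n := by
  rw [weightLT, mem_restrictSupport_iff]
  exact forall_congr' fun d ↦ by rw [Finset.mem_coe, mem_support_iff, Set.mem_ofPred_eq]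

lemma weightLT_mono {m n : ℕ} (h : m ≤ n) :
    weightLT w m ≤ (weightLT w n : Submodule R (MvPolynomial σ R)) :=
  fun _ hf ↦ mem_weightLT.2 fun d hd ↦ (mem_weightLT.1 hf d hd).trans_le h

lemma exists_mem_weightLT (f : MvPolynomial σ R) : ∃ n, f ∈ weightLT w n := by
  classical
  exact ⟨f.support.sup (Finsupp.weight w) + 1, mem_weightLT.2 fun d hd ↦
    Nat.lt_succ_of_le (Finset.le_sup (mem_support_iff.2 hd))⟩

lemma exists_forall_mem_weightLT {ι : Type*} [Finite ι] (v : ι → MvPolynomial σ R) :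
    ∃ n, ∀ i, v i ∈ weightLT w n := by
  cases nonempty_fintype ι
  choose n hn using fun i ↦ exists_mem_weightLT (w := w) (v i)
  exact ⟨Finset.univ.sup n, fun i ↦ weightLT_mono (Finset.le_sup (Finset.mem_univ i)) (hn i)⟩

lemma eq_zero_of_mem_weightLT_zero {f : MvPolynomial σ R} (hf : f ∈ weightLT w 0) : f = 0 := by
  ext d
  by_contra hd
  exact absurd (mem_weightLT.1 hf d hd) (Nat.not_lt_zero _)

lemma mul_mem_weightLT {m n : ℕ} {f g : MvPolynomial σ R} (hf : f ∈ weightLT w m)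
    (hg : g ∈ weightLT w (n + 1)) : f * g ∈ weightLT w (m + n) := by
  classical
  refine mem_weightLT.2 fun d hd ↦ ?_
  obtain ⟨a, ha, b, hb, rfl⟩ := Finset.mem_add.1 (support_mul f g (mem_support_iff.2 hd))
  have ha := mem_weightLT.1 hf a (mem_support_iff.1 ha)
  have hb := mem_weightLT.1 hg b (mem_support_iff.1 hb)
  rw [map_add]
  omega

variable (w) in
/-- `HasLeadingForm w f n a` says that `a` is the weight-`n` part of `f` and that `f` has no part
of higher weight. The form `a` may be zero, so `n` only bounds the weight of `f` from above. -/
structure HasLeadingForm (f : MvPolynomial σ R) (n : ℕ) (a : MvPolynomial σ R) : Prop where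
  isWeightedHomogeneous : IsWeightedHomogeneous w a n
  sub_mem_weightLT : f - a ∈ weightLT w n

namespace HasLeadingForm

variable {f g a b : MvPolynomial σ R} {m n : ℕ}

lemma of_isWeightedHomogeneous (ha : IsWeightedHomogeneous w a n) : HasLeadingForm w a n a :=
  ⟨ha, by rw [sub_self]; exact zero_mem _⟩

lemma of_mem_weightLT (hf : f ∈ weightLT w n) : HasLeadingForm w f n 0 :=
  ⟨isWeightedHomogeneous_zero R w n, by rwa [sub_zero]⟩

lemma mem_weightLT_of_zero (hf : HasLeadingForm w f n 0) : f ∈ weightLT w n := by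
  simpa using hf.sub_mem_weightLT

lemma mem_weightLT (hf : HasLeadingForm w f n a) : f ∈ weightLT w (n + 1) := by
  rw [← sub_add_cancel f a]
  refine add_mem (weightLT_mono n.le_succ hf.sub_mem_weightLT)
    (PfaffianPowers.mem_weightLT.2 fun d hd ↦ ?_)
  rw [hf.isWeightedHomogeneous hd]
  exact n.lt_succ_self

lemma exists_of_mem_weightLT (hf : f ∈ weightLT w (n + 1)) : ∃ a, HasLeadingForm w f n a := by
  classical
  refine ⟨weightedHomogeneousComponent w n f,
    weightedHomogeneousComponent_isWeightedHomogeneous n f,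
    PfaffianPowers.mem_weightLT.2 fun d hd ↦ ?_⟩
  rw [coeff_sub, coeff_weightedHomogeneousComponent] at hd
  split_ifs at hd with h
  · exact absurd (sub_self _) hd
  · rw [sub_zero] at hd
    have := PfaffianPowers.mem_weightLT.1 hf d hd
    omega

lemma unique (ha : HasLeadingForm w f n a) (hb : HasLeadingForm w f n b) : a = b := by
  rw [← sub_eq_zero]
  have h : a - b ∈ weightLT w n := by
    simpa using sub_mem hb.sub_mem_weightLT ha.sub_mem_weightLT
  ext d
  by_contra hd
  have hn := (ha.isWeightedHomogeneous.sub hb.isWeightedHomogeneous) hd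
  exact absurd (PfaffianPowers.mem_weightLT.1 h d hd) (by omega)

lemma eq_zero_of_lt (ha : HasLeadingForm w f n a) (hb : HasLeadingForm w f m b) (h : n < m) :
    b = 0 :=
  hb.unique (of_mem_weightLT (weightLT_mono h ha.mem_weightLT))

lemma eq_zero_or_eq (ha : HasLeadingForm w f n a) (hb : HasLeadingForm w f m b) (h : b ≠ 0) :
    a = 0 ∨ a = b := by
  rcases lt_trichotomy n m with hnm | rfl | hmn
  · exact absurd (ha.eq_zero_of_lt hb hnm) h
  · exact Or.inr (ha.unique hb)
  · exact Or.inl (hb.eq_zero_of_lt ha hmn)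

lemma exists_ne_zero (hf : f ≠ 0) : ∃ n a, a ≠ 0 ∧ HasLeadingForm w f n a := by
  obtain ⟨n, hn⟩ := exists_mem_weightLT (w := w) f
  induction n with
  | zero => exact absurd (eq_zero_of_mem_weightLT_zero hn) hf
  | succ n ih =>
    obtain ⟨a, ha⟩ := exists_of_mem_weightLT hn
    rcases eq_or_ne a 0 with rfl | h
    · exact ih ha.mem_weightLT_of_zero
    · exact ⟨n, a, h, ha⟩

lemma sub (hf : HasLeadingForm w f n a) (hg : HasLeadingForm w g n b) :
    HasLeadingForm w (f - g) n (a - b) where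
  isWeightedHomogeneous := hf.isWeightedHomogeneous.sub hg.isWeightedHomogeneous
  sub_mem_weightLT := by
    rw [sub_sub_sub_comm]
    exact Submodule.sub_mem _ hf.sub_mem_weightLT hg.sub_mem_weightLT

lemma sum {ι : Type*} {s : Finset ι} {f a : ι → MvPolynomial σ R}
    (h : ∀ i ∈ s, HasLeadingForm w (f i) n (a i)) :
    HasLeadingForm w (∑ i ∈ s, f i) n (∑ i ∈ s, a i) where
  isWeightedHomogeneous := .sum s a n fun i hi ↦ (h i hi).isWeightedHomogeneous
  sub_mem_weightLT := by
    rw [← Finset.sum_sub_distrib]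
    exact Submodule.sum_mem _ fun i hi ↦ (h i hi).sub_mem_weightLT

lemma mul (hf : HasLeadingForm w f m a) (hg : HasLeadingForm w g n b) :
    HasLeadingForm w (f * g) (m + n) (a * b) where
  isWeightedHomogeneous := hf.isWeightedHomogeneous.mul hg.isWeightedHomogeneous
  sub_mem_weightLT := by
    have h₁ := mul_mem_weightLT hf.sub_mem_weightLT hg.mem_weightLT
    have h₂ := mul_mem_weightLT hg.sub_mem_weightLT
      (of_isWeightedHomogeneous hf.isWeightedHomogeneous).mem_weightLT
    convert add_mem h₁ (add_comm n m ▸ h₂) using 1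
    ring

lemma dotProduct {ι : Type*} [Fintype ι] {f g a b : ι → MvPolynomial σ R}
    (hf : ∀ i, HasLeadingForm w (f i) m (a i)) (hg : ∀ i, HasLeadingForm w (g i) n (b i)) :
    HasLeadingForm w (f ⬝ᵥ g) (m + n) (a ⬝ᵥ b) :=
  sum fun i _ ↦ (hf i).mul (hg i)

/-- Take the weight-`(n - m)` parts of the coefficients. -/
lemma exists_dotProduct_weight {ι κ : Type*} [Fintype κ] {M M' : Matrix ι κ (MvPolynomial σ R)}
    (hM : ∀ i k, HasLeadingForm w (M i k) m (M' i k)) {u : κ → MvPolynomial σ R}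
    (hu : ∀ i, IsWeightedHomogeneous w ((M'.mulVec u) i) n) :
    ∃ v, ∀ i, HasLeadingForm w ((M.mulVec v) i) n ((M'.mulVec u) i) := by
  classical
  let _ := weightedGradedAlgebra R w
  have component_mul {f g : MvPolynomial σ R} (hf : IsWeightedHomogeneous w f m) :
      weightedHomogeneousComponent w n (f * g) =
        if m ≤ n then f * weightedHomogeneousComponent w (n - m) g else 0 := by
    have hf' : f ∈ weightedHomogeneousSubmodule R w m := hf
    have key (h : MvPolynomial σ R) (k : ℕ) : weightedHomogeneousComponent w k h =
        DirectSum.decompose (weightedHomogeneousSubmodule R w) h k :=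
      (weightedDecomposition.decompose'_apply R w h k).symm
    split_ifs with h
    · rw [key, key, DirectSum.coe_decompose_mul_of_left_mem_of_le _ hf' h]
    · rw [key, DirectSum.coe_decompose_mul_of_left_mem_of_not_le _ hf' h]
  refine ⟨fun k ↦ if m ≤ n then weightedHomogeneousComponent w (n - m) (u k) else 0, fun i ↦ ?_⟩
  have expand : (M'.mulVec u) i = ∑ k, M' i k *
      if m ≤ n then weightedHomogeneousComponent w (n - m) (u k) else 0 := by
    rw [← weightedHomogeneousComponent_eq_self (hu i), Matrix.mulVec, _root_.dotProduct, map_sum]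
    refine Finset.sum_congr rfl fun k _ ↦ ?_
    rw [component_mul (hM i k).isWeightedHomogeneous, mul_ite, mul_zero]
  rw [expand]
  refine sum fun k _ ↦ ?_
  split_ifs with h
  · convert (hM i k).mul (of_isWeightedHomogeneous
      (weightedHomogeneousComponent_isWeightedHomogeneous (w := w) (n - m) (u k))) using 1
    omega
  · simpa using of_mem_weightLT (Submodule.zero_mem _)

lemma dvd_of_dvd [IsDomain R] (hf : HasLeadingForm w f m a) (hg : HasLeadingForm w g n b)
    (ha : a ≠ 0) (h : f ∣ g) : a ∣ b := by
  obtain ⟨e, rfl⟩ := h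
  rcases eq_or_ne e 0 with rfl | he
  · rw [mul_zero] at hg
    exact hg.unique (of_mem_weightLT (Submodule.zero_mem _)) ▸ dvd_zero a
  · obtain ⟨k, c, hc, hec⟩ := exists_ne_zero (w := w) he
    rcases hg.eq_zero_or_eq (hf.mul hec) (mul_ne_zero ha hc) with rfl | rfl
    exacts [dvd_zero a, dvd_mul_right a c]

lemma isUnit [IsDomain R] (hf : HasLeadingForm w f n a) (ha : IsUnit a) : IsUnit f := by
  obtain ⟨r, -, rfl⟩ := isUnit_iff_eq_C_of_isReduced.1 ha
  obtain rfl := hf.isWeightedHomogeneous.inj_right ha.ne_zero (isWeightedHomogeneous_C w r)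
  rwa [sub_eq_zero.1 (eq_zero_of_mem_weightLT_zero hf.sub_mem_weightLT)]

lemma isRelPrime [IsDomain R] (hf : HasLeadingForm w f m a) (hg : HasLeadingForm w g n b)
    (ha : a ≠ 0) (h : IsRelPrime a b) : IsRelPrime f g := by
  intro d hdf hdg
  have hd : d ≠ 0 := by
    rintro rfl
    rw [zero_dvd_iff] at hdf
    subst hdf
    exact ha (hf.unique (of_mem_weightLT (Submodule.zero_mem _)))
  obtain ⟨k, c, hc, hdc⟩ := exists_ne_zero (w := w) hd
  exact hdc.isUnit (h (hdc.dvd_of_dvd hf hc hdf) (hdc.dvd_of_dvd hg hc hdg))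

end HasLeadingForm

end LeadingForm

end PfaffianPowers

namespace PfaffianPowers

open MvPolynomial

section LeadingPfaffian

variable {σ R ι : Type*} [CommRing R] {w : σ → ℕ} [LinearOrder ι]
  {z z' : Matrix ι ι (MvPolynomial σ R)}

lemma HasLeadingForm.frontSign_mul (i : ι) (S : Finset ι) {n : ℕ} {f a : MvPolynomial σ R}
    (hf : HasLeadingForm w f n a) :
    HasLeadingForm w (frontSign (MvPolynomial σ R) i S * f) n
      (frontSign (MvPolynomial σ R) i S * a) := by
  have h : IsWeightedHomogeneous w (frontSign (MvPolynomial σ R) i S) 0 := by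
    rw [← map_frontSign (C : R →+* MvPolynomial σ R)]
    exact isWeightedHomogeneous_C w _
  simpa using (of_isWeightedHomogeneous h).mul hf

lemma HasLeadingForm.pf (hz : ∀ i j, HasLeadingForm w (z i j) 1 (z' i j)) {S : Finset ι} {s : ℕ}
    (hS : S.card = 2 * s) : HasLeadingForm w (pf z S) s (pf z' S) := by
  induction S using pf_induction generalizing s with
  | empty =>
    obtain rfl : s = 0 := by simpa using hS.symm
    simpa using of_isWeightedHomogeneous (isWeightedHomogeneous_one R w)
  | insert a S ha ih =>
    rw [Finset.card_insert_of_notMem fun h ↦ (ha a h).false] at hS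
    obtain ⟨s, rfl⟩ : ∃ s', s = s' + 1 := ⟨s - 1, by omega⟩
    rw [pf_insert z ha, pf_insert z' ha]
    refine .sum fun b hb ↦ ?_
    have hcard : (S.erase b).card = 2 * s := by rw [Finset.card_erase_of_mem hb]; omega
    simpa only [mul_assoc, add_comm 1 s] using ((hz a b).mul (ih b hb hcard)).frontSign_mul b S

variable [Fintype ι]

lemma HasLeadingForm.pfCofactor (hz : ∀ i j, HasLeadingForm w (z i j) 1 (z' i j)) {s : ℕ}
    (hs : Fintype.card ι = 2 * s + 1) (i : ι) :
    HasLeadingForm w (pfCofactor z i) s (pfCofactor z' i) := by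
  refine (HasLeadingForm.pf hz ?_).frontSign_mul i _
  rw [Finset.card_erase_of_mem (Finset.mem_univ i), Finset.card_univ, hs, Nat.add_sub_cancel]

lemma HasLeadingForm.pfCofactor₃ (hz : ∀ i j, HasLeadingForm w (z i j) 1 (z' i j)) {s : ℕ}
    (hs : Fintype.card ι = 2 * s + 3) (i j k : ι) :
    HasLeadingForm w (pfCofactor₃ z i j k) s (pfCofactor₃ z' i j k) := by
  unfold PfaffianPowers.pfCofactor₃
  split_ifs with h
  · simp only [mul_assoc]
    refine (((HasLeadingForm.pf hz ?_).frontSign_mul k _).frontSign_mul j _).frontSign_mul i _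
    rw [Finset.card_erase_of_mem (by simp [h.2.1.symm, h.2.2.symm]),
      Finset.card_erase_of_mem (by simp [h.1.symm]), Finset.card_erase_of_mem (Finset.mem_univ i),
      Finset.card_univ, hs]
    rfl
  · exact of_mem_weightLT (Submodule.zero_mem _)

lemma HasLeadingForm.cofactorForm (hz : ∀ i j, HasLeadingForm w (z i j) 1 (z' i j)) {s : ℕ}
    (hs : Fintype.card ι = 2 * s + 3) {x y t : ι → MvPolynomial σ R}
    (hx : ∀ i, IsWeightedHomogeneous w (x i) 0) (hy : ∀ i, IsWeightedHomogeneous w (y i) 0)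
    (ht : ∀ i, IsWeightedHomogeneous w (t i) 0) :
    HasLeadingForm w (cofactorForm z x y t) s (cofactorForm z' x y t) := by
  refine .sum fun i _ ↦ .sum fun j _ ↦ .sum fun k _ ↦ ?_
  simpa using (of_isWeightedHomogeneous (((hx i).mul (hy j)).mul (ht k))).mul
    (HasLeadingForm.pfCofactor₃ hz hs i j k)

end LeadingPfaffian

section Lifting

variable {σ R ι κ : Type*} [CommRing R] {w : σ → ℕ}

lemma mem_span_range_iff_dotProduct [Fintype ι] {p : ι → R} {f : R} :
    f ∈ Ideal.span (Set.range p) ↔ ∃ v, p ⬝ᵥ v = f := by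
  simp only [Ideal.mem_span_range_iff_exists_fun, dotProduct, mul_comm]

/-- `HasLeadingIdeal w I I'` says that the leading forms of the elements of `I` all lie in `I'` and
that every form in `I'` arises in this way. -/
structure HasLeadingIdeal (w : σ → ℕ) (I I' : Ideal (MvPolynomial σ R)) : Prop where
  leadingForm_mem : ∀ {f n a}, f ∈ I → HasLeadingForm w f n a → a ∈ I'
  exists_hasLeadingForm : ∀ {n a}, a ∈ I' → IsWeightedHomogeneous w a n →
    ∃ f ∈ I, HasLeadingForm w f n a

theorem HasLeadingIdeal.mem_of_mul_mem {I I' : Ideal (MvPolynomial σ R)}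
    (hI : HasLeadingIdeal w I I') {f a : MvPolynomial σ R} {m : ℕ} (hf : HasLeadingForm w f m a)
    (ha : ∀ b, a * b ∈ I' → b ∈ I') {g : MvPolynomial σ R} (hg : f * g ∈ I) : g ∈ I := by
  obtain ⟨n, hn⟩ := exists_mem_weightLT (w := w) g
  induction n generalizing g with
  | zero => rw [eq_zero_of_mem_weightLT_zero hn]; exact I.zero_mem
  | succ n ih =>
    obtain ⟨b, hb⟩ := HasLeadingForm.exists_of_mem_weightLT hn
    obtain ⟨h, hhI, hh⟩ := hI.exists_hasLeadingForm
      (ha b (hI.leadingForm_mem hg (hf.mul hb))) hb.isWeightedHomogeneous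
    have hsub : g - h ∈ I := by
      refine ih ?_ (HasLeadingForm.mem_weightLT_of_zero (sub_self b ▸ hb.sub hh))
      rw [mul_sub]
      exact I.sub_mem hg (I.mul_mem_left f hhI)
    simpa using I.add_mem hsub hhI

variable [Fintype ι] [Fintype κ] {M M' : Matrix ι κ (MvPolynomial σ R)}
  {p p' : ι → MvPolynomial σ R} {s : ℕ}

/-- Each subtraction lowers the weight of `v`, so the process stops. -/
lemma exists_sub_mulVec_hasLeadingForm (hM : ∀ i k, HasLeadingForm w (M i k) 1 (M' i k))
    (hexact : ∀ v, p' ⬝ᵥ v = 0 → ∃ u, M'.mulVec u = v) (v : ι → MvPolynomial σ R) :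
    ∃ u, v = M.mulVec u ∨ ∃ (n : ℕ) (a : ι → MvPolynomial σ R),
      (∀ i, HasLeadingForm w ((v - M.mulVec u) i) n (a i)) ∧ p' ⬝ᵥ a ≠ 0 := by
  obtain ⟨n, hn⟩ := exists_forall_mem_weightLT (w := w) v
  induction n generalizing v with
  | zero => exact ⟨0, Or.inl (by ext1 i; simp [eq_zero_of_mem_weightLT_zero (hn i)])⟩
  | succ n ih =>
    choose a ha using fun i ↦ HasLeadingForm.exists_of_mem_weightLT (hn i)
    by_cases hpa : p' ⬝ᵥ a = 0
    · obtain ⟨u, rfl⟩ := hexact a hpa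
      obtain ⟨u₀, hu₀⟩ :=
        HasLeadingForm.exists_dotProduct_weight hM fun i ↦ (ha i).isWeightedHomogeneous
      obtain ⟨u₁, hu₁⟩ := ih (v - M.mulVec u₀) fun i ↦
        HasLeadingForm.mem_weightLT_of_zero (sub_self (M'.mulVec u i) ▸ (ha i).sub (hu₀ i))
      refine ⟨u₀ + u₁, ?_⟩
      rwa [Matrix.mulVec_add, ← sub_sub, ← sub_eq_iff_eq_add']
    · exact ⟨0, Or.inr ⟨n, a, by simpa using ha, hpa⟩⟩

variable (hM : ∀ i k, HasLeadingForm w (M i k) 1 (M' i k))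
  (hp : ∀ i, HasLeadingForm w (p i) s (p' i)) (hpM : ∀ u, p ⬝ᵥ M.mulVec u = 0)
  (hexact : ∀ v, p' ⬝ᵥ v = 0 → ∃ u, M'.mulVec u = v)

include hM hp hpM hexact

theorem exists_mulVec_eq_of_leadingForm {v : ι → MvPolynomial σ R} (hv : p ⬝ᵥ v = 0) :
    ∃ u, M.mulVec u = v := by
  obtain ⟨u, h | ⟨n, a, ha, hpa⟩⟩ := exists_sub_mulVec_hasLeadingForm hM hexact v
  · exact ⟨u, h.symm⟩
  · have h := HasLeadingForm.dotProduct hp ha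
    rw [dotProduct_sub, hv, hpM, sub_zero] at h
    exact absurd (h.unique (.of_mem_weightLT (Submodule.zero_mem _))) hpa

theorem hasLeadingIdeal_span_range :
    HasLeadingIdeal w (Ideal.span (Set.range p)) (Ideal.span (Set.range p')) where
  leadingForm_mem {f n a} hf hfa := by
    obtain ⟨v, rfl⟩ := mem_span_range_iff_dotProduct.1 hf
    obtain ⟨u, h | ⟨m, b, hb, hpb⟩⟩ := exists_sub_mulVec_hasLeadingForm hM hexact v
    · rw [h, hpM] at hfa
      rw [hfa.unique (.of_mem_weightLT (Submodule.zero_mem _))]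
      exact zero_mem _
    · have hfb := HasLeadingForm.dotProduct hp hb
      rw [dotProduct_sub, hpM, sub_zero] at hfb
      rcases hfa.eq_zero_or_eq hfb hpb with rfl | rfl
      exacts [zero_mem _, mem_span_range_iff_dotProduct.2 ⟨b, rfl⟩]
  exists_hasLeadingForm {n a} ha han := by
    obtain ⟨v, rfl⟩ := mem_span_range_iff_dotProduct.1 ha
    obtain ⟨u, hu⟩ := HasLeadingForm.exists_dotProduct_weight (ι := Unit) (M := fun _ ↦ p)
      (M' := fun _ ↦ p') (fun _ ↦ hp) (fun _ ↦ han)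
    exact ⟨p ⬝ᵥ u, mem_span_range_iff_dotProduct.2 ⟨u, rfl⟩, hu ()⟩

end Lifting

end PfaffianPowers

/-! ### Cyclic skew-symmetric matrices -/

namespace PfaffianPowers

open MvPolynomial

section Kill

variable {σ K : Type*} [CommRing K] {D : Set σ}

open Classical in
/-- The substitution setting the variables in `D` to zero and fixing the others. -/
noncomputable def kill (D : Set σ) : MvPolynomial σ K →ₐ[K] MvPolynomial σ K :=
  aeval fun v ↦ if v ∈ D then 0 else X v

lemma kill_X_of_mem {v : σ} (h : v ∈ D) : kill (K := K) D (X v) = 0 := by simp [kill, h]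

lemma kill_X_of_notMem {v : σ} (h : v ∉ D) : kill (K := K) D (X v) = X v := by simp [kill, h]

lemma kill_kill (D : Set σ) (f : MvPolynomial σ K) : kill D (kill D f) = kill D f := by
  suffices (kill (K := K) D).comp (kill D) = kill D from DFunLike.congr_fun this f
  refine algHom_ext fun v ↦ ?_
  by_cases h : v ∈ D
  · simp [kill_X_of_mem h]
  · simp [kill_X_of_notMem h]

lemma sub_kill_mem_span (D : Set σ) (f : MvPolynomial σ K) :
    f - kill D f ∈ Ideal.span (X '' D) := by
  induction f using MvPolynomial.induction_on with
  | C a => simp [kill]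
  | add f g hf hg =>
    rw [map_add, add_sub_add_comm]
    exact Ideal.add_mem _ hf hg
  | mul_X f v hf =>
    rw [map_mul]
    by_cases h : v ∈ D
    · rw [kill_X_of_mem h, mul_zero, sub_zero]
      exact Ideal.mul_mem_left _ _ (Ideal.subset_span ⟨v, h, rfl⟩)
    · rw [kill_X_of_notMem h, ← sub_mul]
      exact Ideal.mul_mem_right _ _ hf

lemma kill_ne_zero {f : MvPolynomial σ K} {m : σ →₀ ℕ} (hm : m ∈ f.support)
    (hD : ∀ v ∈ D, m v = 0) : kill D f ≠ 0 := by
  intro h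
  have hf := sub_kill_mem_span D f
  rw [h, sub_zero, mem_ideal_span_X_image] at hf
  obtain ⟨v, hv, hmv⟩ := hf m hm
  exact hmv (hD v hv)

lemma X_dvd_of_kill_eq_zero {v : σ} {f : MvPolynomial σ K} (h : kill {v} f = 0) : X v ∣ f := by
  have hf := sub_kill_mem_span {v} f
  rwa [h, sub_zero, Set.image_singleton, Ideal.mem_span_singleton] at hf

end Kill

section PfaffianExact

variable {ι R : Type*} [LinearOrder ι] [Fintype ι] [CommRing R] {z : Matrix ι ι R}

/-- Exactness of the Buchsbaum–Eisenbud sequence `R → Rⁿ → Rⁿ → R` given by the submaximal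
Pfaffians of `z`, by `z` and by the submaximal Pfaffians again. -/
structure IsPfaffianExact (z : Matrix ι ι R) : Prop where
  isAlternating : IsAlternating z
  exists_mulVec_eq : ∀ v, pfCofactor z ⬝ᵥ v = 0 → ∃ u, z.mulVec u = v
  exists_eq_smul : ∀ u, z.mulVec u = 0 → ∃ c : R, u = c • pfCofactor z

lemma IsAlternating.exists_eq_smul_pfCofactor [IsDomain R] [DecompositionMonoid R]
    (hz : IsAlternating z) {i j : ι} (hi : pfCofactor z i ≠ 0)
    (hij : IsRelPrime (pfCofactor z i) (pfCofactor z j)) {u : ι → R} (hu : z.mulVec u = 0) :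
    ∃ c : R, u = c • pfCofactor z := by
  have hminor := pfCofactor_mul_eq_of_mulVec_eq_zero hz hu
  obtain ⟨c, hc⟩ : pfCofactor z i ∣ u i := hij.dvd_of_dvd_mul_left ⟨u j, (hminor i j).symm⟩
  refine ⟨c, funext fun k ↦ mul_left_cancel₀ hi ?_⟩
  rw [hminor i k, hc, Pi.smul_apply, smul_eq_mul]
  ring

lemma IsAlternating.exists_mulVec_eq_of_smul (hz : IsAlternating z) {x : R}
    (hx : x ∈ nonZeroDivisors R)
    (hker : ∀ u, (∀ i, x ∣ z.mulVec u i) → ∃ c : R, ∀ i, x ∣ u i - c * pfCofactor z i)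
    {v : ι → R} (hv : ∃ u, z.mulVec u = x • v) : ∃ u, z.mulVec u = v := by
  obtain ⟨u, hu⟩ := hv
  obtain ⟨c, hc⟩ := hker u fun i ↦ ⟨v i, by rw [hu, Pi.smul_apply, smul_eq_mul]⟩
  choose t ht using hc
  have ht : u - c • pfCofactor z = x • t := funext ht
  refine ⟨t, funext fun i ↦ (mul_cancel_left_mem_nonZeroDivisors hx).1 ?_⟩
  have := congrFun (congrArg z.mulVec ht) i
  rw [Matrix.mulVec_sub, Matrix.mulVec_smul, Matrix.mulVec_smul, mulVec_pfCofactor hz, smul_zero,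
    sub_zero, hu] at this
  exact this.symm

end PfaffianExact

section Path

variable {ι R : Type*} [LinearOrder ι] [CommRing R] {z : Matrix ι ι R}

lemma erase_erase_image_range_add_two {f : ℕ → ι} {n : ℕ}
    (hf : Set.InjOn f (Finset.range (n + 2))) :
    (((Finset.range (n + 2)).image f).erase (f 0)).erase (f 1) =
      (Finset.range n).image fun s ↦ f (s + 2) := by
  ext x
  simp only [Finset.mem_erase, Finset.mem_image, Finset.mem_range]
  constructor
  · rintro ⟨hx1, hx0, s, hs, rfl⟩
    have hs0 : s ≠ 0 := by rintro rfl; exact hx0 rfl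
    have hs1 : s ≠ 1 := by rintro rfl; exact hx1 rfl
    exact ⟨s - 2, by omega, by congr 1; omega⟩
  · rintro ⟨s, hs, rfl⟩
    refine ⟨fun h ↦ ?_, fun h ↦ ?_, s + 2, by omega, rfl⟩ <;>
      · have := hf (by simpa using hs) (by simp) h
        omega

/-- A path has only one perfect matching. -/
lemma associated_pf_image_range (hz : IsAlternating z) {m : ℕ} {f : ℕ → ι}
    (hf : Set.InjOn f (Finset.range (2 * m)))
    (h : ∀ s t, s + 1 < t → t < 2 * m → z (f s) (f t) = 0) :
    Associated (pf z ((Finset.range (2 * m)).image f))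
      (∏ k ∈ Finset.range m, z (f (2 * k)) (f (2 * k + 1))) := by
  induction m generalizing f with
  | zero => simp
  | succ m ih =>
    have inj {s t : ℕ} (hs : s < 2 * (m + 1)) (ht : t < 2 * (m + 1)) (hst : f s = f t) : s = t :=
      hf (by simpa using hs) (by simpa using ht) hst
    set S := (Finset.range (2 * (m + 1))).image f
    have h0 : f 0 ∈ S := Finset.mem_image_of_mem f (by simp)
    have h1 : f 1 ∈ S := Finset.mem_image_of_mem f (by simp; omega)
    have hneighbor : ∀ x ∈ S, x ≠ f 1 → z (f 0) x = 0 := by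
      intro x hx hx1
      obtain ⟨s, hs, rfl⟩ := Finset.mem_image.1 hx
      rw [Finset.mem_range] at hs
      rcases s with _ | _ | s
      exacts [hz.diag _, absurd rfl hx1, h _ _ (by omega) hs]
    have h10 : f 1 ≠ f 0 := fun h ↦ absurd (inj (by omega) (by omega) h) (by omega)
    have herase : (S.erase (f 0)).erase (f 1) = (Finset.range (2 * m)).image fun s ↦ f (s + 2) :=
      erase_erase_image_range_add_two hf
    rw [pf_eq_of_unique_neighbor hz h0 h1 h10 hneighbor, herase, Finset.prod_range_succ', mul_comm]
    refine (ih (f := fun s ↦ f (s + 2)) (fun s hs t ht hst ↦ ?_) fun s t hst ht ↦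
      h _ _ (by omega) (by omega)).mul_mul
      (associated_unit_mul_left _ _ ((isUnit_frontSign _ _).mul (isUnit_frontSign _ _)))
    rw [Finset.coe_range, Set.mem_Iio] at hs ht
    have := inj (by omega) (by omega) hst
    omega

end Path

end PfaffianPowers

namespace PfaffianPowers

open MvPolynomial Matrix
open scoped Fin.CommRing

lemma eq_of_add_natCast_eq {n : ℕ} [NeZero n] {i : Fin n} {s t : ℕ} (hs : s < n) (ht : t < n)
    (h : i + (s : Fin n) = i + (t : Fin n)) : s = t :=
  CharP.natCast_injOn_Iio (Fin n) n hs ht (add_left_cancel h)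

lemma add_natCast_ne_self {n : ℕ} [NeZero n] (i : Fin n) {s : ℕ} (h0 : s ≠ 0) (hs : s < n) :
    i + (s : Fin n) ≠ i := fun h ↦
  h0 (eq_of_add_natCast_eq (i := i) hs (NeZero.pos n) (by simpa using h))

lemma univ_erase_eq_image_range {n : ℕ} (i : Fin (n + 1)) : Finset.univ.erase i =
    (Finset.range n).image fun s : ℕ ↦ i + ((s + 1 : ℕ) : Fin (n + 1)) := by
  have hinj : Set.InjOn (fun s : ℕ ↦ i + ((s + 1 : ℕ) : Fin (n + 1))) (Finset.range n) := by
    intro s hs t ht h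
    rw [Finset.coe_range, Set.mem_Iio] at hs ht
    have := eq_of_add_natCast_eq (by omega) (by omega) h
    omega
  refine (Finset.eq_of_subset_of_card_le (fun x hx ↦ ?_) ?_).symm
  · obtain ⟨s, hs, rfl⟩ := Finset.mem_image.1 hx
    refine Finset.mem_erase.2 ⟨add_natCast_ne_self i s.succ_ne_zero ?_, Finset.mem_univ _⟩
    simpa using hs
  · rw [Finset.card_image_of_injOn hinj, Finset.card_erase_of_mem (Finset.mem_univ i)]
    simp

variable {σ K : Type*} [Field K] {q : ℕ}

/-- Up to sign, `z` is the weighted adjacency matrix of the cycle on `2q + 3` vertices whose edges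
`{i, i + 1}` carry distinct variables `x i`. -/
structure IsCycleMatrix (z : Matrix (Fin (2 * q + 3)) (Fin (2 * q + 3)) (MvPolynomial σ K))
    (x : Fin (2 * q + 3) → σ) : Prop where
  isAlternating : IsAlternating z
  injective : Function.Injective x
  edge_eq : ∀ i, z i (i + 1) = X (x i) ∨ z i (i + 1) = -X (x i)
  eq_zero : ∀ {i j}, j ≠ i + 1 → i ≠ j + 1 → z i j = 0

/-- The product of the edge variables in the perfect matching of the path obtained from the cycle
by deleting the vertex `i`. -/
noncomputable def cycleMonomial (K : Type*) [Field K] (x : Fin (2 * q + 3) → σ)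
    (i : Fin (2 * q + 3)) : MvPolynomial σ K :=
  ∏ s ∈ Finset.range (q + 1), X (x (i + ((2 * s + 1 : ℕ) : Fin (2 * q + 3))))

variable {x : Fin (2 * q + 3) → σ}

lemma cycleMonomial_ne_zero (i : Fin (2 * q + 3)) : cycleMonomial K x i ≠ 0 :=
  Finset.prod_ne_zero_iff.2 fun _ _ ↦ X_ne_zero _

lemma isRelPrime_X_X {v w : σ} (h : v ≠ w) : IsRelPrime (X v : MvPolynomial σ K) (X w) := by
  rwa [(X_prime (R := K) (i := v)).irreducible.isRelPrime_iff_not_dvd, X_dvd_X]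

lemma isRelPrime_cycleMonomial (hx : Function.Injective x) (i : Fin (2 * q + 3)) :
    IsRelPrime (cycleMonomial K x i) (cycleMonomial K x (i + 1)) := by
  refine IsRelPrime.prod_left fun s hs ↦ IsRelPrime.prod_right fun t ht ↦
    isRelPrime_X_X fun h ↦ ?_
  have h : i + ((2 * s + 1 : ℕ) : Fin (2 * q + 3)) =
      i + ((2 * t + 2 : ℕ) : Fin (2 * q + 3)) := by
    rw [hx h]
    push_cast
    ring
  rw [Finset.mem_range] at hs ht
  have := eq_of_add_natCast_eq (s := 2 * s + 1) (t := 2 * t + 2) (by omega) (by omega) h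
  omega

lemma kill_cycleMonomial (hx : Function.Injective x) (i : Fin (2 * q + 3)) :
    kill {x i} (cycleMonomial K x i) = cycleMonomial K x i := by
  rw [cycleMonomial, map_prod]
  refine Finset.prod_congr rfl fun s hs ↦ kill_X_of_notMem fun h ↦ ?_
  rw [Finset.mem_range] at hs
  exact add_natCast_ne_self i (2 * s).succ_ne_zero (by omega) (hx h)

lemma kill_cycleMonomial_add_one (hx : Function.Injective x) (i : Fin (2 * q + 3)) :
    kill {x i} (cycleMonomial K x (i + 1)) = cycleMonomial K x (i + 1) := by
  rw [cycleMonomial, map_prod]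
  refine Finset.prod_congr rfl fun s hs ↦ kill_X_of_notMem fun h ↦ ?_
  rw [Finset.mem_range] at hs
  refine add_natCast_ne_self i (2 * s + 1).succ_ne_zero (by omega) (Eq.trans ?_ (hx h))
  push_cast
  ring

lemma kill_cycleMonomial_eq_zero {D : Set σ} {i : Fin (2 * q + 3)} {s : ℕ} (hs : s < q + 1)
    (h : x (i + ((2 * s + 1 : ℕ) : Fin (2 * q + 3))) ∈ D) : kill D (cycleMonomial K x i) = 0 := by
  rw [cycleMonomial, map_prod]
  exact Finset.prod_eq_zero (Finset.mem_range.2 hs) (kill_X_of_mem h)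

lemma cycleMonomial_dvd_monomial (hx : Function.Injective x) {i : Fin (2 * q + 3)} {m : σ →₀ ℕ}
    (h : ∀ s < q + 1, m (x (i + ((2 * s + 1 : ℕ) : Fin (2 * q + 3)))) ≠ 0) (a : K) :
    cycleMonomial K x i ∣ monomial m a := by
  refine Finset.prod_dvd_of_isRelPrime (fun s hs t ht hst ↦ isRelPrime_X_X fun he ↦ hst ?_)
    fun s hs ↦ X_dvd_monomial.2 (Or.inr (h s (Finset.mem_range.1 hs)))
  rw [Finset.coe_range, Set.mem_Iio] at hs ht
  have := eq_of_add_natCast_eq (s := 2 * s + 1) (t := 2 * t + 1) (by omega) (by omega)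
    (hx he)
  omega

namespace IsCycleMatrix

variable {z : Matrix (Fin (2 * q + 3)) (Fin (2 * q + 3)) (MvPolynomial σ K)}

lemma associated_edge (hz : IsCycleMatrix z x) (i : Fin (2 * q + 3)) :
    Associated (z i (i + 1)) (X (x i)) := by
  rcases hz.edge_eq i with h | h
  · rw [h]
  · rw [h]
    exact (Associated.refl _).neg_left

lemma associated_pfCofactor (hz : IsCycleMatrix z x) (i : Fin (2 * q + 3)) :
    Associated (pfCofactor z i) (cycleMonomial K x i) := by
  refine (associated_unit_mul_left _ _ (isUnit_frontSign _ _)).trans ?_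
  have hinj : Set.InjOn (fun s : ℕ ↦ i + ((s + 1 : ℕ) : Fin (2 * q + 3)))
      (Finset.range (2 * (q + 1))) := by
    intro s hs t ht h
    rw [Finset.coe_range, Set.mem_Iio] at hs ht
    have := eq_of_add_natCast_eq (s := s + 1) (t := t + 1) (by omega) (by omega) h
    omega
  have hpath : ∀ s t : ℕ, s + 1 < t → t < 2 * (q + 1) →
      z (i + ((s + 1 : ℕ) : Fin (2 * q + 3))) (i + ((t + 1 : ℕ) : Fin (2 * q + 3))) = 0 := by
    intro s t hst ht
    refine hz.eq_zero (fun h ↦ ?_) fun h ↦ ?_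
    · have := eq_of_add_natCast_eq (s := t + 1) (t := s + 2) (by omega) (by omega)
        (h.trans (by push_cast; ring))
      omega
    · have := eq_of_add_natCast_eq (i := i + 1) (s := s) (t := t + 1) (by omega) (by omega)
        ((by push_cast; ring : i + 1 + (s : Fin _) = _).trans (h.trans (by push_cast; ring)))
      omega
  rw [univ_erase_eq_image_range (n := 2 * q + 2) i]
  refine (associated_pf_image_range hz.isAlternating hinj hpath).trans (Associated.prod _ _ _ ?_)
  intro s _
  have hsucc : i + ((2 * s + 1 + 1 : ℕ) : Fin (2 * q + 3)) =
      i + ((2 * s + 1 : ℕ) : Fin (2 * q + 3)) + 1 := by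
    push_cast
    ring
  rw [hsucc]
  exact hz.associated_edge _

lemma pfCofactor_ne_zero (hz : IsCycleMatrix z x) (i : Fin (2 * q + 3)) : pfCofactor z i ≠ 0 :=
  (hz.associated_pfCofactor i).ne_zero_iff.2 (cycleMonomial_ne_zero i)

lemma isRelPrime_pfCofactor (hz : IsCycleMatrix z x) (i : Fin (2 * q + 3)) :
    IsRelPrime (pfCofactor z i) (pfCofactor z (i + 1)) := fun _ h h' ↦
  isRelPrime_cycleMonomial hz.injective i (h.trans (hz.associated_pfCofactor i).dvd)
    (h'.trans (hz.associated_pfCofactor (i + 1)).dvd)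

lemma exists_mulVec_eq_of_X_smul (hz : IsCycleMatrix z x) (e : Fin (2 * q + 3))
    {v : Fin (2 * q + 3) → MvPolynomial σ K}
    (hv : ∃ u, z *ᵥ u = (X (x e) : MvPolynomial σ K) • v) : ∃ u, z *ᵥ u = v := by
  refine hz.isAlternating.exists_mulVec_eq_of_smul
    (mem_nonZeroDivisors_of_ne_zero (X_ne_zero _)) (fun u hu ↦ ?_) hv
  set ρ := kill (K := K) {x e}
  have hρ (i) : ρ (pfCofactor z i) = pfCofactor (z.map ρ) i := map_pfCofactor ρ.toRingHom z i
  have hassoc (i) (h : ρ (cycleMonomial K x i) = cycleMonomial K x i) :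
      Associated (pfCofactor (z.map ρ) i) (cycleMonomial K x i) := by
    rw [← hρ, ← h]
    exact (hz.associated_pfCofactor i).map ρ
  have he := hassoc e (kill_cycleMonomial hz.injective e)
  have he' := hassoc (e + 1) (kill_cycleMonomial_add_one hz.injective e)
  have halt : IsAlternating (z.map ρ) :=
    ⟨fun i j ↦ by simp [hz.isAlternating.skew i j], fun i ↦ by simp [hz.isAlternating.diag i]⟩
  have hker : z.map ρ *ᵥ (ρ ∘ u) = 0 := by
    ext1 i
    refine (RingHom.map_mulVec ρ.toRingHom z u i).symm.trans ?_
    obtain ⟨t, ht⟩ := hu i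
    rw [ht, map_mul]
    exact mul_eq_zero_of_left (kill_X_of_mem (Set.mem_singleton _)) _
  obtain ⟨c, hc⟩ := halt.exists_eq_smul_pfCofactor (he.ne_zero_iff.2 (cycleMonomial_ne_zero e))
    (fun _ h h' ↦ isRelPrime_cycleMonomial hz.injective e (h.trans he.dvd) (h'.trans he'.dvd)) hker
  refine ⟨c, fun i ↦ X_dvd_of_kill_eq_zero ?_⟩
  have h := congrArg ρ (congrFun hc i)
  rw [Function.comp_apply, Pi.smul_apply, smul_eq_mul, ← hρ, map_mul, kill_kill, kill_kill] at h
  rw [map_sub, map_mul, sub_eq_zero]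
  exact h

lemma exists_mulVec_eq (hz : IsCycleMatrix z x) {v : Fin (2 * q + 3) → MvPolynomial σ K}
    (hv : pfCofactor z ⬝ᵥ v = 0) : ∃ u, z *ᵥ u = v := by
  have hcancel (T : Finset ℕ) (f : ℕ → Fin (2 * q + 3)) :
      (∃ u, z *ᵥ u = (∏ s ∈ T, (X (x (f s)) : MvPolynomial σ K)) • v) → ∃ u, z *ᵥ u = v := by
    induction T using Finset.induction_on with
    | empty => simp
    | insert a T ha ih =>
      rw [Finset.prod_insert ha, ← smul_smul]
      exact fun h ↦ ih (hz.exists_mulVec_eq_of_X_smul _ h)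
  obtain ⟨c, hc⟩ := (hz.associated_pfCofactor 0).dvd
  refine hcancel (Finset.range (q + 1)) (fun s ↦ 0 + ((2 * s + 1 : ℕ) : Fin (2 * q + 3)))
    ⟨c • ∑ j, v j • pfCofactor₃ z 0 j, ?_⟩
  rw [mulVec_smul, ← pfCofactor_smul_eq_mulVec hz.isAlternating hv 0, smul_smul]
  exact congrArg (· • v) ((mul_comm _ _).trans hc.symm)

end IsCycleMatrix

end PfaffianPowers

namespace PfaffianPowers

open MvPolynomial Matrix
open scoped Fin.CommRing

section Supported

variable {σ K : Type*} [CommRing K]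

lemma kill_mem_supported {s : Set σ} {f : MvPolynomial σ K} (hf : f ∈ supported K s) (D : Set σ) :
    kill D f ∈ supported K s := by
  suffices supported K s ≤ (supported K s).comap (kill D) from this hf
  conv_lhs => rw [supported_eq_adjoin_X]
  rw [Algebra.adjoin_le_iff]
  rintro _ ⟨v, hv, rfl⟩
  change kill D (X v) ∈ supported K s
  by_cases h : v ∈ D
  · rw [kill_X_of_mem h]
    exact zero_mem _
  · rw [kill_X_of_notMem h]
    exact Algebra.subset_adjoin ⟨v, hv, rfl⟩

lemma pfCofactor₃_eq_zero_of_cofactorForm_eq_zero {ι : Type*} [LinearOrder ι] [Fintype ι]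
    {z : Matrix ι ι (MvPolynomial σ K)} {r : Fin 3 × ι → σ} (hr : Function.Injective r)
    (hz : ∀ i j, z i j ∈ supported K (Set.range r)ᶜ)
    (h : cofactorForm z (fun j ↦ X (r (0, j))) (fun j ↦ X (r (1, j))) (fun j ↦ X (r (2, j))) = 0)
    (i j k : ι) : pfCofactor₃ z i j k = 0 := by
  let s : Fin 3 → ι := ![i, j, k]
  let φ : MvPolynomial σ K →ₐ[K] MvPolynomial σ K :=
    aeval (Function.extend r (fun a ↦ if a.2 = s a.1 then 1 else 0) X)
  have hφr (c : Fin 3) : (φ.toRingHom ∘ fun j ↦ X (r (c, j))) = Pi.single (s c) 1 := by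
    ext1 a
    simp [φ, hr.extend_apply, Pi.single_apply]
  have hφz : z.map φ.toRingHom = z := by
    ext1 a b
    refine AlgHom.adjoin_le_equalizer φ (AlgHom.id K _) ?_
      ((supported_eq_adjoin_X (R := K) (Set.range r)ᶜ) ▸ hz a b)
    rintro _ ⟨v, hv, rfl⟩
    simp [φ, Function.extend_apply' _ _ _ hv]
  have h := congrArg φ.toRingHom h
  rw [map_cofactorForm, map_zero, hφz, hφr, hφr, hφr] at h
  simpa [cofactorForm, Pi.single_apply, s] using h

end Supported

namespace IsCycleMatrix

variable {σ K : Type*} [Field K] {q : ℕ} {x : Fin (2 * q + 3) → σ}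
  {z : Matrix (Fin (2 * q + 3)) (Fin (2 * q + 3)) (MvPolynomial σ K)}

lemma mem_supported (hz : IsCycleMatrix z x) (i j : Fin (2 * q + 3)) :
    z i j ∈ supported K (Set.range x) := by
  have hedge (i) : z i (i + 1) ∈ supported K (Set.range x) := by
    have hX : X (x i) ∈ supported K (Set.range x) :=
      Algebra.subset_adjoin ⟨x i, Set.mem_range_self i, rfl⟩
    rcases hz.edge_eq i with h | h
    · rwa [h]
    · rw [h]
      exact neg_mem hX
  by_cases hij : j = i + 1
  · rw [hij]
    exact hedge i
  by_cases hji : i = j + 1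
  · rw [hji, hz.isAlternating.skew j (j + 1)]
    exact neg_mem (hedge j)
  rw [hz.eq_zero hij hji]
  exact zero_mem _

lemma kill_insert_apply (hz : IsCycleMatrix z x) {F : Set (Fin (2 * q + 3))}
    {e i j : Fin (2 * q + 3)} (hij : ¬(i = e ∧ j = e + 1)) (hji : ¬(j = e ∧ i = e + 1)) :
    kill (x '' insert e F) (z i j) = kill (x '' F) (z i j) := by
  have hedge {i} (hi : i ≠ e) :
      kill (x '' insert e F) (z i (i + 1)) = kill (x '' F) (z i (i + 1)) := by
    have hX : kill (K := K) (x '' insert e F) (X (x i)) = kill (x '' F) (X (x i)) := by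
      have hmem : x i ∈ x '' insert e F ↔ x i ∈ x '' F := by
        rw [hz.injective.mem_set_image, hz.injective.mem_set_image, Set.mem_insert_iff,
          or_iff_right hi]
      by_cases h : x i ∈ x '' F
      · rw [kill_X_of_mem h, kill_X_of_mem (hmem.2 h)]
      · rw [kill_X_of_notMem h, kill_X_of_notMem (mt hmem.1 h)]
    rcases hz.edge_eq i with h | h
    · rw [h, hX]
    · rw [h, map_neg, map_neg, hX]
  by_cases h : j = i + 1
  · subst h
    exact hedge fun hi ↦ hij ⟨hi, hi ▸ rfl⟩
  by_cases h' : i = j + 1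
  · subst h'
    rw [hz.isAlternating.skew j (j + 1), map_neg, map_neg,
      hedge fun hj ↦ hji ⟨hj, hj ▸ rfl⟩]
  rw [hz.eq_zero h h', map_zero, map_zero]

lemma kill_insert_pf (hz : IsCycleMatrix z x) {F : Set (Fin (2 * q + 3))}
    {e : Fin (2 * q + 3)} {S : Finset (Fin (2 * q + 3))} (he : e ∉ S) :
    kill (x '' insert e F) (pf z S) = kill (x '' F) (pf z S) := by
  have hmap (D : Set σ) : kill D (pf z S) = pf (z.map (kill D)) S := map_pf (kill D).toRingHom z S
  rw [hmap, hmap]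
  refine pf_congr fun i hi j hj ↦ hz.kill_insert_apply ?_ ?_
  · rintro ⟨rfl, -⟩
    exact he hi
  · rintro ⟨rfl, -⟩
    exact he hj

lemma kill_insert_pfCofactor (hz : IsCycleMatrix z x) (F : Set (Fin (2 * q + 3)))
    (e : Fin (2 * q + 3)) :
    kill (x '' insert e F) (pfCofactor z e) = kill (x '' F) (pfCofactor z e) := by
  have hmap (D : Set σ) : kill (K := K) D (frontSign _ e Finset.univ) = frontSign _ e Finset.univ :=
    map_frontSign (kill D).toRingHom e _
  rw [pfCofactor, map_mul, map_mul, hmap, hmap, hz.kill_insert_pf (Finset.notMem_erase _ _)]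

lemma kill_insert_pfCofactor₃ (hz : IsCycleMatrix z x) (F : Set (Fin (2 * q + 3)))
    (i e k : Fin (2 * q + 3)) :
    kill (x '' insert e F) (pfCofactor₃ z i e k) = kill (x '' F) (pfCofactor₃ z i e k) := by
  have hmap (D : Set σ) (i : Fin (2 * q + 3)) (S) :
      kill (K := K) D (frontSign _ i S) = frontSign _ i S := map_frontSign (kill D).toRingHom i _
  rw [pfCofactor₃]
  split_ifs
  · simp only [map_mul, hmap]
    rw [hz.kill_insert_pf (by simp)]
  · rw [map_zero, map_zero]

lemma kill_pfCofactor_eq_zero_of_insert (hz : IsCycleMatrix z x) {F : Set (Fin (2 * q + 3))}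
    {e i : Fin (2 * q + 3)} (hp : kill (x '' insert e F) (pfCofactor z i) = 0)
    (hp₃ : kill (x '' insert e F) (pfCofactor₃ z i e (e + 1)) = 0) :
    kill (x '' F) (pfCofactor z i) = 0 := by
  rcases eq_or_ne e i with rfl | hei
  · rwa [← hz.kill_insert_pfCofactor]
  have hexp : pfCofactor z i = ∑ k, z e k * pfCofactor₃ z i e k := by
    have h := congrFun (mulVec_pfCofactor₃ hz.isAlternating i e) e
    rw [Pi.sub_apply, Pi.single_eq_same, Pi.single_eq_of_ne hei, sub_zero] at h
    exact h.symm
  rw [← hp, hexp, map_sum, map_sum]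
  refine Finset.sum_congr rfl fun k _ ↦ ?_
  rw [map_mul, map_mul, hz.kill_insert_pfCofactor₃]
  by_cases hk : k = e + 1
  · rw [hk, ← hz.kill_insert_pfCofactor₃, hp₃, mul_zero, mul_zero]
  · rw [hz.kill_insert_apply (fun h ↦ hk h.2) fun h ↦ hk (h.1.trans h.2)]

lemma exists_kill_pfCofactor_ne_zero (hz : IsCycleMatrix z x) (F : Finset (Fin (2 * q + 3)))
    (hF : ∀ F' ⊆ F, (∀ i, kill (x '' F') (pfCofactor z i) = 0) →
      ∀ i j k, kill (x '' F') (pfCofactor₃ z i j k) = 0) :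
    ∃ i, kill (x '' F) (pfCofactor z i) ≠ 0 := by
  induction F using Finset.induction_on with
  | empty =>
    refine ⟨0, ?_⟩
    rw [Finset.coe_empty, Set.image_empty,
      show kill (∅ : Set σ) (pfCofactor z 0) = pfCofactor z 0 by simp [kill]]
    exact hz.pfCofactor_ne_zero 0
  | insert e F _ ih =>
    by_contra! h
    obtain ⟨i, hi⟩ := ih fun F' hF' ↦ hF F' (hF'.trans (Finset.subset_insert e F))
    have hp₃ := hF _ subset_rfl h i e (e + 1)
    have hp := h i
    rw [Finset.coe_insert] at hp hp₃
    exact hi (hz.kill_pfCofactor_eq_zero_of_insert hp hp₃)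

lemma exists_mem_support_of_notMem (hz : IsCycleMatrix z x) {g : MvPolynomial σ K}
    (hg : g ∉ Ideal.span (Set.range (pfCofactor z))) :
    ∃ m ∈ g.support, ∀ i, ∃ s < q + 1, m (x (i + ((2 * s + 1 : ℕ) : Fin (2 * q + 3)))) = 0 := by
  by_contra! hcon
  refine hg ?_
  rw [g.as_sum]
  refine Ideal.sum_mem _ fun m hm ↦ ?_
  obtain ⟨i, hi⟩ := hcon m hm
  exact Ideal.mem_of_dvd _ ((hz.associated_pfCofactor i).dvd.trans
    (cycleMonomial_dvd_monomial hz.injective hi _)) (Ideal.subset_span ⟨i, rfl⟩)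

/- Some monomial `m` of `g` avoids the ideal of the cofactors. Setting to zero the edge variables
which do not occur in `m` kills that ideal but not `g`, so it kills the cofactor form; the same is
then true for every smaller set of edges that kills the ideal, down to the empty set, where it is
absurd. -/
theorem mem_of_cofactorForm_mul_mem (hz : IsCycleMatrix z x) {r : Fin 3 × Fin (2 * q + 3) → σ}
    (hr : Function.Injective r) (hrx : ∀ a i, r a ≠ x i) {g : MvPolynomial σ K}
    (hg : cofactorForm z (fun j ↦ X (r (0, j))) (fun j ↦ X (r (1, j))) (fun j ↦ X (r (2, j))) * g ∈
      Ideal.span (Set.range (pfCofactor z))) : g ∈ Ideal.span (Set.range (pfCofactor z)) := by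
  by_contra hmem
  obtain ⟨m, hm, hm0⟩ := hz.exists_mem_support_of_notMem hmem
  obtain ⟨i, hi⟩ := hz.exists_kill_pfCofactor_ne_zero
      (Finset.univ.filter fun e ↦ m (x e) = 0) fun F hF hpF i j k ↦ by
    set ρ := (kill (K := K) (x '' F)).toRingHom
    have hρr (c : Fin 3) : (ρ ∘ fun j ↦ X (r (c, j))) = fun j ↦ X (r (c, j)) := by
      ext1 j
      exact kill_X_of_notMem fun ⟨i, _, hi⟩ ↦ hrx _ i hi.symm
    have hform : ρ (cofactorForm z (fun j ↦ X (r (0, j))) (fun j ↦ X (r (1, j)))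
        (fun j ↦ X (r (2, j)))) = 0 := by
      have hle : Ideal.span (Set.range (pfCofactor z)) ≤ RingHom.ker ρ := by
        rw [Ideal.span_le]
        rintro _ ⟨i, rfl⟩
        exact hpF i
      have h := hle hg
      rw [RingHom.mem_ker, map_mul] at h
      refine (mul_eq_zero.1 h).resolve_right (kill_ne_zero hm ?_)
      rintro _ ⟨e, he, rfl⟩
      exact (Finset.mem_filter.1 (hF he)).2
    rw [map_cofactorForm, hρr, hρr, hρr] at hform
    refine (map_pfCofactor₃ ρ z i j k).trans
      (pfCofactor₃_eq_zero_of_cofactorForm_eq_zero hr (fun a b ↦ ?_) hform i j k)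
    refine supported_mono ?_ (kill_mem_supported (hz.mem_supported a b) _)
    rintro _ ⟨i, rfl⟩ ⟨a, ha⟩
    exact hrx a i ha
  obtain ⟨s, hs, h0⟩ := hm0 i
  refine hi ((associated_zero_iff_eq_zero _).1 ?_)
  have hmem : x (i + ((2 * s + 1 : ℕ) : Fin (2 * q + 3))) ∈
      x '' ((Finset.univ.filter fun e ↦ m (x e) = 0 : Finset _) : Set _) :=
    Set.mem_image_of_mem x (Finset.mem_filter.2 ⟨Finset.mem_univ _, h0⟩)
  rw [← kill_cycleMonomial_eq_zero hs hmem]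
  exact (hz.associated_pfCofactor i).map _

end IsCycleMatrix

end PfaffianPowers

namespace PfaffianPowers

open MvPolynomial Matrix
open scoped Fin.CommRing

section GenericBlock

lemma emb3_injective {n : ℕ} : Function.Injective (emb3 : Fin n → Fin (n + 3)) := fun _ _ h ↦
  Fin.ext (Nat.add_right_cancel (congrArg Fin.val h))

variable (K : Type) [Field K] {q : ℕ}

/-- The variable in position `{i, j}` of the generic block. -/
def blockVar {i j : Fin (2 * q + 3)} (h : i ≠ j) : PairVar (2 * q + 6) :=
  ⟨(emb3 (min i j), emb3 (max i j)), by
    have := min_lt_max.2 h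
    simp only [emb3]
    omega⟩

lemma blockVar_eq_iff {i j i' j' : Fin (2 * q + 3)} {h : i ≠ j} {h' : i' ≠ j'} :
    blockVar h = blockVar h' ↔ i = i' ∧ j = j' ∨ i = j' ∧ j = i' := by
  rw [← Sym2.eq_iff, ← Sym2.inf_eq_inf_and_sup_eq_sup]
  exact Subtype.ext_iff.trans
    (Prod.ext_iff.trans (and_congr emb3_injective.eq_iff emb3_injective.eq_iff))

/-- The variable in the position of the edge `{i, i + 1}` of the cycle. -/
def edgeVar (i : Fin (2 * q + 3)) : PairVar (2 * q + 6) :=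
  blockVar (left_eq_add.not.2 one_ne_zero : i ≠ i + 1)

lemma edgeVar_injective : Function.Injective (edgeVar (q := q)) := by
  intro i j h
  rcases blockVar_eq_iff.1 h with h | ⟨rfl, h⟩
  · exact h.1
  · refine absurd (Eq.trans ?_ h) (add_natCast_ne_self j two_ne_zero (by omega))
    push_cast
    ring

/-- The variable in position `j` of row `c` of the generic matrix. -/
def rowVar (a : Fin 3 × Fin (2 * q + 3)) : PairVar (2 * q + 6) :=
  ⟨(Fin.castLE (by omega) a.1, emb3 a.2), by
    simp only [emb3, Fin.val_castLE]
    omega⟩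

lemma rowVar_injective : Function.Injective (rowVar (q := q)) := fun _ _ h ↦
  Prod.ext (Fin.castLE_injective (by omega) (congrArg (fun v : PairVar (2 * q + 6) ↦ v.1.1) h))
    (emb3_injective (congrArg (fun v : PairVar (2 * q + 6) ↦ v.1.2) h))

lemma rowVar_ne_blockVar (a : Fin 3 × Fin (2 * q + 3)) {i j : Fin (2 * q + 3)} (hij : i ≠ j) :
    rowVar a ≠ blockVar hij := fun h ↦ by
  have h := congrArg (fun v : PairVar (2 * q + 6) ↦ (v.1.1 : ℕ)) h
  simp only [rowVar, blockVar, emb3, Fin.val_castLE] at h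
  omega

lemma genericRow_eq_X (c : Fin 3) (j : Fin (2 * q + 3)) :
    genericRow K q c j = X (rowVar (c, j)) :=
  dif_pos (rowVar (c, j)).2

lemma genericBlock_eq_X_or_neg_X {i j : Fin (2 * q + 3)} (h : i ≠ j) :
    genericBlock K q i j = X (blockVar h) ∨ genericBlock K q i j = -X (blockVar h) := by
  wlog hij : i < j generalizing i j
  · have hji := h.lt_or_gt.resolve_left hij
    have hvar : blockVar h = blockVar h.symm := blockVar_eq_iff.2 (Or.inr ⟨rfl, rfl⟩)
    rw [(isAlternating_genericBlock K q).skew j i, hvar, neg_inj, neg_eq_iff_eq_neg]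
    exact (this h.symm hji).symm
  · refine Or.inl ?_
    have hlt : (emb3 i : ℕ) < (emb3 j : ℕ) ∧ 3 ≤ (emb3 j : ℕ) := by
      simp only [emb3]
      omega
    rw [genericBlock, submatrix_apply, Xmat, dif_pos hlt]
    exact congrArg X (Subtype.ext (Prod.ext (congrArg emb3 (min_eq_left hij.le).symm)
      (congrArg emb3 (max_eq_right hij.le).symm)))

variable (q)

/-- The specialization of the generic block to the edges of a cycle. -/
noncomputable def cycleBlock : Matrix (Fin (2 * q + 3)) (Fin (2 * q + 3)) (CoordRing K q) :=
  fun i j ↦ if j = i + 1 ∨ i = j + 1 then genericBlock K q i j else 0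

lemma isCycleMatrix_cycleBlock : IsCycleMatrix (cycleBlock K q) edgeVar where
  isAlternating := by
    refine ⟨fun i j ↦ ?_, fun i ↦ ?_⟩
    · simp only [cycleBlock, or_comm (a := i = j + 1), (isAlternating_genericBlock K q).skew i j]
      split_ifs <;> simp
    · simp [cycleBlock]
  injective := edgeVar_injective
  edge_eq i := by
    rw [cycleBlock, if_pos (Or.inl rfl)]
    exact genericBlock_eq_X_or_neg_X K _
  eq_zero h h' := if_neg (not_or_intro h h')

open Classical in
/-- The weight counting the variables on the edges of the cycle. -/
noncomputable def edgeWeight (v : PairVar (2 * q + 6)) : ℕ :=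
  if v ∈ Set.range (edgeVar (q := q)) then 1 else 0

lemma hasLeadingForm_genericBlock (i j : Fin (2 * q + 3)) :
    HasLeadingForm (edgeWeight q) (genericBlock K q i j) 1 (cycleBlock K q i j) := by
  rcases eq_or_ne i j with rfl | hij
  · rw [(isAlternating_genericBlock K q).diag,
      (isCycleMatrix_cycleBlock K q).isAlternating.diag]
    exact .of_mem_weightLT (zero_mem _)
  have hX {f : CoordRing K q} {n : ℕ} (h : f = X (blockVar hij) ∨ f = -X (blockVar hij))
      (hn : edgeWeight q (blockVar hij) = n) : IsWeightedHomogeneous (edgeWeight q) f n := by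
    have := isWeightedHomogeneous_X K (edgeWeight q) (blockVar hij)
    rw [hn] at this
    rcases h with rfl | rfl
    exacts [this, (weightedHomogeneousSubmodule K _ n).neg_mem this]
  have hblock := genericBlock_eq_X_or_neg_X K hij
  rw [cycleBlock]
  split_ifs with h
  · refine .of_isWeightedHomogeneous (hX hblock (if_pos ?_))
    rcases h with rfl | rfl
    exacts [⟨i, rfl⟩, ⟨j, blockVar_eq_iff.2 (Or.inr ⟨rfl, rfl⟩)⟩]
  · refine .of_mem_weightLT (mem_weightLT.2 fun d hd ↦ ?_)
    rw [hX hblock (if_neg ?_) hd]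
    · exact one_pos
    · rintro ⟨k, hk⟩
      rcases blockVar_eq_iff.1 hk with ⟨rfl, rfl⟩ | ⟨rfl, rfl⟩
      exacts [h (Or.inl rfl), h (Or.inr rfl)]

lemma hasLeadingForm_pfCofactor_genericBlock (i : Fin (2 * q + 3)) :
    HasLeadingForm (edgeWeight q) (pfCofactor (genericBlock K q) i) (q + 1)
      (pfCofactor (cycleBlock K q) i) :=
  .pfCofactor (hasLeadingForm_genericBlock K q) (by rw [Fintype.card_fin]; ring) i

lemma pfCofactor_genericBlock_ne_zero (i : Fin (2 * q + 3)) :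
    pfCofactor (genericBlock K q) i ≠ 0 := fun h ↦
  (isCycleMatrix_cycleBlock K q).pfCofactor_ne_zero i
    ((h ▸ hasLeadingForm_pfCofactor_genericBlock K q i).unique (.of_mem_weightLT (zero_mem _)))

theorem isPfaffianExact_genericBlock : IsPfaffianExact (genericBlock K q) where
  isAlternating := isAlternating_genericBlock K q
  exists_mulVec_eq _ := exists_mulVec_eq_of_leadingForm (hasLeadingForm_genericBlock K q)
    (hasLeadingForm_pfCofactor_genericBlock K q)
    (pfCofactor_dotProduct_mulVec (isAlternating_genericBlock K q))
    fun _ ↦ (isCycleMatrix_cycleBlock K q).exists_mulVec_eq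
  exists_eq_smul _ := (isAlternating_genericBlock K q).exists_eq_smul_pfCofactor
    (pfCofactor_genericBlock_ne_zero K q 0)
    ((hasLeadingForm_pfCofactor_genericBlock K q 0).isRelPrime
      (hasLeadingForm_pfCofactor_genericBlock K q (0 + 1))
      ((isCycleMatrix_cycleBlock K q).pfCofactor_ne_zero 0)
      ((isCycleMatrix_cycleBlock K q).isRelPrime_pfCofactor 0))

theorem mem_blockIdeal_of_maxPfaffian_mul_mem {g : CoordRing K q}
    (hg : maxPfaffian K q * g ∈ blockIdeal K q) : g ∈ blockIdeal K q := by
  have hrow (c : Fin 3) : genericRow K q c = fun j ↦ X (rowVar (c, j)) :=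
    funext (genericRow_eq_X K c)
  have hwt (c : Fin 3) (j) : IsWeightedHomogeneous (edgeWeight q) (genericRow K q c j) 0 := by
    have := isWeightedHomogeneous_X K (edgeWeight q) (rowVar (c, j))
    rwa [edgeWeight, if_neg fun ⟨i, hi⟩ ↦ rowVar_ne_blockVar _ _ hi.symm, ← genericRow_eq_X] at this
  refine (hasLeadingIdeal_span_range (hasLeadingForm_genericBlock K q)
    (hasLeadingForm_pfCofactor_genericBlock K q)
    (pfCofactor_dotProduct_mulVec (isAlternating_genericBlock K q))
    fun _ ↦ (isCycleMatrix_cycleBlock K q).exists_mulVec_eq).mem_of_mul_mem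
    (.cofactorForm (hasLeadingForm_genericBlock K q) (Fintype.card_fin _) (hwt 0) (hwt 1) (hwt 2))
    (fun b hb ↦ ?_) hg
  rw [hrow, hrow, hrow] at hb
  exact (isCycleMatrix_cycleBlock K q).mem_of_cofactorForm_mul_mem rowVar_injective
    (fun a _ ↦ rowVar_ne_blockVar a _) hb

end GenericBlock

end PfaffianPowers

namespace PfaffianPowers

open MvPolynomial Matrix

section LinearForm

variable {ι R : Type*} [Fintype ι] [CommRing R] {p : ι → R}

lemma coeff_linearForm_mul {g : MvPolynomial ι R} {i : ι} {d : ι →₀ ℕ}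
    (hd : ∀ e ∈ g.support, e i ≤ d i) :
    coeff (d + Finsupp.single i 1) ((∑ j, C (p j) * X j) * g) = p i * coeff d g := by
  classical
  rw [Finset.sum_mul, coeff_sum, Finset.sum_eq_single i]
  · rw [mul_assoc, coeff_C_mul, add_comm d, coeff_X_mul]
  · intro j _ hji
    rw [mul_assoc, coeff_C_mul, coeff_X_mul']
    split_ifs
    · rw [notMem_support_iff.1 fun hmem ↦ ?_, mul_zero]
      have := hd _ hmem
      simp [hji] at this
    · exact mul_zero _
  · exact fun h ↦ absurd (Finset.mem_univ i) h

lemma eq_zero_of_linearForm_mul_eq_zero (hp : ∀ s, (∀ i, p i * s = 0) → s = 0)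
    {g : MvPolynomial ι R} (hg : (∑ j, C (p j) * X j) * g = 0) : g = 0 := by
  induction hn : g.support.card using Nat.strong_induction_on generalizing g with
  | _ n ih =>
    subst hn
    by_contra hg0
    -- A term of `g` of maximal degree in `X i` is killed by `p i`, so `p i * g` is shorter.
    have hpg (i : ι) : C (p i) * g = 0 := by
      obtain ⟨d, hd, hmax⟩ := g.support.exists_max_image (fun e ↦ e i) (support_nonempty.2 hg0)
      have hlead : p i * coeff d g = 0 := by rw [← coeff_linearForm_mul hmax, hg, coeff_zero]
      refine ih _ (Finset.card_lt_card ⟨fun e he ↦ ?_, fun h ↦ ?_⟩)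
        (by rw [mul_left_comm, hg, mul_zero]) rfl
      · rw [mem_support_iff, coeff_C_mul] at he
        exact mem_support_iff.2 (right_ne_zero_of_mul he)
      · exact mem_support_iff.1 (h hd) (by rw [coeff_C_mul, hlead])
    refine hg0 (MvPolynomial.ext _ _ fun d ↦ hp _ fun i ↦ ?_)
    rw [← coeff_C_mul, hpg, coeff_zero]

end LinearForm

section Colon

variable {ι R : Type*} [Fintype ι] [LinearOrder ι] [CommRing R] [IsDomain R]
  {z : Matrix ι ι R} {a b h : R}

namespace IsPfaffianExact

lemma mem_span_singleton (hz : IsPfaffianExact z) {i : ι} (hi : pfCofactor z i ≠ 0) (ha : a ≠ 0)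
    (hh : ∀ j, pfCofactor z j * h ∈ Ideal.span {a}) : h ∈ Ideal.span {a} := by
  simp only [Ideal.mem_span_singleton'] at hh ⊢
  choose c hc using hh
  replace hc : a • c = h • pfCofactor z := by
    ext j
    simp only [Pi.smul_apply, smul_eq_mul]
    rw [mul_comm, hc, mul_comm]
  obtain ⟨e, rfl⟩ := hz.exists_eq_smul c (smul_right_injective _ ha (by
    dsimp only
    rw [smul_zero, ← mulVec_smul, hc, mulVec_smul, mulVec_pfCofactor hz.isAlternating, smul_zero]))
  refine ⟨e, mul_right_cancel₀ hi ?_⟩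
  have := congrFun hc i
  simp only [Pi.smul_apply, smul_eq_mul] at this
  rw [← this]
  ring

lemma mem_span_pair (hz : IsPfaffianExact z) {i : ι} (hi : pfCofactor z i ≠ 0) (ha : a ≠ 0)
    (hab : ∀ g, b * g ∈ Ideal.span {a} → g ∈ Ideal.span {a})
    (hh : ∀ j, pfCofactor z j * h ∈ Ideal.span {a, b}) : h ∈ Ideal.span {a, b} := by
  simp only [Ideal.mem_span_pair] at hh ⊢
  choose c d hcd using hh
  replace hcd : a • c + b • d = h • pfCofactor z := by
    ext j
    simp only [Pi.add_apply, Pi.smul_apply, smul_eq_mul]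
    rw [mul_comm a, mul_comm b, hcd, mul_comm]
  have hsum : a • z *ᵥ c + b • z *ᵥ d = 0 := by
    rw [← mulVec_smul, ← mulVec_smul, ← mulVec_add, hcd, mulVec_smul,
      mulVec_pfCofactor hz.isAlternating, smul_zero]
  have hdiv (k : ι) : ∃ e, e * a = (z *ᵥ d) k := Ideal.mem_span_singleton'.1 <|
    hab _ <| Ideal.mem_span_singleton'.2 ⟨-(z *ᵥ c) k, by
      have := congrFun hsum k
      simp only [Pi.add_apply, Pi.smul_apply, smul_eq_mul, Pi.zero_apply] at this
      linear_combination -this⟩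
  choose e he using hdiv
  replace he : z *ᵥ d = a • e := funext fun k ↦ by rw [← he, Pi.smul_apply, smul_eq_mul, mul_comm]
  have hc : z *ᵥ c = -(b • e) := smul_right_injective _ ha (by
    dsimp only
    rw [eq_neg_of_add_eq_zero_left hsum, he, smul_neg, smul_comm])
  obtain ⟨u, rfl⟩ := hz.exists_mulVec_eq e (by
    refine mul_left_cancel₀ ha ?_
    rw [← smul_eq_mul, ← dotProduct_smul, ← he, pfCofactor_dotProduct_mulVec hz.isAlternating,
      mul_zero])
  obtain ⟨c', hc'⟩ := hz.exists_eq_smul (c + b • u) (by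
    rw [mulVec_add, mulVec_smul, hc, neg_add_cancel])
  obtain ⟨d', hd'⟩ := hz.exists_eq_smul (d - a • u) (by
    rw [mulVec_sub, mulVec_smul, he, sub_self])
  refine ⟨c', d', mul_right_cancel₀ hi ?_⟩
  have h0 := congrFun hcd i
  have h1 := congrFun hc' i
  have h2 := congrFun hd' i
  simp only [Pi.add_apply, Pi.sub_apply, Pi.smul_apply, smul_eq_mul] at h0 h1 h2
  linear_combination h0 - a * h1 - b * h2

end IsPfaffianExact

end Colon

section SupportedCoefficients

variable {σ ι K : Type*} [CommRing K] [Fintype ι] {r : ι → σ} {p : ι → MvPolynomial σ K}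
  {S : Set (MvPolynomial σ K)}

lemma mem_span_of_linearForm_mul_mem (hr : Function.Injective r)
    (hp : ∀ i, p i ∈ supported K (Set.range r)ᶜ)
    (hS : S ⊆ supported K (Set.range r)ᶜ)
    (hcolon : ∀ h, (∀ i, p i * h ∈ Ideal.span S) → h ∈ Ideal.span S) {g : MvPolynomial σ K}
    (hg : (∑ i, p i * X (r i)) * g ∈ Ideal.span S) : g ∈ Ideal.span S := by
  -- `φ` separates the variables `X (r i)` from the coefficient ring, then reduces modulo `S`.
  let φ : MvPolynomial σ K →ₐ[K] MvPolynomial ι (MvPolynomial σ K ⧸ Ideal.span S) :=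
    aeval (Function.extend r X fun u ↦ C (Ideal.Quotient.mk _ (X u)))
  have hφr (i : ι) : φ (X (r i)) = X i := by rw [aeval_X, hr.extend_apply]
  have hφ {f : MvPolynomial σ K} (hf : f ∈ supported K (Set.range r)ᶜ) :
      φ f = C (Ideal.Quotient.mk _ f) := by
    refine Algebra.adjoin_le (S := AlgHom.equalizer φ
      ((Algebra.ofId _ _).restrictScalars K |>.comp (Ideal.Quotient.mkₐ K (Ideal.span S)))) ?_ hf
    rintro _ ⟨u, hu, rfl⟩
    exact (aeval_X _ u).trans (Function.extend_apply' _ _ u hu)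
  have hback (f : MvPolynomial σ K) :
      aeval (fun i ↦ Ideal.Quotient.mk (Ideal.span S) (X (r i))) (φ f) =
        Ideal.Quotient.mk (Ideal.span S) f := by
    refine DFunLike.congr_fun (show ((aeval fun i ↦ Ideal.Quotient.mk (Ideal.span S)
      (X (r i))).restrictScalars K).comp φ = Ideal.Quotient.mkₐ K _ from algHom_ext fun u ↦ ?_) f
    rw [AlgHom.comp_apply, AlgHom.restrictScalars_apply]
    by_cases hu : u ∈ Set.range r
    · obtain ⟨i, rfl⟩ := hu
      rw [hφr, aeval_X, Ideal.Quotient.mkₐ_eq_mk]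
    · rw [aeval_X, Function.extend_apply' _ _ u hu, aeval_C]
      rfl
  have hker {f : MvPolynomial σ K} (hf : f ∈ Ideal.span S) : φ f = 0 := by
    refine (Ideal.span_le (I := RingHom.ker φ)).2 (fun s hs ↦ ?_) hf
    rw [SetLike.mem_coe, RingHom.mem_ker, hφ (hS hs),
      Ideal.Quotient.eq_zero_iff_mem.2 (Ideal.subset_span hs), map_zero]
  have hφg : φ g = 0 := by
    refine eq_zero_of_linearForm_mul_eq_zero (p := fun i ↦ Ideal.Quotient.mk _ (p i)) ?_ ?_
    · intro s hs
      obtain ⟨h, rfl⟩ := Ideal.Quotient.mk_surjective s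
      simp only [← map_mul, Ideal.Quotient.eq_zero_iff_mem] at hs ⊢
      exact hcolon h hs
    · rw [← hker hg, map_mul, map_sum]
      simp only [map_mul, hφr, hφ (hp _)]
  rw [← Ideal.Quotient.eq_zero_iff_mem, ← hback, hφg, map_zero]

end SupportedCoefficients

section RowIdeal

variable (K : Type) [Field K] (q : ℕ)

lemma pfCofactor_mem {ι A R : Type*} [Fintype ι] [LinearOrder ι] [CommRing R] [CommRing A]
    [Algebra R A] {z : Matrix ι ι A} {T : Subalgebra R A} (hz : ∀ i j, z i j ∈ T) (i : ι) :
    pfCofactor z i ∈ T := by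
  have hmap := map_pfCofactor (T.val : T →+* A) (fun i j ↦ ⟨z i j, hz i j⟩) i
  exact hmap ▸ SetLike.coe_mem _

lemma rowPfaffian_eq_sum (c : Fin 3) :
    rowPfaffian K q c = ∑ j, pfCofactor (genericBlock K q) j * X (rowVar (c, j)) := by
  rw [rowPfaffian, dotProduct]
  exact Finset.sum_congr rfl fun j _ ↦ by rw [genericRow_eq_X, mul_comm]

lemma pfCofactor_genericBlock_mem_supported (c : Fin 3) (i : Fin (2 * q + 3)) :
    pfCofactor (genericBlock K q) i ∈
      supported K (Set.range fun j : Fin (2 * q + 3) ↦ rowVar (c, j))ᶜ := by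
  refine pfCofactor_mem (fun i j ↦ ?_) i
  rcases eq_or_ne i j with rfl | hij
  · rw [(isAlternating_genericBlock K q).diag]
    exact zero_mem _
  have hX : X (blockVar hij) ∈
      supported K (Set.range fun j : Fin (2 * q + 3) ↦ rowVar (c, j))ᶜ := by
    rw [X_mem_supported]
    rintro ⟨k, hk⟩
    exact rowVar_ne_blockVar _ hij hk
  rcases genericBlock_eq_X_or_neg_X K hij with h | h
  exacts [h ▸ hX, h ▸ neg_mem hX]

lemma rowPfaffian_mem_supported {c c' : Fin 3} (h : c' ≠ c) :
    rowPfaffian K q c' ∈ supported K (Set.range fun j : Fin (2 * q + 3) ↦ rowVar (c, j))ᶜ := by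
  rw [rowPfaffian_eq_sum]
  refine sum_mem fun j _ ↦ mul_mem (pfCofactor_genericBlock_mem_supported K q c j) ?_
  rw [X_mem_supported]
  rintro ⟨k, hk⟩
  exact h (congrArg Prod.fst (rowVar_injective hk)).symm

lemma rowPfaffian_ne_zero (c : Fin 3) : rowPfaffian K q c ≠ 0 := fun h ↦ by
  have := mem_span_of_linearForm_mul_mem (K := K) (S := ∅) (g := 1)
    (r := fun j : Fin (2 * q + 3) ↦ rowVar (c, j))
    (rowVar_injective.comp (Prod.mk_right_injective c))
    (pfCofactor_genericBlock_mem_supported K q c) (Set.empty_subset _) (fun h hh ↦ ?_)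
    (by rw [← rowPfaffian_eq_sum, h, zero_mul]; exact zero_mem _)
  · simp at this
  · simp only [Ideal.span_empty, Ideal.mem_bot] at hh ⊢
    exact (mul_eq_zero.1 (hh 0)).resolve_left (pfCofactor_genericBlock_ne_zero K q 0)

variable {K q} {g : CoordRing K q}

lemma mem_span_rowPfaffian_of_mul_mem {c : Fin 3} {s : Set (Fin 3)} (hc : c ∉ s)
    (hcolon : ∀ h, (∀ j, pfCofactor (genericBlock K q) j * h ∈
      Ideal.span (rowPfaffian K q '' s)) → h ∈ Ideal.span (rowPfaffian K q '' s))
    (hg : rowPfaffian K q c * g ∈ Ideal.span (rowPfaffian K q '' s)) :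
    g ∈ Ideal.span (rowPfaffian K q '' s) := by
  rw [rowPfaffian_eq_sum] at hg
  refine mem_span_of_linearForm_mul_mem (rowVar_injective.comp (Prod.mk_right_injective c))
    (pfCofactor_genericBlock_mem_supported K q c) ?_ hcolon hg
  rintro _ ⟨c', hc', rfl⟩
  exact rowPfaffian_mem_supported K q (ne_of_mem_of_not_mem hc' hc)

lemma mem_span_of_rowPfaffian_one_mul_mem
    (hg : rowPfaffian K q 1 * g ∈ Ideal.span {rowPfaffian K q 0}) :
    g ∈ Ideal.span {rowPfaffian K q 0} := by
  rw [← Set.image_singleton] at hg ⊢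
  refine mem_span_rowPfaffian_of_mul_mem (by simp) (fun h hh ↦ ?_) hg
  rw [Set.image_singleton] at hh ⊢
  exact (isPfaffianExact_genericBlock K q).mem_span_singleton
    (pfCofactor_genericBlock_ne_zero K q 0) (rowPfaffian_ne_zero K q 0) hh

lemma mem_span_of_rowPfaffian_two_mul_mem
    (hg : rowPfaffian K q 2 * g ∈ Ideal.span {rowPfaffian K q 0, rowPfaffian K q 1}) :
    g ∈ Ideal.span {rowPfaffian K q 0, rowPfaffian K q 1} := by
  rw [← Set.image_pair] at hg ⊢
  refine mem_span_rowPfaffian_of_mul_mem (by simp) (fun h hh ↦ ?_) hg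
  rw [Set.image_pair] at hh ⊢
  exact (isPfaffianExact_genericBlock K q).mem_span_pair (pfCofactor_genericBlock_ne_zero K q 0)
    (rowPfaffian_ne_zero K q 0) (fun _ ↦ mem_span_of_rowPfaffian_one_mul_mem) hh

end RowIdeal

end PfaffianPowers

namespace PfaffianPowers

open Matrix

/-! ### Powers of quasi-regular ideals -/

section QuasiRegular

variable {R : Type*} [CommRing R] {J : Ideal R} {a : R}

lemma sup_pow_succ (J L : Ideal R) (j : ℕ) :
    (J ⊔ L) ^ (j + 1) = J ^ (j + 1) ⊔ L * (J ⊔ L) ^ j := by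
  refine le_antisymm ?_ (sup_le (Ideal.pow_right_mono le_sup_left _) ?_)
  · induction j with
    | zero => simp
    | succ j ih =>
      rw [pow_succ' (J ⊔ L), Ideal.sup_mul]
      refine sup_le ?_ le_sup_right
      calc J * (J ⊔ L) ^ (j + 1) ≤ J * (J ^ (j + 1) ⊔ L * (J ⊔ L) ^ j) := Ideal.mul_mono_right ih
        _ = J ^ (j + 2) ⊔ L * (J * (J ⊔ L) ^ j) := by
          rw [Ideal.mul_sup, ← pow_succ', mul_left_comm]
        _ ≤ J ^ (j + 2) ⊔ L * (J ⊔ L) ^ (j + 1) := by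
          rw [pow_succ' (J ⊔ L)]
          exact sup_le_sup_left (Ideal.mul_mono_right (Ideal.mul_mono_left le_sup_left)) _
  · rw [pow_succ']
    exact Ideal.mul_mono_left le_sup_right

/-- The classes of the elements `M x` form an `R ⧸ Q`-basis of the submodule of `R ⧸ E` which they
generate. -/
structure IsFreeModulo {ι : Type*} [Fintype ι] (E Q : Ideal R) (M : ι → R) : Prop where
  mul_mem : ∀ x, ∀ f ∈ Q, M x * f ∈ E
  mem_of_dotProduct_mem : ∀ c : ι → R, M ⬝ᵥ c ∈ E → ∀ x, c x ∈ Q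

/-- An ideal `J` is quasi-regular if every `J ^ j ⧸ J ^ (j + 1)` is free over `R ⧸ J`. The basis is
asked to lift to generators of `J ^ j` lying in `𝒢 j`, where `𝒢 j` is meant to be a set of
homogeneous elements. -/
def IsQuasiRegular (𝒢 : ℕ → Set R) (J : Ideal R) : Prop :=
  ∀ j, ∃ (ι : Type) (_ : Fintype ι) (M : ι → R), (∀ x, M x ∈ 𝒢 j) ∧
    Ideal.span (Set.range M) = J ^ j ∧ IsFreeModulo (J ^ (j + 1)) J M

variable {𝒢 : ℕ → Set R}

lemma isFreeModulo_one (J : Ideal R) : IsFreeModulo (J ^ 1) J fun _ : Unit ↦ (1 : R) where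
  mul_mem _ f hf := by simpa using hf
  mem_of_dotProduct_mem c hc _ := by simpa [dotProduct] using hc

lemma isQuasiRegular_bot (h1 : 1 ∈ 𝒢 0) : IsQuasiRegular 𝒢 (⊥ : Ideal R)
  | 0 => ⟨Unit, inferInstance, fun _ ↦ 1, fun _ ↦ h1, by simp, isFreeModulo_one _⟩
  | j + 1 => ⟨Empty, inferInstance, Empty.elim, fun x ↦ x.elim, by
      rw [Set.range_eq_empty, Ideal.span_empty, ← Ideal.zero_eq_bot, zero_pow j.succ_ne_zero],
      fun x ↦ x.elim, fun _ _ x ↦ x.elim⟩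

lemma IsQuasiRegular.mem_pow_of_mul_mem (hJ : IsQuasiRegular 𝒢 J) (ha : ∀ x, a * x ∈ J → x ∈ J)
    (j : ℕ) {x : R} (hx : a * x ∈ J ^ j) : x ∈ J ^ j := by
  induction j with
  | zero => simp
  | succ j ih =>
    obtain ⟨ι, _, M, -, hM, hfree⟩ := hJ j
    have hxj : x ∈ J ^ j := ih (Ideal.pow_le_pow_right j.le_succ hx)
    obtain ⟨c, rfl⟩ := mem_span_range_iff_dotProduct.1 (hM ▸ hxj)
    have hc : ∀ i, a * c i ∈ J := hfree.mem_of_dotProduct_mem (a • c) (by rwa [dotProduct_smul])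
    exact Ideal.sum_mem _ fun i _ ↦ hfree.mul_mem i _ (ha _ (hc i))

lemma span_range_sumElim_mul {ι κ : Type*} (M : ι → R) (N : κ → R) (a : R) :
    Ideal.span (Set.range (Sum.elim M (a • N))) =
      Ideal.span (Set.range M) ⊔ Ideal.span {a} * Ideal.span (Set.range N) := by
  rw [Set.Sum.elim_range, Ideal.span_union, Ideal.span_mul_span', Set.singleton_mul]
  congr 2
  exact Set.range_comp (a * ·) N

lemma IsFreeModulo.mem_of_sumElim_dotProduct_mem {ι κ : Type*} [Fintype ι] [Fintype κ]
    {M : ι → R} {N : κ → R} {j : ℕ}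
    (hM : IsFreeModulo (J ^ (j + 2)) J M) (hspan : Ideal.span (Set.range M) = J ^ (j + 1))
    (ha : ∀ x, a * x ∈ J ^ (j + 1) → x ∈ J ^ (j + 1))
    (hN : IsFreeModulo ((J ⊔ Ideal.span {a}) ^ (j + 1)) (J ⊔ Ideal.span {a}) N) :
    ∀ c, Sum.elim M (a • N) ⬝ᵥ c ∈ (J ⊔ Ideal.span {a}) ^ (j + 2) →
      ∀ x, c x ∈ J ⊔ Ideal.span {a} := by
  intro c hc
  have haL : a ∈ J ⊔ Ideal.span {a} := Ideal.mem_sup_right (Ideal.mem_span_singleton_self a)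
  rw [← Sum.elim_comp_inl_inr c, sumElim_dotProduct_sumElim, smul_dotProduct, smul_eq_mul,
    sup_pow_succ, Submodule.mem_sup] at hc
  obtain ⟨u, hu, _, hav, huv⟩ := hc
  obtain ⟨v, hv, rfl⟩ := Ideal.mem_span_singleton_mul.1 hav
  have hy : N ⬝ᵥ (c ∘ Sum.inr) - v ∈ J ^ (j + 1) := by
    refine ha _ ?_
    rw [show a * (N ⬝ᵥ (c ∘ Sum.inr) - v) = u - M ⬝ᵥ (c ∘ Sum.inl) by
      linear_combination -huv]
    exact sub_mem (Ideal.pow_le_pow_right j.succ.le_succ hu)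
      (hspan ▸ mem_span_range_iff_dotProduct.2 ⟨_, rfl⟩)
  have hr : ∀ x, c (Sum.inr x) ∈ J ⊔ Ideal.span {a} := hN.mem_of_dotProduct_mem _ <|
    sub_add_cancel (N ⬝ᵥ (c ∘ Sum.inr)) v ▸ add_mem (Ideal.pow_right_mono le_sup_left _ hy) hv
  obtain ⟨e, he⟩ := mem_span_range_iff_dotProduct.1 (by rwa [hspan])
  have hl : ∀ x, (c ∘ Sum.inl + a • e) x ∈ J := hM.mem_of_dotProduct_mem _ <| by
    rw [dotProduct_add, dotProduct_smul, he, smul_eq_mul]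
    convert hu using 1
    linear_combination -huv
  rintro (x | x)
  · simpa using sub_mem (Ideal.mem_sup_left (hl x)) (Ideal.mul_mem_right (e x) _ haL)
  · exact hr x

lemma IsQuasiRegular.sup_span_singleton (hJ : IsQuasiRegular 𝒢 J) (h1 : 1 ∈ 𝒢 0)
    (hmul : ∀ j, ∀ x ∈ 𝒢 j, a * x ∈ 𝒢 (j + 1)) (ha : ∀ x, a * x ∈ J → x ∈ J) :
    IsQuasiRegular 𝒢 (J ⊔ Ideal.span {a}) := by
  intro j
  induction j with
  | zero => exact ⟨Unit, inferInstance, fun _ ↦ 1, fun _ ↦ h1, by simp, isFreeModulo_one _⟩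
  | succ j ih =>
    obtain ⟨κ, _, N, hNG, hNspan, hN⟩ := ih
    obtain ⟨ι, _, M, hMG, hMspan, hM⟩ := hJ (j + 1)
    have hspan : Ideal.span (Set.range (Sum.elim M (a • N))) = (J ⊔ Ideal.span {a}) ^ (j + 1) := by
      rw [span_range_sumElim_mul, hMspan, hNspan, sup_pow_succ]
    refine ⟨ι ⊕ κ, inferInstance, Sum.elim M (a • N), ?_, hspan, fun x f hf ↦ ?_,
      hM.mem_of_sumElim_dotProduct_mem hMspan (fun x ↦ hJ.mem_pow_of_mul_mem ha _) hN⟩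
    · rintro (x | x)
      exacts [hMG x, hmul j _ (hNG x)]
    · rw [pow_succ _ (j + 1), ← hspan]
      exact Ideal.mul_mem_mul (Ideal.subset_span ⟨x, rfl⟩) hf

end QuasiRegular

section RowIdeal

variable (K : Type) [Field K] (q : ℕ)

lemma rowIdeal_eq_sup : rowIdeal K q = ((⊥ ⊔ Ideal.span {rowPfaffian K q 0}) ⊔
    Ideal.span {rowPfaffian K q 1}) ⊔ Ideal.span {rowPfaffian K q 2} := by
  rw [bot_sup_eq, ← Ideal.span_union, ← Ideal.span_union, rowIdeal]
  congr 1
  ext x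
  simp only [Set.mem_range, Fin.exists_fin_succ, IsEmpty.exists_iff, Set.mem_union,
    Set.mem_singleton_iff, or_false, eq_comm, or_assoc, Fin.succ_zero_eq_one, Fin.succ_one_eq_two]

variable {K q} in
lemma rowIdeal_induction {C : ℕ → Ideal (CoordRing K q) → Prop} (bot : C 0 ⊥)
    (sup_span_singleton : ∀ (r : ℕ) (J : Ideal (CoordRing K q)) (a : CoordRing K q),
      a.IsHomogeneous (q + 2) → (∀ x, a * x ∈ J → x ∈ J) → C r J →
        C (r + 1) (J ⊔ Ideal.span {a})) :
    C 3 (rowIdeal K q) := by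
  have hdeg := isHomogeneous_rowPfaffian K q
  rw [rowIdeal_eq_sup]
  refine sup_span_singleton 2 _ _ (hdeg 2) (fun x hx ↦ ?_) <|
    sup_span_singleton 1 _ _ (hdeg 1) (fun x hx ↦ ?_) <|
    sup_span_singleton 0 _ _ (hdeg 0) (fun x hx ↦ ?_) bot
  · rw [bot_sup_eq, ← Ideal.span_union] at hx ⊢
    exact mem_span_of_rowPfaffian_two_mul_mem hx
  · rw [bot_sup_eq] at hx ⊢
    exact mem_span_of_rowPfaffian_one_mul_mem hx
  · exact (mul_eq_zero.1 hx).resolve_left (rowPfaffian_ne_zero K q 0)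

lemma maxPfaffian_mul_mem_rowIdeal {f : CoordRing K q} (hf : f ∈ blockIdeal K q) :
    maxPfaffian K q * f ∈ rowIdeal K q := by
  suffices blockIdeal K q ≤ (rowIdeal K q).colon {maxPfaffian K q} by
    simpa [mul_comm] using Submodule.mem_colon_singleton.1 (this hf)
  rw [blockIdeal, Ideal.span_le]
  rintro _ ⟨m, rfl⟩
  refine Submodule.mem_colon_singleton.2 ?_
  rw [smul_eq_mul, mul_comm (pfCofactor _ m)]
  exact cofactorForm_mul_mem_span (isAlternating_genericBlock K q)
    (mem_nonZeroDivisors_of_ne_zero (pfCofactor_genericBlock_ne_zero K q m)) _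

end RowIdeal

end PfaffianPowers

namespace PfaffianPowers

/-! ### Graded free resolutions -/

section Gradings

variable {A M M' M'' N N' N'' : Type*} [CommRing A]
  [AddCommGroup M] [Module A M] [AddCommGroup M'] [Module A M'] [AddCommGroup M''] [Module A M'']
  [AddCommGroup N] [Module A N] [AddCommGroup N'] [Module A N'] [AddCommGroup N''] [Module A N'']
  {ℳ : ℤ → AddSubgroup M} {ℳ' : ℤ → AddSubgroup M'} {ℳ'' : ℤ → AddSubgroup M''}
  {𝒩 : ℤ → AddSubgroup N} {𝒩' : ℤ → AddSubgroup N'} {𝒩'' : ℤ → AddSubgroup N''}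

/-- A homomorphism of degree zero between modules with graded pieces `ℳ` and `𝒩`. -/
def IsGradedHom (ℳ : ℤ → AddSubgroup M) (𝒩 : ℤ → AddSubgroup N) (f : M →ₗ[A] N) : Prop :=
  ∀ j, ∀ x ∈ ℳ j, f x ∈ 𝒩 j

/-- A homomorphism of degree zero which is surjective in every degree. -/
structure IsGradedSurjection (ℳ : ℤ → AddSubgroup M) (𝒩 : ℤ → AddSubgroup N) (p : M →ₗ[A] N) :
    Prop where
  isGradedHom : IsGradedHom ℳ 𝒩 p
  exists_preimage : ∀ j, ∀ y ∈ 𝒩 j, ∃ x ∈ ℳ j, p x = y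

/-- A short exact sequence of graded modules, with maps `i` and `p` of degree zero. -/
structure GradedShortExact (ℳ' : ℤ → AddSubgroup M') (ℳ : ℤ → AddSubgroup M)
    (ℳ'' : ℤ → AddSubgroup M'') (i : M' →ₗ[A] M) (p : M →ₗ[A] M'') : Prop where
  injective : Function.Injective i
  exact : Function.Exact i p
  map_mem_iff : ∀ j x, i x ∈ ℳ j ↔ x ∈ ℳ' j
  isGradedSurjection : IsGradedSurjection ℳ ℳ'' p

/-- The grading which a submodule inherits from the ambient graded module. -/
def inducedPieces (ℳ : ℤ → AddSubgroup M) (N : Submodule A M) : ℤ → AddSubgroup N :=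
  fun j ↦ (ℳ j).comap N.subtype.toAddMonoidHom

lemma IsGradedHom.comp {q : M'' →ₗ[A] N} {p : M →ₗ[A] M''} (hq : IsGradedHom ℳ'' 𝒩 q)
    (hp : IsGradedHom ℳ ℳ'' p) : IsGradedHom ℳ 𝒩 (q ∘ₗ p) :=
  fun j x hx ↦ hq j _ (hp j x hx)

lemma IsGradedSurjection.comp {q : M'' →ₗ[A] N} {p : M →ₗ[A] M''}
    (hq : IsGradedSurjection ℳ'' 𝒩 q) (hp : IsGradedSurjection ℳ ℳ'' p) :
    IsGradedSurjection ℳ 𝒩 (q ∘ₗ p) where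
  isGradedHom := hq.isGradedHom.comp hp.isGradedHom
  exists_preimage j y hy := by
    obtain ⟨z, hz, rfl⟩ := hq.exists_preimage j y hy
    obtain ⟨x, hx, rfl⟩ := hp.exists_preimage j z hz
    exact ⟨x, hx, rfl⟩

section NineLemma

variable {i : M' →ₗ[A] M} {p : M →ₗ[A] M''} {k : N' →ₗ[A] N} {r : N →ₗ[A] N''}
  {π' : N' →ₗ[A] M'} {π : N →ₗ[A] M} {π'' : N'' →ₗ[A] M''}

lemma GradedShortExact.exists_eq_of_map_eq_zero (h : GradedShortExact ℳ' ℳ ℳ'' i p) {j : ℤ}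
    {x : M} (hx : x ∈ ℳ j) (hpx : p x = 0) : ∃ y ∈ ℳ' j, i y = x := by
  obtain ⟨y, rfl⟩ := (h.exact x).1 hpx
  exact ⟨y, (h.map_mem_iff j y).1 hx, rfl⟩

variable (hM : GradedShortExact ℳ' ℳ ℳ'' i p) (hN : GradedShortExact 𝒩' 𝒩 𝒩'' k r)
  (hπ' : IsGradedSurjection 𝒩' ℳ' π') (hπ : IsGradedHom 𝒩 ℳ π)
  (hki : π ∘ₗ k = i ∘ₗ π') (hrp : π'' ∘ₗ r = p ∘ₗ π)
include hM hN hπ' hπ hki hrp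

lemma GradedShortExact.isGradedSurjection_middle (hπ'' : IsGradedSurjection 𝒩'' ℳ'' π'') :
    IsGradedSurjection 𝒩 ℳ π where
  isGradedHom := hπ
  exists_preimage j x hx := by
    obtain ⟨f, hfj, hf⟩ := (hπ''.comp hN.isGradedSurjection).exists_preimage j _
      (hM.isGradedSurjection.isGradedHom j x hx)
    obtain ⟨y, hy, hyx⟩ := hM.exists_eq_of_map_eq_zero (sub_mem hx (hπ j f hfj))
      (by rw [map_sub, ← hf, hrp, LinearMap.comp_apply, sub_self])
    obtain ⟨f', hf', rfl⟩ := hπ'.exists_preimage j y hy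
    refine ⟨k f' + f, add_mem ((hN.map_mem_iff j f').2 hf') hfj, ?_⟩
    rw [map_add, ← LinearMap.comp_apply, hki, LinearMap.comp_apply, hyx, sub_add_cancel]

lemma GradedShortExact.exists_ker :
    ∃ (k' : LinearMap.ker π' →ₗ[A] LinearMap.ker π) (r' : LinearMap.ker π →ₗ[A] LinearMap.ker π''),
      GradedShortExact (inducedPieces 𝒩' (LinearMap.ker π')) (inducedPieces 𝒩 (LinearMap.ker π))
        (inducedPieces 𝒩'' (LinearMap.ker π'')) k' r' := by
  have hki' (x) : π (k x) = i (π' x) := DFunLike.congr_fun hki x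
  have hrp' (x) : π'' (r x) = p (π x) := DFunLike.congr_fun hrp x
  refine ⟨k.restrict fun x hx ↦ ?_, r.restrict fun x hx ↦ ?_, ?_, ?_, ?_, ?_, ?_⟩
  · rw [LinearMap.mem_ker] at hx ⊢
    rw [hki', hx, map_zero]
  · rw [LinearMap.mem_ker] at hx ⊢
    rw [hrp', hx, map_zero]
  · exact fun x y hxy ↦ Subtype.ext (hN.injective (congrArg Subtype.val hxy))
  · rintro ⟨x, hx⟩
    refine ⟨fun h ↦ ?_, ?_⟩
    · obtain ⟨y, rfl⟩ := (hN.exact x).1 (congrArg Subtype.val h)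
      refine ⟨⟨y, hM.injective ?_⟩, rfl⟩
      rw [← hki', map_zero, hx]
    · rintro ⟨y, hy⟩
      exact Subtype.ext ((hN.exact x).2 ⟨y, congrArg Subtype.val hy⟩)
  · exact fun j x ↦ hN.map_mem_iff j x
  · exact fun j x hx ↦ hN.isGradedSurjection.isGradedHom j x hx
  · rintro j ⟨y, hy⟩ hyj
    obtain ⟨f, hf, rfl⟩ := hN.isGradedSurjection.exists_preimage j y hyj
    obtain ⟨z, hz, hzf⟩ := hM.exists_eq_of_map_eq_zero (hπ j f hf) (by rw [← hrp']; exact hy)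
    obtain ⟨f', hf', rfl⟩ := hπ'.exists_preimage j z hz
    refine ⟨⟨f - k f', ?_⟩, sub_mem hf ((hN.map_mem_iff j f').2 hf'), Subtype.ext ?_⟩
    · rw [LinearMap.mem_ker, map_sub, hki', hzf, sub_self]
    · change r (f - k f') = r f
      rw [map_sub, hN.exact.apply_apply_eq_zero, sub_zero]

end NineLemma

lemma GradedShortExact.exists_ker_comp {i : M' →ₗ[A] M} {p : M →ₗ[A] M''} {π : N →ₗ[A] M}
    (h : GradedShortExact ℳ' ℳ ℳ'' i p) (hπ : IsGradedSurjection 𝒩 ℳ π) :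
    ∃ (i' : LinearMap.ker π →ₗ[A] LinearMap.ker (p ∘ₗ π)) (p' : LinearMap.ker (p ∘ₗ π) →ₗ[A] M'),
      GradedShortExact (inducedPieces 𝒩 (LinearMap.ker π))
        (inducedPieces 𝒩 (LinearMap.ker (p ∘ₗ π))) ℳ' i' p' := by
  have hrange (x : LinearMap.ker (p ∘ₗ π)) : π x ∈ LinearMap.range i := (h.exact _).1 x.2
  let p' : LinearMap.ker (p ∘ₗ π) →ₗ[A] M' :=
    (π ∘ₗ Submodule.subtype _).codRestrictOfInjective i h.injective hrange
  have hp' (x) : i (p' x) = π x := LinearMap.codRestrictOfInjective_comp_apply _ _ h.injective _ x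
  refine ⟨Submodule.inclusion (LinearMap.ker_le_ker_comp π p), p', ?_, fun x ↦ ?_, fun j x ↦ .rfl,
    fun j x hx ↦ ?_, fun j y hy ↦ ?_⟩
  · exact Submodule.inclusion_injective _
  · rw [← map_eq_zero_iff i h.injective, hp']
    exact ⟨fun hx ↦ ⟨⟨x, hx⟩, rfl⟩, by rintro ⟨y, rfl⟩; exact y.2⟩
  · rw [← h.map_mem_iff, hp']
    exact hπ.isGradedHom j x hx
  · obtain ⟨f, hf, hfy⟩ := hπ.exists_preimage j _ ((h.map_mem_iff j y).2 hy)
    refine ⟨⟨f, ?_⟩, hf, h.injective (by rw [hp', hfy])⟩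
    rw [LinearMap.mem_ker, LinearMap.comp_apply, hfy, h.exact.apply_apply_eq_zero]

end Gradings

section FreeModules

variable {A S ι κ : Type*} [CommRing A] [SetLike S A] [AddSubgroupClass S A] (𝒜 : ℤ → S)
  {δ : ι → ℤ} {ε : κ → ℤ}

/-- The pieces of the free module `⨁ k, A(-δ k)`, whose `k`-th generator has degree `δ k`. -/
def freePieces (δ : ι → ℤ) (j : ℤ) : AddSubgroup (ι →₀ A) where
  carrier := {f | ∀ k, f k ∈ 𝒜 (j - δ k)}
  add_mem' hf hg k := add_mem (hf k) (hg k)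
  zero_mem' _ := zero_mem _
  neg_mem' hf k := neg_mem (hf k)

variable {𝒜}

lemma mem_freePieces {j : ℤ} {f : ι →₀ A} : f ∈ freePieces 𝒜 δ j ↔ ∀ k, f k ∈ 𝒜 (j - δ k) :=
  .rfl

lemma single_mem_freePieces {j : ℤ} {k : ι} {a : A} (ha : a ∈ 𝒜 (j - δ k)) :
    Finsupp.single k a ∈ freePieces 𝒜 δ j := by
  classical
  intro l
  rw [Finsupp.single_apply]
  split_ifs with h
  exacts [h ▸ ha, zero_mem _]

lemma gradedShortExact_freePieces_sum :
    GradedShortExact (freePieces 𝒜 δ) (freePieces 𝒜 (Sum.elim δ ε)) (freePieces 𝒜 ε)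
      ((Finsupp.sumFinsuppLEquivProdFinsupp A).symm.toLinearMap ∘ₗ LinearMap.inl A _ _)
      (LinearMap.snd A _ _ ∘ₗ (Finsupp.sumFinsuppLEquivProdFinsupp A).toLinearMap) := by
  have hiff (j : ℤ) (f : ι →₀ A) (g : κ →₀ A) :
      (Finsupp.sumFinsuppLEquivProdFinsupp A).symm (f, g) ∈ freePieces 𝒜 (Sum.elim δ ε) j ↔
        f ∈ freePieces 𝒜 δ j ∧ g ∈ freePieces 𝒜 ε j := by
    simp [mem_freePieces]
  refine ⟨(Finsupp.sumFinsuppLEquivProdFinsupp A).symm.injective.comp LinearMap.inl_injective,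
    fun x ↦ ?_, fun j x ↦ ?_, fun j x hx k ↦ hx (Sum.inr k),
    fun j y hy ↦ ⟨_, (hiff j 0 y).2 ⟨zero_mem _, hy⟩, by simp⟩⟩
  · obtain ⟨⟨f, g⟩, rfl⟩ := (Finsupp.sumFinsuppLEquivProdFinsupp A).symm.surjective x
    simp [-Finsupp.sumFinsuppLEquivProdFinsupp_symm_apply, eq_comm]
  · simpa [zero_mem] using hiff j x 0

instance (δ : ι → ℤ) [SetLike.GradedMonoid 𝒜] : SetLike.GradedSMul 𝒜 (freePieces 𝒜 δ) where
  smul_mem i j a f ha hf k := by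
    rw [Finsupp.smul_apply, smul_eq_mul, vadd_eq_add, add_sub_assoc]
    exact SetLike.mul_mem_graded ha (hf k)

variable {M N : Type*} [AddCommGroup M] [Module A M] [AddCommGroup N] [Module A N]
  {ℳ : ℤ → AddSubgroup M} {𝒩 : ℤ → AddSubgroup N}

instance (L : Submodule A M) [SetLike.GradedSMul 𝒜 ℳ] :
    SetLike.GradedSMul 𝒜 (inducedPieces ℳ L) where
  smul_mem _ _ _ x ha hx := SetLike.GradedSMul.smul_mem (A := 𝒜) (B := ℳ) (bj := (x : M)) ha hx

lemma isGradedHom_linearCombination [SetLike.GradedSMul 𝒜 ℳ] {m : ι → M}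
    (hm : ∀ k, m k ∈ ℳ (δ k)) :
    IsGradedHom (freePieces 𝒜 δ) ℳ (Finsupp.linearCombination A m) := by
  intro j f hf
  rw [Finsupp.linearCombination_apply]
  refine AddSubgroup.sum_mem _ fun k _ ↦ ?_
  have := SetLike.GradedSMul.smul_mem (hf k) (hm k)
  rwa [vadd_eq_add, sub_add_cancel] at this

lemma IsGradedSurjection.exists_lift [SetLike.GradedMonoid 𝒜] [SetLike.GradedSMul 𝒜 ℳ]
    {p : M →ₗ[A] N} (hp : IsGradedSurjection ℳ 𝒩 p) {ψ : (ι →₀ A) →ₗ[A] N}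
    (hψ : IsGradedHom (freePieces 𝒜 δ) 𝒩 ψ) :
    ∃ φ, IsGradedHom (freePieces 𝒜 δ) ℳ φ ∧ p ∘ₗ φ = ψ := by
  have hgen (k : ι) : ∃ x ∈ ℳ (δ k), p x = ψ (Finsupp.single k 1) :=
    hp.exists_preimage _ _ (hψ _ _ (single_mem_freePieces (by simp [SetLike.one_mem_graded])))
  choose m hm hpm using hgen
  exact ⟨_, isGradedHom_linearCombination hm, by ext k; simp [hpm]⟩

end FreeModules

section Resolutions

variable {A S : Type} [CommRing A] [SetLike S A] [AddSubgroupClass S A] (𝒜 : ℤ → S) (𝔪 : Ideal A)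

/-- `HasFreeRes 𝒜 𝔪 n C T ℳ` says that the graded module `ℳ` has an exact complex of graded free
modules `F (n - 1) → ⋯ → F 0 → ℳ → 0`, where `T k` is the set of degrees of the generators of
`F k` and, for `D ∈ C k`, the elements of degree `D` of `F k` which are mapped to zero lie
in `𝔪 F k`: thus `C = ⊥` imposes no condition, while `C = ⊤` stands for minimality. -/
def HasFreeRes : ℕ → (ℕ → Set ℤ) → (ℕ → Set ℤ) → ∀ {M : Type} [AddCommGroup M] [Module A M],
    (ℤ → AddSubgroup M) → Prop
  | 0, _, _, _, _, _, _ => True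
  | n + 1, C, T, M, _, _, ℳ => ∃ (ι : Type) (δ : ι → ℤ) (π : (ι →₀ A) →ₗ[A] M),
      IsGradedSurjection (freePieces 𝒜 δ) ℳ π ∧ Set.range δ = T 0 ∧
      (∀ D ∈ C 0, ∀ x ∈ freePieces 𝒜 δ D, π x = 0 → x ∈ 𝔪 • (⊤ : Submodule A (ι →₀ A))) ∧
      HasFreeRes n (fun k ↦ C (k + 1)) (fun k ↦ T (k + 1))
        (inducedPieces (freePieces 𝒜 δ) (LinearMap.ker π))

/-- The degrees of the generators of `⨁ F k (-e)`, if those of `F k` have degrees in `T k`. -/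
def shiftDegrees (e : ℤ) (T : ℕ → Set ℤ) : ℕ → Set ℤ := fun k ↦ (· + e) '' T k

/-- The degrees of the generators of the mapping cone of a morphism of complexes `F' → F` with
generators in degrees `T'` and `T`. -/
def coneDegrees (T T' : ℕ → Set ℤ) : ℕ → Set ℤ
  | 0 => T 0
  | k + 1 => T (k + 1) ∪ T' k

lemma coneDegrees_coneDegrees (T T' T'' : ℕ → Set ℤ) :
    coneDegrees (coneDegrees T T') T'' = coneDegrees T (T'' ⊔ T') := by
  ext (_ | k) x
  · rfl
  · simp [coneDegrees, or_assoc, or_comm, or_left_comm]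

variable {𝒜 𝔪} {M M' M'' : Type} [AddCommGroup M] [Module A M] [AddCommGroup M'] [Module A M']
  [AddCommGroup M''] [Module A M''] {ℳ : ℤ → AddSubgroup M} {ℳ' : ℤ → AddSubgroup M'}
  {ℳ'' : ℤ → AddSubgroup M''} {i : M' →ₗ[A] M} {p : M →ₗ[A] M''} {T T' T'' : ℕ → Set ℤ} {n : ℕ}

lemma hasFreeRes_of_subsingleton [Subsingleton M] (n : ℕ) (C : ℕ → Set ℤ) :
    HasFreeRes 𝒜 𝔪 n C ⊥ ℳ := by
  induction n generalizing M C with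
  | zero => trivial
  | succ n ih =>
    exact ⟨Empty, Empty.elim, 0, ⟨fun _ _ _ ↦ zero_mem _, fun _ x _ ↦
      ⟨0, zero_mem _, Subsingleton.elim _ _⟩⟩, Set.range_eq_empty _,
      fun _ _ x _ _ ↦ Subsingleton.elim 0 x ▸ zero_mem _, ih _⟩

lemma HasFreeRes.of_succ {C : ℕ → Set ℤ} (h : HasFreeRes 𝒜 𝔪 (n + 1) C T ℳ) :
    HasFreeRes 𝒜 𝔪 n C T ℳ := by
  induction n generalizing M C T with
  | zero => trivial
  | succ n ih =>
    obtain ⟨ι, δ, π, hπ, hδ, hC, hker⟩ := h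
    exact ⟨ι, δ, π, hπ, hδ, hC, ih hker⟩

lemma HasFreeRes.shift (e : ℤ) (h : HasFreeRes 𝒜 𝔪 n ⊥ T ℳ) :
    HasFreeRes 𝒜 𝔪 n ⊥ (shiftDegrees e T) (fun j ↦ ℳ (j - e)) := by
  induction n generalizing M T with
  | zero => trivial
  | succ n ih =>
    obtain ⟨ι, δ, π, hπ, hδ, -, hker⟩ := h
    have hfree : freePieces 𝒜 (fun k ↦ δ k + e) = fun j ↦ freePieces 𝒜 δ (j - e) := by
      ext j f
      simp only [mem_freePieces, sub_add_eq_sub_sub_swap]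
    refine ⟨ι, fun k ↦ δ k + e, π, ?_, ?_, fun _ h ↦ h.elim, ?_⟩
    · rw [hfree]
      exact ⟨fun j ↦ hπ.isGradedHom _, fun j ↦ hπ.exists_preimage _⟩
    · rw [shiftDegrees, ← hδ, ← Set.range_comp]
      rfl
    · rw [hfree]
      exact ih hker

variable [SetLike.GradedMonoid 𝒜]

theorem HasFreeRes.of_gradedShortExact [SetLike.GradedSMul 𝒜 ℳ]
    (h : GradedShortExact ℳ' ℳ ℳ'' i p) (h' : HasFreeRes 𝒜 𝔪 n ⊥ T' ℳ')
    (h'' : HasFreeRes 𝒜 𝔪 n ⊥ T'' ℳ'') : HasFreeRes 𝒜 𝔪 n ⊥ (T' ⊔ T'') ℳ := by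
  induction n generalizing M M' M'' T' T'' with
  | zero => trivial
  | succ n ih =>
    obtain ⟨ι', δ', π', hπ', hδ', -, hker'⟩ := h'
    obtain ⟨ι'', δ'', π'', hπ'', hδ'', -, hker''⟩ := h''
    obtain ⟨φ, hφ, hpφ⟩ := h.isGradedSurjection.exists_lift hπ''.isGradedHom
    let π : (ι' ⊕ ι'' →₀ A) →ₗ[A] M :=
      (i ∘ₗ π').coprod φ ∘ₗ (Finsupp.sumFinsuppLEquivProdFinsupp A).toLinearMap
    have hπ : IsGradedHom (freePieces 𝒜 (Sum.elim δ' δ'')) ℳ π := fun j x hx ↦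
      add_mem ((h.map_mem_iff _ _).2 (hπ'.isGradedHom j _ fun k ↦ hx (Sum.inl k)))
        (hφ j _ fun k ↦ hx (Sum.inr k))
    have hrow := gradedShortExact_freePieces_sum (𝒜 := 𝒜) (δ := δ') (ε := δ'')
    have hinl : π ∘ₗ ((Finsupp.sumFinsuppLEquivProdFinsupp A).symm.toLinearMap ∘ₗ
        LinearMap.inl A _ _) = i ∘ₗ π' := by
      ext; simp [π]
    have hsnd : π'' ∘ₗ (LinearMap.snd A _ _ ∘ₗ
        (Finsupp.sumFinsuppLEquivProdFinsupp A).toLinearMap) = p ∘ₗ π := by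
      rw [← hpφ]
      ext x; simp [π, h.exact.apply_apply_eq_zero]
    obtain ⟨_, _, hker⟩ := h.exists_ker hrow hπ' hπ hinl hsnd
    refine ⟨ι' ⊕ ι'', Sum.elim δ' δ'', π,
      h.isGradedSurjection_middle hrow hπ' hπ hinl hsnd hπ'', ?_, fun _ h ↦ h.elim,
      ih hker hker' hker''⟩
    rw [Set.Sum.elim_range, hδ', hδ'']
    rfl

theorem HasFreeRes.coneDegrees (h : GradedShortExact ℳ' ℳ ℳ'' i p)
    (h' : HasFreeRes 𝒜 𝔪 n ⊥ T' ℳ') (hM : HasFreeRes 𝒜 𝔪 (n + 1) ⊥ T ℳ) :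
    HasFreeRes 𝒜 𝔪 (n + 1) ⊥ (coneDegrees T T') ℳ'' := by
  obtain ⟨ι, δ, π, hπ, hδ, -, hker⟩ := hM
  obtain ⟨_, _, hexact⟩ := h.exists_ker_comp hπ
  exact ⟨ι, δ, p ∘ₗ π, h.isGradedSurjection.comp hπ, hδ, fun _ h ↦ h.elim,
    .of_gradedShortExact hexact hker h'⟩

end Resolutions

end PfaffianPowers

namespace PfaffianPowers

section Comparison

variable {A S : Type} [CommRing A] [SetLike S A] [AddSubgroupClass S A] {𝒜 : ℤ → S} {𝔪 : Ideal A}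

section

variable {ι : Type*} {δ : ι → ℤ} {D : ℤ}

lemma mem_smul_top_of_mem_freePieces (hdeg : ∀ j ≠ 0, ∀ a ∈ 𝒜 j, a ∈ 𝔪) (hD : D ∉ Set.range δ)
    {x : ι →₀ A} (hx : x ∈ freePieces 𝒜 δ D) : x ∈ 𝔪 • (⊤ : Submodule A (ι →₀ A)) := by
  rw [← x.sum_single]
  refine sum_mem fun k _ ↦ ?_
  rw [← mul_one (x k), ← smul_eq_mul, ← Finsupp.smul_single]
  exact Submodule.smul_mem_smul (hdeg _ (sub_ne_zero.2 fun h ↦ hD ⟨k, h.symm⟩) _ (hx k)) trivial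

lemma single_one_notMem_smul_top (h𝔪 : 𝔪 ≠ ⊤) (k : ι) :
    Finsupp.single k 1 ∉ 𝔪 • (⊤ : Submodule A (ι →₀ A)) := by
  intro h
  have := Submodule.smul_top_le_comap_smul_top 𝔪 (Finsupp.lapply k) h
  rw [Submodule.mem_comap, Finsupp.lapply_apply, Finsupp.single_eq_same, smul_eq_mul,
    Ideal.mul_top] at this
  exact h𝔪 ((Ideal.eq_top_iff_one 𝔪).2 this)

end

variable {M N Λ : Type} [AddCommGroup M] [Module A M] [AddCommGroup N] [Module A N]
  {ℳ : ℤ → AddSubgroup M} {𝒩 : ℤ → AddSubgroup N} {τ : Λ → ℤ}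

/-- If `F k` has no generator of degree `D`, then its elements of degree `D` lie in `𝔪 F k`; if
`F (k + 1)` has none, then the boundaries of degree `D` do. -/
lemma HasFreeRes.minimal_of_notMem (hdeg : ∀ j ≠ 0, ∀ a ∈ 𝒜 j, a ∈ 𝔪) {n : ℕ} {T : ℕ → Set ℤ}
    (h : HasFreeRes 𝒜 𝔪 (n + 1) ⊥ T ℳ) :
    HasFreeRes 𝒜 𝔪 n (fun k ↦ {D | D ∉ T k ∨ D ∉ T (k + 1)}) T ℳ := by
  induction n generalizing M T with
  | zero => trivial
  | succ n ih =>
    obtain ⟨ι, δ, π, hπ, hδ, -, hker⟩ := h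
    refine ⟨ι, δ, π, hπ, hδ, ?_, ih hker⟩
    rintro D (hD | hD) x hx hπx
    · exact mem_smul_top_of_mem_freePieces hdeg (hδ ▸ hD) hx
    · obtain ⟨κ, ε, ρ, hρ, hε, -⟩ := hker
      obtain ⟨y, hy, hyx⟩ := hρ.exists_preimage D ⟨x, hπx⟩ hx
      have := Submodule.smul_top_le_comap_smul_top 𝔪 ((LinearMap.ker π).subtype ∘ₗ ρ)
        (mem_smul_top_of_mem_freePieces hdeg (hε ▸ hD) hy)
      rwa [Submodule.mem_comap, LinearMap.comp_apply, hyx] at this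

/-- Maps `f : M → N` and `g : N → M` of degree zero such that `id - g ∘ f` factors through a graded
free module, with generators in degrees `τ`. -/
structure IsStableRetraction (𝒜 : ℤ → S) (ℳ : ℤ → AddSubgroup M) (𝒩 : ℤ → AddSubgroup N)
    (τ : Λ → ℤ) (f : M →ₗ[A] N) (g : N →ₗ[A] M) (u : (Λ →₀ A) →ₗ[A] M) (v : M →ₗ[A] (Λ →₀ A)) :
    Prop where
  left : IsGradedHom ℳ 𝒩 f
  right : IsGradedHom 𝒩 ℳ g
  ofFree : IsGradedHom (freePieces 𝒜 τ) ℳ u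
  toFree : IsGradedHom ℳ (freePieces 𝒜 τ) v
  add_eq : ∀ x, g (f x) + u (v x) = x

namespace IsStableRetraction

variable [SetLike.GradedMonoid 𝒜] {f : M →ₗ[A] N} {g : N →ₗ[A] M} {u : (Λ →₀ A) →ₗ[A] M}
  {v : M →ₗ[A] (Λ →₀ A)} {ι κ : Type} {δ : ι → ℤ} {ε : κ → ℤ} {π : (ι →₀ A) →ₗ[A] M}
  {ρ : (κ →₀ A) →ₗ[A] N}

/-- The factorization of `id - g ∘ f` on the kernels goes through the free cover of `M`: up to the
lift of `u ∘ v`, it is a homotopy. -/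
lemma exists_ker (h : IsStableRetraction 𝒜 ℳ 𝒩 τ f g u v)
    (hπ : IsGradedSurjection (freePieces 𝒜 δ) ℳ π)
    (hρ : IsGradedSurjection (freePieces 𝒜 ε) 𝒩 ρ) :
    ∃ f' g' u', IsStableRetraction 𝒜 (inducedPieces (freePieces 𝒜 δ) (LinearMap.ker π))
      (inducedPieces (freePieces 𝒜 ε) (LinearMap.ker ρ)) δ f' g' u'
      (LinearMap.ker π).subtype := by
  obtain ⟨F, hF, hρF⟩ := hρ.exists_lift (h.left.comp hπ.isGradedHom)
  obtain ⟨G, hG, hπG⟩ := hπ.exists_lift (h.right.comp hρ.isGradedHom)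
  obtain ⟨U, hU, hπU⟩ := hπ.exists_lift h.ofFree
  have hρF' (x) : ρ (F x) = f (π x) := DFunLike.congr_fun hρF x
  have hπG' (x) : π (G x) = g (ρ x) := DFunLike.congr_fun hπG x
  have hπU' (x) : π (U x) = u x := DFunLike.congr_fun hπU x
  refine ⟨F.restrict fun x hx ↦ ?_, G.restrict fun x hx ↦ ?_,
    (LinearMap.id - G ∘ₗ F - U ∘ₗ v ∘ₗ π).codRestrict _ fun x ↦ ?_, ?_⟩
  · rw [LinearMap.mem_ker] at hx ⊢
    rw [hρF', hx, map_zero]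
  · rw [LinearMap.mem_ker] at hx ⊢
    rw [hπG', hx, map_zero]
  · refine ⟨fun j x hx ↦ hF j _ hx, fun j x hx ↦ hG j _ hx, fun j x hx ↦ ?_, fun j x hx ↦ hx,
      fun x ↦ Subtype.ext ?_⟩
    · exact sub_mem (sub_mem hx (hG j _ (hF j _ hx)))
        (hU j _ (h.toFree j _ (hπ.isGradedHom j _ hx)))
    · simp
  · rw [LinearMap.mem_ker]
    simp [hπG', hρF', hπU', sub_sub, h.add_eq]

lemma mem_range_degrees (h : IsStableRetraction 𝒜 ℳ 𝒩 τ f g u v)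
    (hdeg : ∀ j ≠ 0, ∀ a ∈ 𝒜 j, a ∈ 𝔪) (h𝔪 : 𝔪 ≠ ⊤)
    (hπ : IsGradedSurjection (freePieces 𝒜 δ) ℳ π)
    (hρ : IsGradedSurjection (freePieces 𝒜 ε) 𝒩 ρ) {D : ℤ}
    (hker : ∀ x ∈ freePieces 𝒜 δ D, π x = 0 → x ∈ 𝔪 • (⊤ : Submodule A (ι →₀ A)))
    (hv : ∀ x ∈ ℳ D, v x ∈ 𝔪 • (⊤ : Submodule A (Λ →₀ A))) (hD : D ∈ Set.range δ) :
    D ∈ Set.range ε := by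
  by_contra hε
  obtain ⟨G, hG, hπG⟩ := hπ.exists_lift (h.right.comp hρ.isGradedHom)
  obtain ⟨U, hU, hπU⟩ := hπ.exists_lift h.ofFree
  obtain ⟨k, rfl⟩ := hD
  have hk : Finsupp.single k 1 ∈ freePieces 𝒜 δ (δ k) :=
    single_mem_freePieces (by simp [SetLike.one_mem_graded])
  have hπk := hπ.isGradedHom _ _ hk
  set x := π (Finsupp.single k 1) with hx
  obtain ⟨y, hy, hyx⟩ := hρ.exists_preimage _ _ (h.left _ _ hπk)
  have hy𝔪 := Submodule.smul_top_le_comap_smul_top 𝔪 G (mem_smul_top_of_mem_freePieces hdeg hε hy)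
  have hv𝔪 := Submodule.smul_top_le_comap_smul_top 𝔪 U (hv x hπk)
  have hdiff : Finsupp.single k 1 - (G y + U (v x)) ∈ 𝔪 • (⊤ : Submodule A (ι →₀ A)) := by
    refine hker _ (sub_mem hk (add_mem (hG _ _ hy) (hU _ _ (h.toFree _ _ hπk)))) ?_
    rw [map_sub, map_add, ← LinearMap.comp_apply, hπG, ← LinearMap.comp_apply, hπU,
      LinearMap.comp_apply, hyx, h.add_eq, hx, sub_self]
  refine single_one_notMem_smul_top h𝔪 k ?_
  rw [← sub_add_cancel (Finsupp.single k 1) (G y + U (v x))]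
  exact add_mem hdiff (add_mem hy𝔪 hv𝔪)

lemma mem_degrees {i : ℕ} {C C' T T' : ℕ → Set ℤ} (h : IsStableRetraction 𝒜 ℳ 𝒩 τ f g u v)
    (hdeg : ∀ j ≠ 0, ∀ a ∈ 𝒜 j, a ∈ 𝔪) (h𝔪 : 𝔪 ≠ ⊤) (hM : HasFreeRes 𝒜 𝔪 (i + 1) C T ℳ)
    (hN : HasFreeRes 𝒜 𝔪 (i + 1) C' T' 𝒩) {D : ℤ} (hC : ∀ k ≤ i, i ≤ k + 1 → D ∈ C k)
    (hv : i = 0 → ∀ x ∈ ℳ D, v x ∈ 𝔪 • (⊤ : Submodule A (Λ →₀ A))) (hD : D ∈ T i) :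
    D ∈ T' i := by
  induction i generalizing M N Λ C C' T T' with
  | zero =>
    obtain ⟨ι, δ, π, hπ, hδ, hker, -⟩ := hM
    obtain ⟨κ, ε, ρ, hρ, hε, -⟩ := hN
    rw [← hδ] at hD
    rw [← hε]
    exact h.mem_range_degrees hdeg h𝔪 hπ hρ (hker D (hC 0 le_rfl zero_le_one)) (hv rfl) hD
  | succ i ih =>
    obtain ⟨ι, δ, π, hπ, -, hker, hM⟩ := hM
    obtain ⟨κ, ε, ρ, hρ, -, -, hN⟩ := hN
    obtain ⟨f', g', u', h'⟩ := h.exists_ker hπ hρ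
    refine ih h' hM hN (fun k hk hk' ↦ hC (k + 1) (by lia) (by lia)) ?_ hD
    rintro rfl x hx
    exact hker D (hC 0 zero_le_one le_rfl) x hx x.2

end IsStableRetraction

theorem HasFreeRes.mem_degrees [SetLike.GradedMonoid 𝒜] {i : ℕ} {C C' T T' : ℕ → Set ℤ}
    (hdeg : ∀ j ≠ 0, ∀ a ∈ 𝒜 j, a ∈ 𝔪) (h𝔪 : 𝔪 ≠ ⊤) (h : HasFreeRes 𝒜 𝔪 (i + 1) C T ℳ)
    (h' : HasFreeRes 𝒜 𝔪 (i + 1) C' T' ℳ) {D : ℤ} (hC : ∀ k ≤ i, i ≤ k + 1 → D ∈ C k)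
    (hD : D ∈ T i) : D ∈ T' i := by
  have hid : IsStableRetraction 𝒜 ℳ ℳ (Empty.elim : Empty → ℤ) LinearMap.id LinearMap.id 0 0 :=
    ⟨fun _ _ ↦ id, fun _ _ ↦ id, fun _ _ _ ↦ zero_mem _, fun _ _ _ ↦ zero_mem _, by simp⟩
  exact hid.mem_degrees hdeg h𝔪 h h' hC (fun _ _ _ ↦ zero_mem _) hD

end Comparison

end PfaffianPowers

namespace PfaffianPowers

section Strictness

variable {A S : Type*} [CommRing A] [SetLike S A] [AddSubgroupClass S A] {𝒜 : ℤ → S}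
  [GradedRing 𝒜] {M ι κ : Type*} [AddCommGroup M] [Module A M] {ℳ : ℤ → AddSubgroup M}
  {δ : ι → ℤ} {ε : κ → ℤ}

/-- The existence of additive projections onto the pieces of `ℳ`; it says that the sum of the
pieces is direct. -/
def HasProjections (ℳ : ℤ → AddSubgroup M) : Prop :=
  ∀ j, ∃ c : M →+ M, (∀ x ∈ ℳ j, c x = x) ∧ ∀ i ≠ j, ∀ x ∈ ℳ i, c x = 0

lemma hasProjections_freePieces : HasProjections (freePieces 𝒜 δ) := by
  refine fun j ↦ ⟨{
    toFun f := Finsupp.onFinset f.support (fun k ↦ GradedRing.proj 𝒜 (j - δ k) (f k))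
      fun k hk ↦ Finsupp.mem_support_iff.2 fun h ↦ hk (by rw [h, map_zero])
    map_zero' := by ext; simp
    map_add' _ _ := by ext; simp }, fun f hf ↦ ?_, fun i hij f hf ↦ ?_⟩
  · ext k
    exact DirectSum.decompose_of_mem_same 𝒜 (hf k)
  · ext k
    exact DirectSum.decompose_of_mem_ne 𝒜 (hf k) (sub_left_injective.ne hij)

lemma IsGradedHom.exists_preimage (hM : HasProjections ℳ) {ψ : (ι →₀ A) →ₗ[A] M}
    (hψ : IsGradedHom (freePieces 𝒜 δ) ℳ ψ) {j : ℤ} (f : ι →₀ A) (hf : ψ f ∈ ℳ j) :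
    ∃ f' ∈ freePieces 𝒜 δ j, ψ f' = ψ f := by
  obtain ⟨c, hcj, hc⟩ := hM j
  suffices h : ∀ f, ∃ f' ∈ freePieces 𝒜 δ j, ψ f' = c (ψ f) by
    simpa only [hcj _ hf] using h f
  intro f
  induction f using Finsupp.induction_linear with
  | zero => exact ⟨0, zero_mem _, by simp⟩
  | add f g hf hg =>
    obtain ⟨f', hf', hψf⟩ := hf
    obtain ⟨g', hg', hψg⟩ := hg
    exact ⟨f' + g', add_mem hf' hg', by simp [hψf, hψg]⟩
  | single k a =>
    induction a using DirectSum.Decomposition.inductionOn 𝒜 with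
    | zero => exact ⟨0, zero_mem _, by simp⟩
    | add a b ha hb =>
      obtain ⟨f', hf', hψf⟩ := ha
      obtain ⟨g', hg', hψg⟩ := hb
      exact ⟨f' + g', add_mem hf' hg', by simp [hψf, hψg, Finsupp.single_add]⟩
    | @homogeneous i a =>
      have ha : Finsupp.single k (a : A) ∈ freePieces 𝒜 δ (i + δ k) :=
        single_mem_freePieces (by simp)
      rcases eq_or_ne (i + δ k) j with rfl | hij
      · exact ⟨_, ha, (hcj _ (hψ _ _ ha)).symm⟩
      · exact ⟨0, zero_mem _, by rw [map_zero, hc _ hij _ (hψ _ _ ha)]⟩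

lemma IsGradedHom.isGradedSurjection (hM : HasProjections ℳ) {ψ : (ι →₀ A) →ₗ[A] M}
    (hψ : IsGradedHom (freePieces 𝒜 δ) ℳ ψ) (hsurj : Function.Surjective ψ) :
    IsGradedSurjection (freePieces 𝒜 δ) ℳ ψ where
  isGradedHom := hψ
  exists_preimage j x hx := by
    obtain ⟨f, rfl⟩ := hsurj x
    exact hψ.exists_preimage hM f hx

lemma IsGradedHom.isGradedSurjection_codRestrict {ψ : (ι →₀ A) →ₗ[A] (κ →₀ A)}
    (hψ : IsGradedHom (freePieces 𝒜 δ) (freePieces 𝒜 ε) ψ) {N : Submodule A (κ →₀ A)}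
    (hN : LinearMap.range ψ = N) :
    IsGradedSurjection (freePieces 𝒜 δ) (inducedPieces (freePieces 𝒜 ε) N)
      (ψ.codRestrict N fun x ↦ hN ▸ ψ.mem_range_self x) where
  isGradedHom := hψ
  exists_preimage := by
    rintro j ⟨x, hx⟩ hxj
    obtain ⟨f, rfl⟩ : x ∈ LinearMap.range ψ := hN ▸ hx
    obtain ⟨f', hf', hψf⟩ := hψ.exists_preimage hasProjections_freePieces f hxj
    exact ⟨f', hf', Subtype.ext hψf⟩

end Strictness

lemma HasFreeRes.of_range_eq {A S : Type} [CommRing A] [SetLike S A] [AddSubgroupClass S A]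
    {𝒜 : ℤ → S} [GradedRing 𝒜] {𝔪 : Ideal A} {n : ℕ} {C T : ℕ → Set ℤ} {ι κ : Type} {δ : ι → ℤ}
    {ε : κ → ℤ} {ψ : (ι →₀ A) →ₗ[A] (κ →₀ A)} {N : Submodule A (κ →₀ A)}
    (hψ : IsGradedHom (freePieces 𝒜 δ) (freePieces 𝒜 ε) ψ) (hN : LinearMap.range ψ = N)
    (hT : Set.range δ = T 0)
    (hC : ∀ D ∈ C 0, ∀ x ∈ freePieces 𝒜 δ D, ψ x = 0 → x ∈ 𝔪 • (⊤ : Submodule A (ι →₀ A)))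
    (hker : HasFreeRes 𝒜 𝔪 n (fun k ↦ C (k + 1)) (fun k ↦ T (k + 1))
      (inducedPieces (freePieces 𝒜 δ) (LinearMap.ker ψ))) :
    HasFreeRes 𝒜 𝔪 (n + 1) C T (inducedPieces (freePieces 𝒜 ε) N) := by
  refine ⟨ι, δ, ψ.codRestrict N fun x ↦ hN ▸ ψ.mem_range_self x,
    hψ.isGradedSurjection_codRestrict hN, hT, fun D hD x hx hψx ↦ ?_, ?_⟩
  · exact hC D hD x hx (congrArg Subtype.val hψx)
  · rwa [LinearMap.ker_codRestrict]

section Quotients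

variable {A S : Type*} [CommRing A] [SetLike S A] [AddSubgroupClass S A] (𝒜 : ℤ → S)

/-- The grading on `A ⧸ E` induced from a grading of `A`. -/
def quotientPieces (E : Ideal A) (j : ℤ) : AddSubgroup (A ⧸ E) :=
  (AddSubgroup.ofClass (𝒜 j)).map E.mkQ.toAddMonoidHom

variable {𝒜} {E Q : Ideal A}

instance [SetLike.GradedMonoid 𝒜] : SetLike.GradedSMul 𝒜 (quotientPieces 𝒜 E) where
  smul_mem i j a _ ha := by
    rintro ⟨b, hb, rfl⟩
    exact ⟨a * b, SetLike.mul_mem_graded ha hb, rfl⟩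

variable [GradedRing 𝒜]

lemma hasProjections_quotientPieces (hE : E.IsHomogeneous 𝒜) :
    HasProjections (quotientPieces 𝒜 E) := by
  intro j
  have hker : E.toAddSubgroup ≤ (E.mkQ.toAddMonoidHom.comp (GradedRing.proj 𝒜 j)).ker :=
    fun a ha ↦ (Submodule.Quotient.mk_eq_zero E).2 (hE j ha)
  refine ⟨QuotientAddGroup.lift E.toAddSubgroup _ hker, ?_, ?_⟩
  · rintro _ ⟨a, ha, rfl⟩
    exact congrArg E.mkQ (DirectSum.decompose_of_mem_same 𝒜 ha)
  · rintro i hij _ ⟨a, ha, rfl⟩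
    exact (congrArg E.mkQ (DirectSum.decompose_of_mem_ne 𝒜 ha hij)).trans (map_zero _)

lemma gradedShortExact_quotientPieces {g : A} {e : ℤ} (hg : g ∈ 𝒜 e) (hE : E.IsHomogeneous 𝒜)
    (hQ : Submodule.comap (LinearMap.mulLeft A g) E = Q) :
    GradedShortExact (fun j ↦ quotientPieces 𝒜 Q (j - e)) (quotientPieces 𝒜 E)
      (quotientPieces 𝒜 (E ⊔ Ideal.span {g})) (Q.mapQ E (LinearMap.mulLeft A g) hQ.ge)
      (Submodule.factor (le_sup_left : E ≤ E ⊔ Ideal.span {g})) := by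
  subst hQ
  refine ⟨?_, fun x ↦ ?_, fun j x ↦ ?_, ?_, ?_⟩
  · rw [← LinearMap.ker_eq_bot, Submodule.ker_mapQ, Submodule.mkQ_map_self]
  · obtain ⟨x, rfl⟩ := E.mkQ_surjective x
    rw [Submodule.factor_mk, ← LinearMap.mem_ker, Submodule.ker_mkQ]
    constructor
    · intro hx
      obtain ⟨y, hy, _, hz, rfl⟩ := Submodule.mem_sup.1 hx
      obtain ⟨a, rfl⟩ := Ideal.mem_span_singleton.1 hz
      exact ⟨Submodule.mkQ _ a, (Submodule.Quotient.eq E).2 (by simpa using neg_mem hy)⟩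
    · rintro ⟨y, hy⟩
      obtain ⟨a, rfl⟩ := Submodule.mkQ_surjective _ y
      have hga : g * a - x ∈ E := (Submodule.Quotient.eq E).1 hy
      rw [← sub_sub_cancel (g * a) x]
      exact sub_mem (Ideal.mem_sup_right (Ideal.mul_mem_right _ _
        (Ideal.mem_span_singleton_self g))) (Ideal.mem_sup_left hga)
  · obtain ⟨a, rfl⟩ := Submodule.mkQ_surjective _ x
    constructor
    · rintro ⟨b, hb, hba⟩
      have hab : g * a - b ∈ E := (Submodule.Quotient.eq E).1 hba.symm
      have hj := hE j hab
      rw [DirectSum.decompose_sub, DirectSum.sub_apply, AddSubgroupClass.coe_sub,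
        DirectSum.decompose_of_mem_same 𝒜 hb, ← add_sub_cancel e j,
        DirectSum.coe_decompose_mul_add_of_left_mem 𝒜 hg] at hj
      refine ⟨DirectSum.decompose 𝒜 a (j - e), SetLike.coe_mem _, (Submodule.Quotient.eq _).2 ?_⟩
      rw [Submodule.mem_comap, LinearMap.mulLeft_apply, mul_sub, ← sub_sub_sub_cancel_right _ _ b]
      exact sub_mem hj hab
    · rintro ⟨b, hb, hba⟩
      refine ⟨g * b, ?_, hba ▸ rfl⟩
      simpa using SetLike.mul_mem_graded hg hb
  · rintro j _ ⟨a, ha, rfl⟩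
    exact ⟨a, ha, rfl⟩
  · rintro j _ ⟨a, ha, rfl⟩
    exact ⟨E.mkQ a, ⟨a, ha, rfl⟩, rfl⟩

end Quotients

end PfaffianPowers

namespace PfaffianPowers

/-! ### Resolutions of quotient rings -/

lemma IsFreeModulo.comap_mulLeft_sup_span {R ι : Type*} [CommRing R] [Fintype ι] {E Q : Ideal R}
    {M : ι → R} (h : IsFreeModulo E Q M) {t : Finset ι} {x : ι} (hx : x ∉ t) :
    Submodule.comap (LinearMap.mulLeft R (M x)) (E ⊔ Ideal.span (M '' t)) = Q := by
  classical
  ext c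
  rw [Submodule.mem_comap, LinearMap.mulLeft_apply]
  refine ⟨fun hc ↦ ?_, fun hc ↦ Ideal.mem_sup_left (h.mul_mem x c hc)⟩
  obtain ⟨a, ha, b, hb, hab⟩ := Submodule.mem_sup.1 hc
  obtain ⟨r, rfl⟩ := (Submodule.mem_span_image_finset_iff_exists_fun' R).1 hb
  have hE : M ⬝ᵥ (Pi.single x c - fun y ↦ if y ∈ t then r y else 0) ∈ E := by
    rw [dotProduct_sub, dotProduct_single, ← hab]
    simpa [dotProduct, mul_comm] using ha
  simpa [hx] using h.mem_of_dotProduct_mem _ hE x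

lemma IsFreeModulo.comap_mulLeft {R ι : Type*} [CommRing R] [Fintype ι] {E Q : Ideal R} {M : ι → R}
    (h : IsFreeModulo E Q M) (x : ι) : Submodule.comap (LinearMap.mulLeft R (M x)) E = Q := by
  simpa using h.comap_mulLeft_sup_span (Finset.notMem_empty x)

section IsResolvedBy

variable {A S : Type} [CommRing A] [SetLike S A] [AddSubgroupClass S A] (𝒜 : ℤ → S) (𝔪 : Ideal A)

/-- The graded ring `A ⧸ E` has graded free resolutions, in the sense of `HasFreeRes` and of any
length, with generators in degrees `T`. -/
def IsResolvedBy (E : Ideal A) (T : ℕ → Set ℤ) : Prop :=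
  ∀ n, HasFreeRes 𝒜 𝔪 n ⊥ T (quotientPieces 𝒜 E)

lemma isResolvedBy_top : IsResolvedBy 𝒜 𝔪 ⊤ ⊥ :=
  fun n ↦ hasFreeRes_of_subsingleton n ⊥

variable {𝒜 𝔪} [GradedRing 𝒜] {E Q : Ideal A} {T TQ : ℕ → Set ℤ} {e : ℤ}

lemma IsResolvedBy.sup_span_singleton {g : A} (hT : IsResolvedBy 𝒜 𝔪 E T) (hg : g ∈ 𝒜 e)
    (hE : E.IsHomogeneous 𝒜) (hQ : Submodule.comap (LinearMap.mulLeft A g) E = Q)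
    (hTQ : IsResolvedBy 𝒜 𝔪 Q TQ) :
    IsResolvedBy 𝒜 𝔪 (E ⊔ Ideal.span {g}) (coneDegrees T (shiftDegrees e TQ))
  | 0 => trivial
  | n + 1 => .coneDegrees (gradedShortExact_quotientPieces hg hE hQ) ((hTQ n).shift e) (hT (n + 1))

lemma IsResolvedBy.of_sup_span_singleton {g : A}
    (hT : IsResolvedBy 𝒜 𝔪 (E ⊔ Ideal.span {g}) T) (hg : g ∈ 𝒜 e) (hE : E.IsHomogeneous 𝒜)
    (hQ : Submodule.comap (LinearMap.mulLeft A g) E = Q) (hTQ : IsResolvedBy 𝒜 𝔪 Q TQ) :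
    IsResolvedBy 𝒜 𝔪 E (shiftDegrees e TQ ⊔ T) :=
  fun n ↦ .of_gradedShortExact (gradedShortExact_quotientPieces hg hE hQ) ((hTQ n).shift e) (hT n)

section IsFreeModulo

variable {ι : Type*} {M : ι → A}

lemma isHomogeneous_sup_span_image (hE : E.IsHomogeneous 𝒜) (hM : ∀ x, M x ∈ 𝒜 e) (s : Set ι) :
    (E ⊔ Ideal.span (M '' s)).IsHomogeneous 𝒜 :=
  hE.sup (Ideal.homogeneous_span 𝒜 _ (by rintro _ ⟨x, -, rfl⟩; exact ⟨e, hM x⟩))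

lemma sup_span_image_cons {t : Finset ι} {x : ι} (hx : x ∉ t) :
    E ⊔ Ideal.span (M '' (t.cons x hx : Finset ι)) =
      E ⊔ Ideal.span (M '' t) ⊔ Ideal.span {M x} := by
  rw [Finset.coe_cons, Set.image_insert_eq, Ideal.span_insert, sup_assoc,
    sup_comm (Ideal.span {M x})]

variable [Fintype ι] (h : IsFreeModulo E Q M) (hE : E.IsHomogeneous 𝒜) (hM : ∀ x, M x ∈ 𝒜 e)
  (hTQ : IsResolvedBy 𝒜 𝔪 Q TQ)
include h hE hM hTQ

lemma IsResolvedBy.sup_span_image {t : Finset ι} (ht : t.Nonempty) (hT : IsResolvedBy 𝒜 𝔪 E T) :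
    IsResolvedBy 𝒜 𝔪 (E ⊔ Ideal.span (M '' t)) (coneDegrees T (shiftDegrees e TQ)) := by
  induction ht using Finset.Nonempty.cons_induction with
  | singleton x =>
    rw [Finset.coe_singleton, Set.image_singleton]
    exact hT.sup_span_singleton (hM x) hE (h.comap_mulLeft x) hTQ
  | cons x t hx _ ih =>
    rw [sup_span_image_cons, ← sup_idem (shiftDegrees e TQ), ← coneDegrees_coneDegrees]
    exact ih.sup_span_singleton (hM x) (isHomogeneous_sup_span_image hE hM _)
      (h.comap_mulLeft_sup_span hx) hTQ

lemma IsResolvedBy.of_sup_span_image {t : Finset ι} (ht : t.Nonempty)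
    (hT : IsResolvedBy 𝒜 𝔪 (E ⊔ Ideal.span (M '' t)) T) :
    IsResolvedBy 𝒜 𝔪 E (shiftDegrees e TQ ⊔ T) := by
  induction ht using Finset.Nonempty.cons_induction generalizing T with
  | singleton x =>
    rw [Finset.coe_singleton, Set.image_singleton] at hT
    exact .of_sup_span_singleton hT (hM x) hE (h.comap_mulLeft x) hTQ
  | cons x t hx _ ih =>
    rw [sup_span_image_cons] at hT
    have hT' := ih (.of_sup_span_singleton hT (hM x) (isHomogeneous_sup_span_image hE hM _)
      (h.comap_mulLeft_sup_span hx) hTQ)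
    rwa [← sup_assoc, sup_idem] at hT'

end IsFreeModulo

end IsResolvedBy

end PfaffianPowers

namespace PfaffianPowers

section IntGrading

variable {K A : Type*} [CommRing K] [CommRing A] [Algebra K A] (𝒜 : ℕ → Submodule K A)

lemma zg_natCast (n : ℕ) : zg 𝒜 n = 𝒜 n := by
  simp [zg]

lemma zg_of_neg {j : ℤ} (hj : j < 0) : zg 𝒜 j = ⊥ :=
  if_neg hj.not_ge

instance [SetLike.GradedMonoid 𝒜] : SetLike.GradedMonoid (zg 𝒜) where
  one_mem := zg_natCast 𝒜 0 ▸ SetLike.GradedOne.one_mem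
  mul_mem i j a b ha hb := by
    rcases lt_or_ge i 0 with hi | hi
    · rw [zg_of_neg 𝒜 hi, Submodule.mem_bot] at ha
      rw [ha, zero_mul]
      exact zero_mem _
    rcases lt_or_ge j 0 with hj | hj
    · rw [zg_of_neg 𝒜 hj, Submodule.mem_bot] at hb
      rw [hb, mul_zero]
      exact zero_mem _
    lift i to ℕ using hi
    lift j to ℕ using hj
    rw [← Nat.cast_add]
    rw [zg_natCast] at ha hb ⊢
    exact SetLike.mul_mem_graded ha hb

noncomputable instance [GradedRing 𝒜] : GradedRing (zg 𝒜) where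
  __ := DirectSum.Decomposition.ofLinearMap (zg 𝒜)
    (DirectSum.toModule K ℕ _ (fun n ↦ DirectSum.lof K ℤ (fun j ↦ zg 𝒜 j) n ∘ₗ
      Submodule.inclusion (zg_natCast 𝒜 n).ge) ∘ₗ (DirectSum.decomposeLinearEquiv 𝒜).toLinearMap)
    (by
      refine LinearMap.ext fun x ↦ ?_
      induction x using DirectSum.Decomposition.inductionOn 𝒜 with
      | zero => simp
      | homogeneous a => simp
      | add a b ha hb => rw [map_add, ha, hb, map_add])
    (by
      refine DirectSum.linearMap_ext K fun j ↦ LinearMap.ext ?_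
      rintro ⟨a, ha⟩
      rcases lt_or_ge j 0 with hj | hj
      · have h0 : (⟨a, ha⟩ : zg 𝒜 j) = 0 := Subtype.ext (by simpa [zg_of_neg 𝒜 hj] using ha)
        rw [h0, map_zero, map_zero]
      · lift j to ℕ using hj
        lift a to 𝒜 j using (zg_natCast 𝒜 j).le ha
        simp only [LinearMap.coe_comp, LinearEquiv.coe_coe, Function.comp_apply,
          DirectSum.coeLinearMap_lof, DirectSum.decomposeLinearEquiv_apply_coe,
          DirectSum.toModule_lof, LinearMap.id_comp]
        rfl)

variable {𝒜}

lemma mem_zg_of_eq {a : A} {n : ℕ} {j : ℤ} (ha : a ∈ 𝒜 n) (hj : j = n) : a ∈ zg 𝒜 j := by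
  rwa [hj, zg_natCast]

lemma mem_irrel_of_mem_zg {j : ℤ} (hj : j ≠ 0) {a : A} (ha : a ∈ zg 𝒜 j) : a ∈ irrel 𝒜 := by
  rcases hj.lt_or_gt with hneg | hpos
  · rw [zg_of_neg 𝒜 hneg, Submodule.mem_bot] at ha
    exact ha ▸ zero_mem _
  · obtain ⟨n, rfl⟩ : ∃ n : ℕ, j = (n + 1 : ℕ) := ⟨(j - 1).toNat, by omega⟩
    rw [zg_natCast] at ha
    exact Ideal.subset_span (Set.mem_iUnion_of_mem n ha)

end IntGrading

lemma irrel_homogeneousSubmodule_ne_top (σ K : Type*) [Field K] :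
    irrel (MvPolynomial.homogeneousSubmodule σ K) ≠ ⊤ := by
  refine ne_top_of_le_ne_top (RingHom.ker_ne_top (MvPolynomial.constantCoeff (R := K) (σ := σ)))
    (Ideal.span_le.2 (Set.iUnion_subset fun n a ha ↦ ?_))
  rw [SetLike.mem_coe, RingHom.mem_ker, MvPolynomial.constantCoeff_eq]
  exact MvPolynomial.IsHomogeneous.coeff_eq_zero ha (by simp)

end PfaffianPowers

namespace PfaffianPowers

section MatrixHom

open Matrix

variable {A : Type*} [CommRing A] {ι κ : Type*} [Fintype ι] [Finite κ]

/-- The homomorphism of free modules with matrix `M`, acting on finitely supported functions. -/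
noncomputable def matrixHom (M : Matrix κ ι A) : (ι →₀ A) →ₗ[A] (κ →₀ A) :=
  (Finsupp.linearEquivFunOnFinite A A κ).symm ∘ₗ M.mulVecLin ∘ₗ Finsupp.linearEquivFunOnFinite A A ι

@[simp]
lemma coe_matrixHom (M : Matrix κ ι A) (f : ι →₀ A) : ⇑(matrixHom M f) = M *ᵥ ⇑f :=
  rfl

lemma matrixHom_eq_zero_iff {M : Matrix κ ι A} {f : ι →₀ A} :
    matrixHom M f = 0 ↔ M *ᵥ ⇑f = 0 := by
  rw [← coe_matrixHom, ← Finsupp.coe_zero, DFunLike.coe_fn_eq]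

lemma mem_range_matrixHom {M : Matrix κ ι A} {g : κ →₀ A} :
    g ∈ LinearMap.range (matrixHom M) ↔ ∃ v, M *ᵥ v = ⇑g := by
  refine ⟨?_, fun ⟨v, hv⟩ ↦ ⟨Finsupp.equivFunOnFinite.symm v, DFunLike.coe_injective hv⟩⟩
  rintro ⟨f, rfl⟩
  exact ⟨f, rfl⟩

lemma isGradedHom_matrixHom {S : Type*} [SetLike S A] [AddSubgroupClass S A] {𝒜 : ℤ → S}
    [SetLike.GradedMonoid 𝒜] {δ : ι → ℤ} {ε : κ → ℤ} {M : Matrix κ ι A}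
    (hM : ∀ l k, M l k ∈ 𝒜 (δ k - ε l)) :
    IsGradedHom (freePieces 𝒜 δ) (freePieces 𝒜 ε) (matrixHom M) := by
  refine fun j f hf l ↦ sum_mem fun k _ ↦ ?_
  rw [← sub_add_sub_cancel' (δ k) (ε l) j]
  exact SetLike.mul_mem_graded (hM l k) (hf k)

end MatrixHom

section IsResolvedBy

variable {A S : Type} [CommRing A] [SetLike S A] [AddSubgroupClass S A] {𝒜 : ℤ → S} {𝔪 : Ideal A}

lemma hasFreeRes_quotientPieces {E : Ideal A} {n : ℕ} {T : ℕ → Set ℤ} (hT : T 0 = {0})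
    (hE : HasFreeRes 𝒜 𝔪 n ⊥ (fun k ↦ T (k + 1))
      (inducedPieces (freePieces 𝒜 fun _ : Unit ↦ (0 : ℤ))
        (Submodule.comap (Finsupp.lapply ()) E))) :
    HasFreeRes 𝒜 𝔪 (n + 1) ⊥ T (quotientPieces 𝒜 E) := by
  refine ⟨Unit, fun _ ↦ 0, E.mkQ ∘ₗ Finsupp.lapply (), ⟨fun j f hf ↦ ?_, ?_⟩, ?_,
    fun D hD ↦ hD.elim, ?_⟩
  · exact ⟨f (), by simpa using hf (), rfl⟩
  · rintro j _ ⟨a, ha, rfl⟩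
    exact ⟨Finsupp.single () a, single_mem_freePieces (by simpa using ha), by simp⟩
  · rw [hT, Set.range_const]
  · rwa [LinearMap.ker_comp, Submodule.ker_mkQ]

/-- The degrees `0, d, 2d, …, rd` of the generators of the Koszul complex on a sequence of `r`
elements of degree `d`. -/
def koszulDegrees (d : ℤ) (r : ℕ) : ℕ → Set ℤ :=
  fun k ↦ {x | k ≤ r ∧ x = d * k}

lemma coneDegrees_koszulDegrees (d : ℤ) (r : ℕ) :
    coneDegrees (koszulDegrees d r) (shiftDegrees d (koszulDegrees d r)) =
      koszulDegrees d (r + 1) := by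
  ext (_ | k) x
  · simp [coneDegrees, koszulDegrees]
  · simp only [coneDegrees, shiftDegrees, koszulDegrees, Set.mem_union, Set.mem_image,
      Set.mem_ofPred_eq]
    constructor
    · rintro (⟨hk, rfl⟩ | ⟨_, ⟨hk, rfl⟩, rfl⟩)
      · exact ⟨by omega, rfl⟩
      · exact ⟨by omega, by push_cast; ring⟩
    · rintro ⟨hk, rfl⟩
      exact .inr ⟨_, ⟨by omega, rfl⟩, by push_cast; ring⟩

lemma isResolvedBy_bot (d : ℤ) : IsResolvedBy 𝒜 𝔪 ⊥ (koszulDegrees d 0)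
  | 0 => trivial
  | n + 1 => by
    have hT : (fun k ↦ koszulDegrees d 0 (k + 1)) = ⊥ := by
      ext k x
      simp [koszulDegrees]
    refine hasFreeRes_quotientPieces (by ext; simp [koszulDegrees]) ?_
    have : Subsingleton (Submodule.comap (Finsupp.lapply ()) (⊥ : Ideal A)) := by
      refine Submodule.subsingleton_iff_eq_bot.2 ((Submodule.eq_bot_iff _).2 fun f hf ↦ ?_)
      ext
      exact hf
    rw [hT]
    exact hasFreeRes_of_subsingleton n ⊥

lemma IsResolvedBy.koszul_succ [GradedRing 𝒜] {E : Ideal A} {g : A} {d : ℤ} {r : ℕ}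
    (hE : IsResolvedBy 𝒜 𝔪 E (koszulDegrees d r)) (hEh : E.IsHomogeneous 𝒜) (hg : g ∈ 𝒜 d)
    (hreg : ∀ f, g * f ∈ E → f ∈ E) :
    IsResolvedBy 𝒜 𝔪 (E ⊔ Ideal.span {g}) (koszulDegrees d (r + 1)) := by
  have hcomap : Submodule.comap (LinearMap.mulLeft A g) E = E :=
    le_antisymm hreg fun f hf ↦ E.mul_mem_left g hf
  rw [← coneDegrees_koszulDegrees]
  exact hE.sup_span_singleton hg hEh hcomap hE

/-- The degrees of the generators in the resolution of the ideal of submaximal Pfaffians of an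
alternating matrix with entries of degree `a` and submaximal Pfaffians of degree `b`. -/
def pfaffianDegrees (a b : ℤ) : ℕ → Set ℤ
  | 0 => {0}
  | 1 => {b}
  | 2 => {b + a}
  | 3 => {2 * b + a}
  | _ + 4 => ∅

end IsResolvedBy

namespace IsPfaffianExact

open Matrix

variable {A : Type} [CommRing A] {ι : Type} [LinearOrder ι] [Fintype ι] {z : Matrix ι ι A}
  (hz : IsPfaffianExact z)
include hz

lemma range_matrixHom_replicateCol :
    LinearMap.range (matrixHom (replicateCol Unit (pfCofactor z))) =
      LinearMap.ker (matrixHom z) := by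
  ext u
  rw [mem_range_matrixHom, LinearMap.mem_ker, matrixHom_eq_zero_iff]
  constructor
  · rintro ⟨c, hc⟩
    have hu : ⇑u = c () • pfCofactor z := by
      rw [← hc]
      ext i
      simp [mulVec, dotProduct, mul_comm]
    rw [hu, mulVec_smul, mulVec_pfCofactor hz.isAlternating, smul_zero]
  · intro hu
    obtain ⟨c, hc⟩ := hz.exists_eq_smul u hu
    refine ⟨fun _ ↦ c, ?_⟩
    rw [hc]
    ext i
    simp [mulVec, dotProduct, mul_comm]

lemma range_matrixHom :
    LinearMap.range (matrixHom z) =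
      LinearMap.ker (matrixHom (replicateRow Unit (pfCofactor z))) := by
  ext v
  rw [mem_range_matrixHom, LinearMap.mem_ker, matrixHom_eq_zero_iff]
  constructor
  · rintro ⟨u, hu⟩
    ext
    rw [← hu]
    exact pfCofactor_dotProduct_mulVec hz.isAlternating u
  · exact fun hv ↦ hz.exists_mulVec_eq v (congrFun hv ())

end IsPfaffianExact

lemma range_matrixHom_replicateRow {A ι : Type*} [CommRing A] [Fintype ι] (p : ι → A) :
    LinearMap.range (matrixHom (Matrix.replicateRow Unit p)) =
      Submodule.comap (Finsupp.lapply ()) (Ideal.span (Set.range p)) := by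
  ext f
  rw [mem_range_matrixHom, Submodule.mem_comap, mem_span_range_iff_dotProduct]
  exact exists_congr fun v ↦ ⟨fun h ↦ congrFun h (), fun h ↦ funext fun _ ↦ h⟩

lemma ker_matrixHom_replicateCol {A ι : Type*} [CommRing A] [Finite ι] {p : ι → A} {i : ι}
    (hi : p i ∈ nonZeroDivisors A) :
    LinearMap.ker (matrixHom (Matrix.replicateCol Unit p)) = ⊥ := by
  refine (Submodule.eq_bot_iff _).2 fun f hf ↦ ?_
  have h := congrFun (matrixHom_eq_zero_iff.1 hf) i
  ext
  refine (mul_left_mem_nonZeroDivisors_eq_zero_iff hi).1 ?_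
  simpa [Matrix.mulVec, dotProduct] using h

theorem IsPfaffianExact.isResolvedBy {A S ι : Type} [CommRing A] [SetLike S A]
    [AddSubgroupClass S A] {𝒜 : ℤ → S} [GradedRing 𝒜] [LinearOrder ι] [Fintype ι]
    {z : Matrix ι ι A} (hz : IsPfaffianExact z) (𝔪 : Ideal A) {a b : ℤ} (ha : ∀ i j, z i j ∈ 𝒜 a)
    (hb : ∀ i, pfCofactor z i ∈ 𝒜 b) {i : ι} (hi : pfCofactor z i ∈ nonZeroDivisors A) :
    IsResolvedBy 𝒜 𝔪 (Ideal.span (Set.range (pfCofactor z))) (pfaffianDegrees a b) := by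
  have : Nonempty ι := ⟨i⟩
  have hrow : IsGradedHom (freePieces 𝒜 fun _ : ι ↦ b) (freePieces 𝒜 fun _ : Unit ↦ (0 : ℤ))
      (matrixHom (Matrix.replicateRow Unit (pfCofactor z))) :=
    isGradedHom_matrixHom fun _ k ↦ by simpa using hb k
  have hmid : IsGradedHom (freePieces 𝒜 fun _ : ι ↦ b + a) (freePieces 𝒜 fun _ : ι ↦ b)
      (matrixHom z) :=
    isGradedHom_matrixHom fun l k ↦ by simpa using ha l k
  have hcol : IsGradedHom (freePieces 𝒜 fun _ : Unit ↦ 2 * b + a)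
      (freePieces 𝒜 fun _ : ι ↦ b + a) (matrixHom (Matrix.replicateCol Unit (pfCofactor z))) :=
    isGradedHom_matrixHom fun l _ ↦ by simpa [two_mul, add_assoc] using hb l
  have hlast (n : ℕ) : HasFreeRes 𝒜 𝔪 n ⊥ ⊥ (inducedPieces (freePieces 𝒜 fun _ ↦ 2 * b + a)
      (LinearMap.ker (matrixHom (Matrix.replicateCol Unit (pfCofactor z))))) := by
    rw [ker_matrixHom_replicateCol hi]
    exact hasFreeRes_of_subsingleton n ⊥
  suffices h : ∀ n, HasFreeRes 𝒜 𝔪 (n + 4) ⊥ (pfaffianDegrees a b)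
      (quotientPieces 𝒜 (Ideal.span (Set.range (pfCofactor z)))) from
    fun n ↦ (h n).of_succ.of_succ.of_succ.of_succ
  exact fun n ↦ hasFreeRes_quotientPieces rfl <|
    .of_range_eq hrow (range_matrixHom_replicateRow _) Set.range_const (fun D hD ↦ hD.elim) <|
    .of_range_eq hmid hz.range_matrixHom Set.range_const (fun D hD ↦ hD.elim) <|
    .of_range_eq hcol hz.range_matrixHom_replicateCol Set.range_const (fun D hD ↦ hD.elim) <|
    hlast n

end PfaffianPowers

namespace PfaffianPowers

section Degrees

/-- The degrees in `⋃ l < k, T + l * d`. -/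
def repeatedDegrees (d : ℤ) (T : ℕ → Set ℤ) (k : ℕ) : ℕ → Set ℤ :=
  fun i ↦ {x | ∃ l < k, x - l * d ∈ T i}

lemma repeatedDegrees_zero (d : ℤ) (T : ℕ → Set ℤ) : repeatedDegrees d T 0 = ⊥ := by
  ext
  simp [repeatedDegrees]

lemma repeatedDegrees_succ (d : ℤ) (T : ℕ → Set ℤ) (k : ℕ) :
    repeatedDegrees d T (k + 1) = shiftDegrees (k * d) T ⊔ repeatedDegrees d T k := by
  ext i x
  simp only [repeatedDegrees, Nat.exists_lt_succ_right]
  simp [shiftDegrees, or_comm, sub_eq_add_neg, repeatedDegrees]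

lemma coneDegrees_bot (T : ℕ → Set ℤ) : coneDegrees T ⊥ = T := by
  ext (_ | k) x <;> simp [coneDegrees]

lemma shiftDegrees_bot (e : ℤ) : shiftDegrees e ⊥ = ⊥ :=
  funext fun _ ↦ Set.image_empty _

lemma shiftDegrees_sup (e : ℤ) (T T' : ℕ → Set ℤ) :
    shiftDegrees e (T ⊔ T') = shiftDegrees e T ⊔ shiftDegrees e T' :=
  funext fun _ ↦ Set.image_union ..

lemma shiftDegrees_shiftDegrees (e e' : ℤ) (T : ℕ → Set ℤ) :
    shiftDegrees e (shiftDegrees e' T) = shiftDegrees (e' + e) T := by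
  ext i x
  simp [shiftDegrees, add_assoc]

end Degrees

section MixedPowers

lemma nonempty_of_span_range_ne_bot {R ι : Type*} [Semiring R] {M : ι → R}
    (h : Ideal.span (Set.range M) ≠ ⊥) : Nonempty ι := by
  by_contra! hι
  exact h (by rw [Set.range_eq_empty, Ideal.span_empty])

lemma pow_mul_sup_pow_succ {R : Type*} [CommRing R] (J L : Ideal R) (n k : ℕ) :
    J ^ n * (J ⊔ L) ^ (k + 1) = J ^ (n + 1) * (J ⊔ L) ^ k ⊔ L ^ (k + 1) * J ^ n := by
  rw [sup_comm J L, sup_pow_succ, Ideal.mul_sup, ← mul_assoc, ← pow_succ, sup_comm,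
    mul_comm (L ^ _)]

lemma IsFreeModulo.pow_succ_smul {R ι : Type*} [CommRing R] [Fintype ι] {J P : Ideal R} {w : R}
    {n : ℕ} {M : ι → R} (hM : IsFreeModulo (J ^ (n + 1)) J M) (hMJ : ∀ x, M x ∈ J ^ n)
    (hJP : J ≤ P) (hP : ∀ f ∈ P, w * f ∈ J) (hreg : ∀ f, w * f ∈ P → f ∈ P) (k : ℕ) :
    IsFreeModulo (J ^ (n + 1) * (J ⊔ Ideal.span {w}) ^ k) P (w ^ (k + 1) • M) := by
  have hw : w ^ k ∈ (J ⊔ Ideal.span {w}) ^ k :=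
    Ideal.pow_mem_pow (Ideal.mem_sup_right (Ideal.mem_span_singleton_self w)) k
  have hpow (l : ℕ) (f : R) (hf : w ^ l * f ∈ P) : f ∈ P := by
    induction l with
    | zero => simpa using hf
    | succ l ih => exact ih (hreg _ (by rwa [← mul_assoc, ← pow_succ']))
  refine ⟨fun x f hf ↦ ?_, fun c hc x ↦ ?_⟩
  · have hsplit : (w ^ (k + 1) • M) x * f = M x * (w * f) * w ^ k := by
      rw [Pi.smul_apply, smul_eq_mul]
      ring
    rw [hsplit, pow_succ]
    exact Ideal.mul_mem_mul (Ideal.mul_mem_mul (hMJ x) (hP f hf)) hw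
  · refine hpow (k + 1) _ (hJP (hM.mem_of_dotProduct_mem (w ^ (k + 1) • c) ?_ x))
    rw [dotProduct_smul, ← smul_dotProduct]
    exact Ideal.mul_le_left hc

variable {A S : Type} [CommRing A] [SetLike S A] [AddSubgroupClass S A] {𝒜 : ℤ → S}
  [GradedRing 𝒜] {𝔪 J P : Ideal A} {w : A} {d e : ℤ} {T TP : ℕ → Set ℤ}

lemma isHomogeneous_span_singleton {a : A} (ha : a ∈ 𝒜 e) : (Ideal.span {a}).IsHomogeneous 𝒜 :=
  Ideal.homogeneous_span 𝒜 _ fun _ hx ↦ ⟨e, Set.mem_singleton_iff.1 hx ▸ ha⟩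

lemma isHomogeneous_pow (hJ : J.IsHomogeneous 𝒜) : ∀ n : ℕ, (J ^ n).IsHomogeneous 𝒜
  | 0 => by simpa using Ideal.IsHomogeneous.top 𝒜
  | n + 1 => by
    rw [pow_succ]
    exact (isHomogeneous_pow hJ n).mul hJ

lemma IsQuasiRegular.isHomogeneous (hJ : IsQuasiRegular (fun j ↦ (𝒜 (j * d) : Set A)) J) :
    J.IsHomogeneous 𝒜 := by
  obtain ⟨ι, _, M, hMd, hMspan, -⟩ := hJ 1
  rw [← pow_one J, ← hMspan]
  exact Ideal.homogeneous_span 𝒜 _ (by rintro _ ⟨x, rfl⟩; exact ⟨_, hMd x⟩)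

variable (hJ : IsQuasiRegular (fun j ↦ (𝒜 (j * d) : Set A)) J) (hJ0 : ∀ j, J ^ j ≠ ⊥)
  (hT : IsResolvedBy 𝒜 𝔪 J T)
include hJ hJ0 hT

theorem IsResolvedBy.pow : ∀ m, IsResolvedBy 𝒜 𝔪 (J ^ m) (repeatedDegrees d T m)
  | 0 => by
    rw [repeatedDegrees_zero, pow_zero, Ideal.one_eq_top]
    exact isResolvedBy_top 𝒜 𝔪
  | m + 1 => by
    obtain ⟨ι, _, M, hMd, hMspan, hM⟩ := hJ m
    have := nonempty_of_span_range_ne_bot (hMspan ▸ hJ0 m)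
    rw [repeatedDegrees_succ]
    refine .of_sup_span_image hM (isHomogeneous_pow hJ.isHomogeneous _) hMd hT
      Finset.univ_nonempty ?_
    rw [Finset.coe_univ, Set.image_univ, hMspan, sup_eq_right.2 (Ideal.pow_le_pow_right m.le_succ)]
    exact IsResolvedBy.pow m

variable (hw : w ∈ 𝒜 e) (hJP : J ≤ P) (hP : ∀ f ∈ P, w * f ∈ J)
  (hreg : ∀ f, w * f ∈ P → f ∈ P) (hTP : IsResolvedBy 𝒜 𝔪 P TP)
include hw hJP hP hreg hTP

theorem IsResolvedBy.pow_mul_sup_span_singleton_pow (n k : ℕ) :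
    IsResolvedBy 𝒜 𝔪 (J ^ n * (J ⊔ Ideal.span {w}) ^ k) (coneDegrees (repeatedDegrees d T (n + k))
      (shiftDegrees ((n + k - 1) * d + e) (repeatedDegrees (e - d) TP k))) := by
  induction k generalizing n with
  | zero =>
    rw [repeatedDegrees_zero, shiftDegrees_bot, coneDegrees_bot, pow_zero, mul_one]
    exact .pow hJ hJ0 hT n
  | succ k ih =>
    obtain ⟨ι, _, M, hMd, hMspan, hM⟩ := hJ n
    have := nonempty_of_span_range_ne_bot (hMspan ▸ hJ0 n)
    have hMJ (x : ι) : M x ∈ J ^ n := hMspan ▸ Ideal.subset_span ⟨x, rfl⟩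
    have hdeg (x : ι) : (w ^ (k + 1) • M) x ∈ 𝒜 ((k + 1) • e + n * d) := by
      rw [Pi.smul_apply, smul_eq_mul]
      exact SetLike.mul_mem_graded (SetLike.pow_mem_graded _ hw) (hMd x)
    have hspan : Ideal.span ((w ^ (k + 1) • M) '' (Finset.univ : Finset ι)) =
        Ideal.span {w} ^ (k + 1) * J ^ n := by
      rw [Finset.coe_univ, Set.image_univ, ← hMspan, Ideal.span_singleton_pow, Ideal.span_mul_span',
        Set.singleton_mul, ← Set.range_comp]
      rfl
    have hhom : (J ^ (n + 1) * (J ⊔ Ideal.span {w}) ^ k).IsHomogeneous 𝒜 :=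
      (isHomogeneous_pow hJ.isHomogeneous _).mul (isHomogeneous_pow
        (hJ.isHomogeneous.sup (isHomogeneous_span_singleton hw)) k)
    have h := IsResolvedBy.sup_span_image (hM.pow_succ_smul hMJ hJP hP hreg k) hhom hdeg hTP
      Finset.univ_nonempty (ih (n + 1))
    rw [hspan, ← pow_mul_sup_pow_succ, coneDegrees_coneDegrees] at h
    convert h using 2
    · rw [add_right_comm, add_assoc]
    · rw [repeatedDegrees_succ, shiftDegrees_sup, shiftDegrees_shiftDegrees]
      congr 2 <;> push_cast <;> ring

end MixedPowers

end PfaffianPowers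

namespace PfaffianPowers

section Regularity

/-! ### Regularity -/

variable {K A : Type} [Field K] [CommRing A] [Algebra K A] {𝔪 : Ideal A}

/-- The degrees of the generators of the free modules in a minimal graded free resolution. -/
def generatorDegrees {𝒜 : ℤ → Submodule K A} {M : Type} [AddCommGroup M] [Module A M] [Module K M]
    {ℳ : ℤ → Submodule K M} (R : MinGradedFreeRes K A 𝒜 𝔪 M ℳ) (k : ℕ) : Set ℤ :=
  Set.range (R.σ k)

lemma hasFreeRes_range_d {𝒜 : ℤ → Submodule K A} [GradedRing 𝒜] {M : Type} [AddCommGroup M]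
    [Module A M] [Module K M] {ℳ : ℤ → Submodule K M} (R : MinGradedFreeRes K A 𝒜 𝔪 M ℳ)
    (n i : ℕ) : HasFreeRes 𝒜 𝔪 n ⊤ (fun k ↦ generatorDegrees R (k + (i + 1)))
      (inducedPieces (freePieces 𝒜 (R.σ i)) (LinearMap.range (R.d i))) := by
  induction n generalizing i with
  | zero => trivial
  | succ n ih =>
    refine .of_range_eq (R.graded_d i) rfl (congrArg (generatorDegrees R) (zero_add _).symm)
      (fun _ _ x _ hx ↦ ?_) ?_
    · obtain ⟨y, rfl⟩ := (R.exact_d i x).1 hx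
      exact R.minimal _ y
    · rw [(R.exact_d i).linearMap_ker_eq]
      simp_rw [add_assoc, add_comm 1 (i + 1)]
      exact ih (i + 1)

variable {𝒜 : ℕ → Submodule K A} [GradedRing 𝒜] {E : Ideal A}

lemma hasFreeRes_of_minGradedFreeRes (hE : E.IsHomogeneous (zg 𝒜))
    (R : MinGradedFreeRes K A (zg 𝒜) 𝔪 (A ⧸ E) (quotPieces 𝒜 E)) :
    ∀ n, HasFreeRes (zg 𝒜) 𝔪 n ⊤ (generatorDegrees R) (quotientPieces (zg 𝒜) E)
  | 0 => trivial
  | n + 1 => by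
    have hε : IsGradedHom (freePieces (zg 𝒜) (R.σ 0)) (quotientPieces (zg 𝒜) E) R.ε := R.graded_ε
    refine ⟨R.ι 0, R.σ 0, R.ε, hε.isGradedSurjection (hasProjections_quotientPieces hE) R.surj,
      rfl, fun _ _ x _ hx ↦ ?_, ?_⟩
    · obtain ⟨y, rfl⟩ := (R.exact_ε x).1 hx
      exact R.minimal _ y
    · rw [R.exact_ε.linearMap_ker_eq]
      exact hasFreeRes_range_d R n 0

theorem reg_eq_of_isResolvedBy (hirrel : irrel 𝒜 ≠ ⊤) (hE : E.IsHomogeneous (zg 𝒜))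
    (R : MinGradedFreeRes K A (zg 𝒜) (irrel 𝒜) (A ⧸ E) (quotPieces 𝒜 E)) {T : ℕ → Set ℤ}
    (hT : IsResolvedBy (zg 𝒜) (irrel 𝒜) E T) {i : ℕ} {r : ℤ} (hi : r + i ∈ T i)
    (hi' : r + i ∉ T (i + 1)) (hle : ∀ k, ∀ x ∈ T k, x - k ≤ r) : R.reg = r := by
  have hdeg (j : ℤ) (hj : j ≠ 0) (a : A) (ha : a ∈ zg 𝒜 j) : a ∈ irrel 𝒜 :=
    mem_irrel_of_mem_zg hj ha
  have hR := hasFreeRes_of_minGradedFreeRes hE R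
  refine IsGreatest.csSup_eq ⟨?_, ?_⟩
  · have hstrand : ∀ k ≤ i, i ≤ k + 1 → r + i ∉ T k ∨ r + i ∉ T (k + 1) := by
      intro k hki hik
      obtain rfl | rfl : k = i ∨ i = k + 1 := by omega
      · exact .inr hi'
      · refine .inl fun hk ↦ ?_
        have := hle k _ hk
        push_cast at this
        omega
    obtain ⟨k, hk⟩ := HasFreeRes.mem_degrees hdeg hirrel
      ((hT (i + 2)).minimal_of_notMem hdeg) (hR (i + 1)) hstrand hi
    exact ⟨i, k, by rw [hk, add_sub_cancel_right]⟩
  · rintro _ ⟨k, x, rfl⟩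
    exact hle k _ (HasFreeRes.mem_degrees hdeg hirrel (hR (k + 1)) (hT (k + 1))
      (fun _ _ _ ↦ trivial) ⟨x, rfl⟩)

end Regularity

end PfaffianPowers

namespace PfaffianPowers

open MvPolynomial

section PfaffianIdeals

attribute [local instance] MvPolynomial.gradedAlgebra

variable (K : Type) [Field K] (q : ℕ)

/-- The standard grading of `CoordRing K q`, extended by zero to negative degrees. -/
noncomputable abbrev coordPieces : ℤ → Submodule K (CoordRing K q) :=
  zg (homogeneousSubmodule (PairVar (2 * q + 6)) K)

variable {K q}

theorem isQuasiRegular_rowIdeal :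
    IsQuasiRegular (fun j ↦ (coordPieces K q (j * (q + 2)) : Set (CoordRing K q)))
      (rowIdeal K q) := by
  have h1 : (1 : CoordRing K q) ∈ coordPieces K q ((0 : ℕ) * (q + 2)) :=
    mem_zg_of_eq (isHomogeneous_one _ _) (by simp)
  refine rowIdeal_induction (C := fun _ ↦ IsQuasiRegular _) (isQuasiRegular_bot h1)
    fun _ J a ha hreg hJ ↦ hJ.sup_span_singleton h1 (fun j x hx ↦ ?_) hreg
  have ha' : a ∈ coordPieces K q (q + 2) := mem_zg_of_eq ha (by push_cast; rfl)
  have hj : ((j + 1 : ℕ) : ℤ) * (q + 2) = (q + 2) + j * (q + 2) := by push_cast; ring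
  exact hj ▸ SetLike.mul_mem_graded ha' hx

variable (K q) in
theorem isResolvedBy_rowIdeal (𝔪 : Ideal (CoordRing K q)) :
    IsResolvedBy (coordPieces K q) 𝔪 (rowIdeal K q) (koszulDegrees (q + 2) 3) := by
  refine (rowIdeal_induction (C := fun r J ↦ J.IsHomogeneous (coordPieces K q) ∧
      IsResolvedBy (coordPieces K q) 𝔪 J (koszulDegrees (q + 2) r))
    ⟨Ideal.IsHomogeneous.bot _, isResolvedBy_bot _⟩ fun r J a ha hreg ⟨hJ, hres⟩ ↦ ?_).2
  have ha' : a ∈ coordPieces K q (q + 2) := mem_zg_of_eq ha (by push_cast; rfl)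
  exact ⟨hJ.sup (isHomogeneous_span_singleton ha'), hres.koszul_succ hJ ha' hreg⟩

theorem isResolvedBy_blockIdeal (𝔪 : Ideal (CoordRing K q)) :
    IsResolvedBy (coordPieces K q) 𝔪 (blockIdeal K q) (pfaffianDegrees 1 (q + 1)) :=
  (isPfaffianExact_genericBlock K q).isResolvedBy 𝔪
    (fun i j ↦ mem_zg_of_eq (isHomogeneous_Xmat K _ _ _) (by simp))
    (fun i ↦ mem_zg_of_eq (isHomogeneous_pfCofactor_genericBlock K q i) (by simp))
    (mem_nonZeroDivisors_of_ne_zero (pfCofactor_genericBlock_ne_zero K q 0))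

variable (K q) in
lemma maxPfaffian_mem_coordPieces : maxPfaffian K q ∈ coordPieces K q (q + 3) :=
  mem_zg_of_eq (isHomogeneous_maxPfaffian K q) (by push_cast; rfl)

lemma rowIdeal_pow_ne_bot (j : ℕ) : rowIdeal K q ^ j ≠ ⊥ := by
  rw [← Ideal.zero_eq_bot]
  refine pow_ne_zero j fun h ↦ rowPfaffian_ne_zero K q 0 ?_
  rw [← Ideal.mem_bot, ← Ideal.zero_eq_bot, ← h]
  exact Ideal.subset_span ⟨0, rfl⟩

/-- The degrees of the generators in the iterated mapping cone resolving the `m`-th power of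
`rowIdeal K q ⊔ Ideal.span {maxPfaffian K q}`. -/
def powerDegrees (q m : ℕ) : ℕ → Set ℤ :=
  coneDegrees (repeatedDegrees (q + 2) (koszulDegrees (q + 2) 3) m)
    (shiftDegrees ((m - 1) * (q + 2) + (q + 3)) (repeatedDegrees 1 (pfaffianDegrees 1 (q + 1)) m))

theorem isResolvedBy_sup_span_maxPfaffian_pow (𝔪 : Ideal (CoordRing K q)) (m : ℕ) :
    IsResolvedBy (coordPieces K q) 𝔪 ((rowIdeal K q ⊔ Ideal.span {maxPfaffian K q}) ^ m)
      (powerDegrees q m) := by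
  have h := (isResolvedBy_rowIdeal K q 𝔪).pow_mul_sup_span_singleton_pow isQuasiRegular_rowIdeal
    rowIdeal_pow_ne_bot (maxPfaffian_mem_coordPieces K q) (rowIdeal_le_blockIdeal K q)
    (fun _ ↦ maxPfaffian_mul_mem_rowIdeal K q)
    (fun _ ↦ mem_blockIdeal_of_maxPfaffian_mul_mem K q) (isResolvedBy_blockIdeal 𝔪) 0 m
  rw [pow_zero, one_mul, Nat.cast_zero, zero_add, zero_add, add_sub_add_left_eq_sub] at h
  norm_num at h
  exact h

end PfaffianIdeals

section PowerDegrees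

variable {q m i : ℕ} {x : ℤ}

lemma le_of_mem_pfaffianDegrees (hx : x ∈ pfaffianDegrees 1 (q + 1) i) : i ≤ 3 ∧ x ≤ 2 * q + i := by
  rcases i with _ | _ | _ | _ | i
  all_goals
    simp only [pfaffianDegrees, Set.mem_singleton_iff, Set.mem_empty_iff_false] at hx
  all_goals exact ⟨by omega, by push_cast; omega⟩

lemma le_of_mem_powerDegrees (hm : 2 ≤ m) (hx : x ∈ powerDegrees q m i) :
    i ≤ 4 ∧ x - i ≤ (q + 3) * (m + 2) - 7 := by
  have koszul (h : x ∈ repeatedDegrees (q + 2) (koszulDegrees (q + 2) 3) m i) :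
      i ≤ 4 ∧ x - i ≤ (q + 3) * (m + 2) - 7 := by
    obtain ⟨l, hl, hi, hxl⟩ := h
    refine ⟨by omega, ?_⟩
    calc
      x - i = (q + 2) * l + (q + 1) * i := by linear_combination hxl
      _ ≤ (q + 3) * (m + 2) - 7 := by nlinarith
  rcases i with _ | i
  · exact koszul hx
  · rcases hx with hx | ⟨y, ⟨l, hl, hy⟩, rfl⟩
    · exact koszul hx
    · obtain ⟨hi, hyi⟩ := le_of_mem_pfaffianDegrees hy
      refine ⟨by omega, ?_⟩
      push_cast
      nlinarith

lemma mem_powerDegrees_four (hm : m ≠ 0) :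
    ((q : ℤ) + 3) * (m + 2) - 7 + (4 : ℕ) ∈ powerDegrees q m 4 := by
  obtain ⟨l, rfl⟩ := Nat.exists_eq_succ_of_ne_zero hm
  refine .inr ⟨2 * (q + 1) + 1 + l * 1, ⟨l, l.lt_succ_self, ?_⟩, ?_⟩
  · rw [add_sub_cancel_right]
    rfl
  · push_cast
    ring

end PowerDegrees

attribute [local instance] MvPolynomial.gradedAlgebra in
theorem reg_sup_span_maxPfaffian_pow {K : Type} [Field K] {q m : ℕ} (hm : 2 ≤ m)
    (R : MinGradedFreeRes K (CoordRing K q) (coordPieces K q)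
      (irrel (homogeneousSubmodule (PairVar (2 * q + 6)) K))
      (CoordRing K q ⧸ (rowIdeal K q ⊔ Ideal.span {maxPfaffian K q}) ^ m)
      (quotPieces (homogeneousSubmodule (PairVar (2 * q + 6)) K)
        ((rowIdeal K q ⊔ Ideal.span {maxPfaffian K q}) ^ m))) :
    R.reg = (q + 3) * (m + 2) - 7 := by
  have hrow : (rowIdeal K q).IsHomogeneous (coordPieces K q) :=
    isQuasiRegular_rowIdeal.isHomogeneous
  have hhom := hrow.sup (isHomogeneous_span_singleton (maxPfaffian_mem_coordPieces K q))
  exact reg_eq_of_isResolvedBy (irrel_homogeneousSubmodule_ne_top _ K) (isHomogeneous_pow hhom m) R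
    (isResolvedBy_sup_span_maxPfaffian_pow _ m) (mem_powerDegrees_four (by omega))
    (fun h ↦ absurd (le_of_mem_powerDegrees hm h).1 (by norm_num))
    fun _ _ hx ↦ (le_of_mem_powerDegrees hm hx).2

end PfaffianPowers

/-- For even `t = 2q + 6 ≥ 6` (so `r = t/2 = q + 3`), let `I` be the grade-3 almost
complete intersection Pfaffian ideal `⟨Pf, Pf_{12̄}, Pf_{13̄}, Pf_{23̄}⟩` in `B = K[X]`.
Then for every `m ≥ 2`, `reg (B/I^m) = r (m + 2) - 7`. -/
theorem reg_powers_pfaffian_even (K : Type) [Field K] (q : ℕ)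
    (I : Ideal (MvPolynomial (PairVar (2 * q + 6)) K))
    (hI : I = Ideal.span
      { pfaffian (2 * q + 6) (Xmat K (2 * q + 6)),
        pfaffian (2 * q + 4) ((Xmat K (2 * q + 6)).submatrix (emb2 0 1) (emb2 0 1)),
        pfaffian (2 * q + 4) ((Xmat K (2 * q + 6)).submatrix (emb2 0 2) (emb2 0 2)),
        pfaffian (2 * q + 4) ((Xmat K (2 * q + 6)).submatrix (emb2 1 2) (emb2 1 2)) }) :
    ∀ m : ℕ, 2 ≤ m →
    ∀ R : MinGradedFreeRes K (MvPolynomial (PairVar (2 * q + 6)) K)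
        (zg (MvPolynomial.homogeneousSubmodule (PairVar (2 * q + 6)) K))
        (irrel (MvPolynomial.homogeneousSubmodule (PairVar (2 * q + 6)) K))
        (MvPolynomial (PairVar (2 * q + 6)) K ⧸ (I ^ m))
        (quotPieces (MvPolynomial.homogeneousSubmodule (PairVar (2 * q + 6)) K) (I ^ m)),
      R.reg = ((q : ℤ) + 3) * ((m : ℤ) + 2) - 7 := by
  intro m hm R
  obtain rfl := hI.trans (PfaffianPowers.span_pfaffians_eq K q)
  exact PfaffianPowers.reg_sup_span_maxPfaffian_pow hm R
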